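/- arXiv:1604.08277 — 3 statements merged into one kernel-verified Lean document; each statement's English description precedes it below -/
import Mathlib

section
/- Let p be an odd prime and W a finite p-free Coxeter group. Then the mod p cohomology H^k(A_W, F_p) of the alternating subgroup A_W vanishes for 0 < k < p - 2. -/
set_option linter.unusedSectionVars false
set_option linter.unusedSimpArgs false

/-- The sign homomorphism of a Coxeter system, sending every simple reflection to `-1`. -/
noncomputable def CoxeterSystem.signHom {B W : Type*} [Group W] {M : CoxeterMatrix B}
    (cs : CoxeterSystem M W) : W →* ℤˣ :=
  cs.lift ⟨fun _ => -1, fun i i' => by simp⟩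

/-- A Coxeter matrix is `p`-free if every entry `m(s,t)` is prime to `p`.  (In Mathlib's
convention the entry `0` stands for `∞`, which counts as prime to every prime.) -/
def CoxeterMatrix.IsPFree {B : Type*} (M : CoxeterMatrix B) (p : ℕ) : Prop :=
  ∀ i i' : B, p ∣ M i i' → M i i' = 0

namespace CoxGeom
open Module

variable {B : Type} [Fintype B] [DecidableEq B]

/-- Cartan-type entry. -/
noncomputable def a (M : CoxeterMatrix B) (i j : B) : ℝ := -2 * Real.cos (Real.pi / M i j)

noncomputable def fn (M : CoxeterMatrix B) (i : B) : Dual ℝ (B → ℝ) :=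
  ∑ j, a M i j • LinearMap.proj j

noncomputable def e (i : B) : B → ℝ := Pi.single i 1

lemma fn_e (M : CoxeterMatrix B) (i j : B) : fn M i (e j) = a M i j := by
  simp [fn, e, Pi.single_apply]

lemma a_self (M : CoxeterMatrix B) (i : B) : a M i i = 2 := by
  simp [a, M.diagonal]

lemma a_symm (M : CoxeterMatrix B) (i j : B) : a M i j = a M j i := by
  simp [a, M.symmetric i j]

lemma fn_self (M : CoxeterMatrix B) (i : B) : fn M i (e i) = 2 := by rw [fn_e, a_self]

noncomputable def sg (M : CoxeterMatrix B) (i : B) : (B → ℝ) ≃ₗ[ℝ] (B → ℝ) :=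
  Module.reflection (fn_self M i)

lemma sg_apply (M : CoxeterMatrix B) (i : B) (v : B → ℝ) : sg M i v = v - fn M i v • e i :=
  Module.reflection_apply _ _

lemma sg_e (M : CoxeterMatrix B) (i j : B) : sg M i (e j) = e j - a M i j • e i := by
  rw [sg_apply, fn_e]

open Polynomial.Chebyshev in
lemma sg_rel (M : CoxeterMatrix B) (i j : B) : (sg M i * sg M j) ^ M i j = 1 := by
  ext1 z
  by_cases hij : i = j
  · subst hij
    rw [M.diagonal, pow_one]
    exact Module.involutive_reflection (fn_self M i) z
  by_cases h0 : M i j = 0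
  · simp [h0]
  have h1 := M.off_diagonal i j hij
  have h2 : 2 ≤ M i j := by
    change M i j ≠ 1 at h1
    omega
  unfold sg
  rw [Module.reflection_mul_reflection_pow_apply (fn_self M i) (fn_self M j) (M i j) z
    (2 * Real.cos (2 * Real.pi / M i j)) (by
      rw [fn_e, fn_e, a_symm M j i, a, show 2 * Real.pi / (M i j : ℝ) = 2 * (Real.pi / M i j) by ring,
        Real.cos_two_mul]; ring)]
  rcases h2.eq_or_lt with h2 | h2
  · have : a M i j = 0 := by simp [a, ← h2]
    simp only [fn_e, a_symm M j i, this, ← h2]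
    norm_num
    abel
  have hm : (3:ℝ) ≤ M i j := by exact_mod_cast h2
  have hpi := Real.pi_pos
  have hsin : 0 < Real.sin (2 * Real.pi / M i j) := by
    apply Real.sin_pos_of_pos_of_lt_pi
    · positivity
    · rw [div_lt_iff₀ (by positivity)]; nlinarith
  have key : ∀ n : ℤ, (S ℝ n).eval (2 * Real.cos (2 * Real.pi / M i j)) =
      Real.sin ((n+1) * (2 * Real.pi / M i j)) / Real.sin (2 * Real.pi / M i j) := by
    intro n
    rw [eq_div_iff hsin.ne', S_two_mul_real_cos]
  rcases Nat.even_or_odd' (M i j) with ⟨q, hq | hq⟩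
  · have e1 : (((M i j : ℕ) : ℤ) - 2) / 2 = q - 1 := by omega
    have e2 : (((M i j : ℕ) : ℤ) - 1) / 2 = q - 1 := by omega
    have : (S ℝ ((q:ℤ) - 1)).eval (2 * Real.cos (2 * Real.pi / M i j)) = 0 := by
      rw [key]
      have : (((q : ℤ) - 1 : ℤ) + 1 : ℝ) * (2 * Real.pi / M i j) = Real.pi := by
        have : (M i j : ℝ) = 2 * q := by exact_mod_cast hq
        rw [this]; push_cast
        have : (q:ℝ) ≠ 0 := by rintro h; rw [h] at this; linarith
        field_simp; ring
      rw [this]; simp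
    rw [e1, e2, this]; simp
  · have e1 : (((M i j : ℕ) : ℤ) - 2) / 2 = q - 1 := by omega
    have e2 : (((M i j : ℕ) : ℤ) - 1) / 2 = q := by omega
    have e3 : (((M i j : ℕ) : ℤ) - 3) / 2 = q - 1 := by omega
    have e4 : (((M i j : ℕ) : ℤ)) / 2 = q := by omega
    have : (S ℝ (q:ℤ)).eval (2 * Real.cos (2 * Real.pi / M i j)) +
       (S ℝ ((q:ℤ)-1)).eval (2 * Real.cos (2 * Real.pi / M i j)) = 0 := by
      rw [key, key, ← add_div, div_eq_zero_iff]
      left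
      have h : (((q : ℤ) - 1 : ℤ) + 1 : ℝ) * (2 * Real.pi / M i j) =
         2 * Real.pi - (((q : ℤ)) + 1 : ℝ) * (2 * Real.pi / M i j)  := by
        have : (M i j : ℝ) = 2 * q + 1 := by exact_mod_cast hq
        rw [this]; push_cast
        field_simp; ring
      rw [h, Real.sin_two_pi_sub]; ring
    rw [e1, e2, e3, e4, this]; simp

variable {W : Type} [Group W] {M : CoxeterMatrix B} (cs : CoxeterSystem M W)

noncomputable def rho : W →* ((B → ℝ) ≃ₗ[ℝ] (B → ℝ)) := cs.lift ⟨sg M, sg_rel M⟩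

lemma rho_simple (i : B) : rho cs (cs.simple i) = sg M i := cs.lift_apply_simple _ i

/-- `c_k = sin(kθ)/sin θ` -/
noncomputable def c (x : ℝ) : ℕ → ℝ
  | 0 => 0
  | 1 => 1
  | (k+2) => 2 * x * c x (k+1) - c x k

lemma c_succ (x : ℝ) (k : ℕ) : c x (k+1+1) = 2 * x * c x (k+1) - c x k := rfl

lemma c_sin (θ : ℝ) (k : ℕ) : c (Real.cos θ) k * Real.sin θ = Real.sin (k * θ) ∧
    c (Real.cos θ) (k+1) * Real.sin θ = Real.sin ((k+1 : ℕ) * θ) := by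
  induction k with
  | zero => simp [c]
  | succ k ih =>
    refine ⟨ih.2, ?_⟩
    have e1 : ((k + 1 + 1 : ℕ) : ℝ) * θ = (k+1 : ℕ) * θ + θ := by push_cast; ring
    have e2 : (k : ℝ) * θ = (k+1 : ℕ) * θ - θ := by push_cast; ring
    rw [c, sub_mul, ih.1, mul_assoc, ih.2, e1, e2, Real.sin_add, Real.sin_sub]; ring

lemma c_one (k : ℕ) : c 1 k = k ∧ c 1 (k+1) = k + 1 := by
  induction k with
  | zero => simp [c]
  | succ k ih =>
    refine ⟨by simpa using ih.2, ?_⟩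
    rw [c, ih.1, ih.2]; push_cast; ring

lemma c_nonneg (m k : ℕ) (hm : m ≠ 1) (hk : m = 0 ∨ k ≤ m) : 0 ≤ c (Real.cos (Real.pi / m)) k := by
  rcases Nat.eq_zero_or_pos m with rfl | h0
  · simp [(c_one k).1]
  have h2 : 2 ≤ m := by omega
  have hk : k ≤ m := by omega
  have hpi := Real.pi_pos
  have hm2 : (2:ℝ) ≤ m := by exact_mod_cast h2
  have hkm : (k:ℝ) ≤ m := by exact_mod_cast hk
  have hsin : 0 < Real.sin (Real.pi / m) := by
    apply Real.sin_pos_of_pos_of_lt_pi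
    · positivity
    · rw [div_lt_iff₀ (by positivity)]; nlinarith
  have h := (c_sin (Real.pi / m) k).1
  have : 0 ≤ Real.sin (k * (Real.pi / m)) := by
    apply Real.sin_nonneg_of_nonneg_of_le_pi
    · positivity
    · rw [← mul_div_assoc, div_le_iff₀ (by positivity)]; nlinarith
  rw [← h] at this
  exact nonneg_of_mul_nonneg_left this hsin

open CoxeterSystem in
lemma rho_alt (i j : B) (k : ℕ) :
    rho cs (cs.wordProd (alternatingWord i j k)) (e i) =
      if Even k then c (Real.cos (Real.pi / M i j)) (k+1) • e i + c (Real.cos (Real.pi / M i j)) k • e j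
      else c (Real.cos (Real.pi / M i j)) k • e i + c (Real.cos (Real.pi / M i j)) (k+1) • e j := by
  induction k with
  | zero => simp [alternatingWord, c]
  | succ k ih =>
    rw [alternatingWord_succ', wordProd_cons, map_mul, rho_simple, LinearEquiv.mul_apply, ih]
    by_cases h : Even k
    · have h' : ¬ Even (k+1) := by simpa [Nat.even_add_one] using h
      have hx : a M j i = -2 * Real.cos (Real.pi / M i j) := by rw [a_symm]; rfl
      simp only [h, h', if_true, if_false, map_add, map_smul, sg_e, a_self, hx, c_succ]
      module
    · have h' : Even (k+1) := by simpa [Nat.even_add_one] using h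
      have hx : a M i j = -2 * Real.cos (Real.pi / M i j) := rfl
      simp only [h, h', if_true, if_false, map_add, map_smul, sg_e, a_self, hx, c_succ]
      module

open CoxeterSystem in
theorem tits : ∀ (n : ℕ) (u : W) (i : B), cs.length u = n → cs.length u < cs.length (u * cs.simple i) →
    0 ≤ rho cs u (e i) := by
  intro n
  induction n using Nat.strong_induction_on with
  | _ n ih =>
  intro u i hn hi
  by_cases hu : u = 1
  · subst hu
    simp only [map_one, LinearEquiv.coe_one, id_eq]
    exact Pi.single_nonneg.2 zero_le_one
  obtain ⟨j, hj⟩ := cs.exists_rightDescent_of_ne_one hu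
  have hj' := hj
  unfold IsRightDescent at hj'
  have hij : i ≠ j := by rintro rfl; omega
  -- maximal alternating suffix
  let P : ℕ → Prop := fun k => cs.length (u * (cs.wordProd (alternatingWord i j k))⁻¹) + k = cs.length u
  have hP1 : P 1 := by
    have : alternatingWord i j 1 = [j] := by simp [alternatingWord]
    simp only [P, this, wordProd_singleton, inv_simple]
    have := cs.isRightDescent_iff.1 hj
    omega
  have hb : ∀ k, P k → k ≤ cs.length u := fun k hk => by simp only [P] at hk; omega
  classical
  obtain ⟨k, hPk, hk1, hmax⟩ : ∃ k, P k ∧ 1 ≤ k ∧ ¬ P (k+1) := by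
    refine ⟨Nat.findGreatest P (cs.length u), Nat.findGreatest_spec (hb 1 hP1) hP1,
      Nat.le_findGreatest (hb 1 hP1) hP1, fun h => ?_⟩
    have := Nat.le_findGreatest (hb _ h) h
    omega
  set z := cs.wordProd (alternatingWord i j k) with hz
  set v := u * z⁻¹ with hv
  have huv : u = v * z := by simp [hv]
  have hlen : cs.length v + k = cs.length u := hPk
  have hzk : ∀ k, cs.length (cs.wordProd (alternatingWord i j k)) ≤ k := fun k => by
    simpa using cs.length_wordProd_le (alternatingWord i j k)
  -- new letter
  have hA : cs.length v < cs.length (v * cs.simple (if Even k then j else i)) := by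
    by_contra hcon
    apply hmax
    simp only [P]
    rw [alternatingWord_succ', wordProd_cons, mul_inv_rev, ← mul_assoc, inv_simple, ← hz, ← hv]
    have := cs.length_mul_simple v (if Even k then j else i)
    omega
  have hB : cs.length v < cs.length (v * cs.simple (if Even k then i else j)) := by
    by_contra hcon
    obtain ⟨k', rfl⟩ : ∃ k', k = k' + 1 := ⟨k - 1, by omega⟩
    have e1 : z = cs.simple (if Even (k'+1) then i else j) * cs.wordProd (alternatingWord i j k') := by
      rw [hz, alternatingWord_succ', wordProd_cons]
      congr 2
      by_cases h : Even k' <;> simp [h, Nat.even_add_one]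
    have e2 : u = (v * cs.simple (if Even (k'+1) then i else j)) * cs.wordProd (alternatingWord i j k') := by
      rw [mul_assoc, ← e1]; exact huv
    have h3 := cs.length_mul_le (v * cs.simple (if Even (k'+1) then i else j)) (cs.wordProd (alternatingWord i j k'))
    rw [← e2] at h3
    have := hzk k'
    have := cs.length_mul_simple v (if Even (k'+1) then i else j)
    omega
  have hvi : cs.length v < cs.length (v * cs.simple i) := by
    by_cases h : Even k
    · simpa [h] using hB
    · simpa [h] using hA
  have hvj : cs.length v < cs.length (v * cs.simple j) := by
    by_cases h : Even k
    · simpa [h] using hA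
    · simpa [h] using hB
  have pi := ih _ (by omega) v i rfl hvi
  have pj := ih _ (by omega) v j rfl hvj
  have hkm : M i j = 0 ∨ k + 1 ≤ M i j := by
    by_contra! hcon
    obtain ⟨h0, h1⟩ := hcon
    have hkm : M i j ≤ k := by omega
    have claim : ∀ q, ∃ l : List B, l.length = q ∧
        cs.wordProd (alternatingWord i j (q + M i j)) = cs.wordProd l * cs.wordProd (alternatingWord j i (M i j)) := by
      intro q
      induction q with
      | zero =>
        refine ⟨[], rfl, ?_⟩
        have := cs.wordProd_braidWord_eq i j
        simp only [braidWord] at this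
        rw [M.symmetric j i] at this
        simpa using this
      | succ q ihq =>
        obtain ⟨l, hl, hl'⟩ := ihq
        refine ⟨(if Even (q + M i j) then j else i) :: l, by simp [hl], ?_⟩
        rw [show q + 1 + M i j = (q + M i j) + 1 by ring, alternatingWord_succ', wordProd_cons, hl',
          wordProd_cons, mul_assoc]
    obtain ⟨l, hl, hl'⟩ := claim (k - M i j)
    rw [show k - M i j + M i j = k by omega, ← hz] at hl'
    obtain ⟨m', hm'⟩ : ∃ m', M i j = m' + 1 := ⟨M i j - 1, by omega⟩
    rw [hm', alternatingWord_succ, wordProd_concat] at hl'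
    have e2 : u * cs.simple i = v * cs.wordProd (l ++ alternatingWord i j m') := by
      have : u * cs.simple i = v * z * cs.simple i := by rw [← huv]
      rw [this, hl', wordProd_append]; simp [mul_assoc]
    have h3 := cs.length_mul_le v (cs.wordProd (l ++ alternatingWord i j m'))
    rw [← e2] at h3
    have := cs.length_wordProd_le (l ++ alternatingWord i j m')
    simp at this
    omega
  have hm1 := M.off_diagonal i j hij
  have n1 := c_nonneg (M i j) k hm1 (by omega)
  have n2 := c_nonneg (M i j) (k+1) hm1 (by omega)
  have : rho cs u (e i) = rho cs v (rho cs z (e i)) := by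
    rw [← LinearEquiv.mul_apply, ← map_mul, ← huv]
  rw [this, hz, rho_alt]
  split_ifs <;> simp only [map_add, map_smul] <;> 
    exact add_nonneg (smul_nonneg (by assumption) (by assumption)) (smul_nonneg (by assumption) (by assumption))

lemma tits_pos {u : W} {i : B} (h : cs.length u < cs.length (u * cs.simple i)) : 0 ≤ rho cs u (e i) :=
  tits cs _ u i rfl h

lemma e_ne (i : B) : (e i : B → ℝ) ≠ 0 := by
  intro h; simpa [e] using congrFun h i

lemma tits_neg {u : W} {i : B} (h : cs.length (u * cs.simple i) < cs.length u) : rho cs u (e i) ≤ 0 := by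
  have := tits_pos cs (u := u * cs.simple i) (i := i) (by simpa using h)
  rw [map_mul, LinearEquiv.mul_apply, rho_simple, sg_e, a_self] at this
  have h2 : (e i : B → ℝ) - (2:ℝ) • e i = - e i := by module
  rw [h2, map_neg] at this
  simpa using this

/-- if `u α_i ≥ 0` then `i` is an ascent. -/
lemma ascent_of_nonneg {u : W} {i : B} (h : 0 ≤ rho cs u (e i)) :
    cs.length u < cs.length (u * cs.simple i) := by
  by_contra hcon
  have h1 := cs.length_mul_simple_ne u i
  have h2 := tits_neg cs (u := u) (i := i) (by omega)
  have h3 : rho cs u (e i) = 0 := le_antisymm h2 h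
  exact e_ne i ((LinearEquiv.map_eq_zero_iff _).1 h3)

theorem faithful {u : W} (h : rho cs u = 1) : u = 1 := by
  by_contra hu
  obtain ⟨j, hj⟩ := cs.exists_rightDescent_of_ne_one hu
  have := tits_neg cs hj
  rw [h] at this
  have := this j
  simp [e] at this
  linarith

end CoxGeom

namespace CoxGeom
open Module

variable {B : Type} [Fintype B] [DecidableEq B]

/-- restriction of a Coxeter matrix to a subset of the generators -/
def rst (M : CoxeterMatrix B) (I : Finset B) : CoxeterMatrix I where
  M := fun i j => M i j
  isSymm := by ext i j; exact M.symmetric j i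
  diagonal i := M.diagonal i
  off_diagonal i j h := M.off_diagonal i j (fun h' => h (Subtype.ext h'))

lemma rst_apply (M : CoxeterMatrix B) (I : Finset B) (i j : I) : rst M I i j = M i j := rfl

abbrev csR (M : CoxeterMatrix B) (I : Finset B) : CoxeterSystem (rst M I) (rst M I).Group :=
  (rst M I).toCoxeterSystem

variable {W : Type} [Group W] {M : CoxeterMatrix B} (cs : CoxeterSystem M W)

noncomputable def phi (I : Finset B) : (rst M I).Group →* W :=
  (csR M I).lift ⟨fun i => cs.simple i, fun i j => by
    rw [rst_apply]; exact cs.simple_mul_simple_pow i j⟩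

lemma phi_simple (I : Finset B) (i : I) : phi cs I ((csR M I).simple i) = cs.simple i :=
  (csR M I).lift_apply_simple _ i

/-- inclusion `V_I → V` -/
noncomputable def inc (I : Finset B) : (I → ℝ) →ₗ[ℝ] (B → ℝ) :=
  Fintype.linearCombination ℝ (fun i : I => (e (i : B) : B → ℝ))

lemma inc_apply (I : Finset B) (v : I → ℝ) : inc I v = ∑ i, v i • (e (i : B) : B → ℝ) := by
  simp [inc, Fintype.linearCombination_apply]

lemma inc_e (I : Finset B) (i : I) : inc I (e i) = e (i : B) := by
  simp [inc_apply, e, Pi.single_apply]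

lemma inc_inj (I : Finset B) : Function.Injective (inc I) := by
  rw [← LinearMap.ker_eq_bot, LinearMap.ker_eq_bot']
  intro v hv
  ext j
  have := congrFun hv j
  simpa [inc_apply, e, Pi.single_apply, Finset.sum_apply] using this

lemma ext_e {V : Type} [AddCommGroup V] [Module ℝ V] {f g : (B → ℝ) →ₗ[ℝ] V} (h : ∀ i, f (e i) = g (e i)) : f = g := by
  refine LinearMap.pi_ext' fun i => LinearMap.ext_ring ?_
  exact h i

lemma inc_equivariant (I : Finset B) (u : (rst M I).Group) (v : I → ℝ) :
    rho cs (phi cs I u) (inc I v) = inc I (rho (csR M I) u v) := by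
  induction u using (csR M I).simple_induction_left generalizing v with
  | one => simp
  | mul_simple_left u i ih =>
    rw [map_mul, map_mul, map_mul, LinearEquiv.mul_apply, LinearEquiv.mul_apply, ih, phi_simple,
      rho_simple, rho_simple]
    generalize rho (csR M I) u v = x
    have : (sg M i).toLinearMap ∘ₗ inc I = inc I ∘ₗ (sg (rst M I) i).toLinearMap := by
      apply ext_e
      intro j
      simp only [LinearMap.comp_apply, LinearEquiv.coe_coe, inc_e, sg_e, map_sub, map_smul]
      rfl
    exact LinearMap.congr_fun this x

lemma phi_inj (I : Finset B) : Function.Injective (phi cs I) := by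
  rw [injective_iff_map_eq_one]
  intro u hu
  apply faithful (csR M I)
  ext1 v
  apply inc_inj
  rw [← inc_equivariant cs, hu]; simp

/-- parabolic subgroups -/
noncomputable def par (I : Finset B) : Subgroup W := (phi cs I).range

lemma simple_mem_par {I : Finset B} {i : B} (hi : i ∈ I) : cs.simple i ∈ par cs I :=
  ⟨_, phi_simple cs I ⟨i, hi⟩⟩

lemma par_le {I : Finset B} {H : Subgroup W} (h : ∀ i ∈ I, cs.simple i ∈ H) : par cs I ≤ H := by
  rintro _ ⟨u, rfl⟩
  induction u using (csR M I).simple_induction_left with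
  | one => simp
  | mul_simple_left u i ih =>
    rw [map_mul, phi_simple]; exact H.mul_mem (h i i.2) ih

/-- Lemma L, right version -/
lemma length_right (I : Finset B) (w : W) (hw : ∀ i ∈ I, cs.length w < cs.length (w * cs.simple i)) :
    ∀ (n : ℕ) (u : (rst M I).Group), (csR M I).length u = n →
      cs.length (w * phi cs I u) = cs.length w + n := by
  intro n
  induction n with
  | zero =>
    intro u hu
    rw [(csR M I).length_eq_zero_iff] at hu
    simp [hu]
  | succ n ih =>
    intro u hu
    have hu1 : u ≠ 1 := by rintro rfl; simp at hu
    obtain ⟨j, hj⟩ := (csR M I).exists_rightDescent_of_ne_one hu1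
    have hj2 := (csR M I).isRightDescent_iff.1 hj
    set u' := u * (csR M I).simple j with hu'
    have huu : u = u' * (csR M I).simple j := by rw [hu', mul_assoc, (csR M I).simple_mul_simple_self, mul_one]
    have h1 := ih u' (by omega)
    have h2 : 0 ≤ rho (csR M I) u' (e j) := by
      apply tits_pos; rw [← huu]; omega
    have h3 : 0 ≤ rho cs (w * phi cs I u') (e (j : B)) := by
      rw [map_mul, LinearEquiv.mul_apply, ← inc_e, inc_equivariant, inc_apply, map_sum]
      refine Finset.sum_nonneg fun i _ => ?_
      rw [map_smul]
      exact smul_nonneg (h2 i) (tits_pos cs (hw i i.2))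
    have h4 := ascent_of_nonneg cs h3
    have h5 := cs.length_mul_simple (w * phi cs I u') j
    rw [huu, map_mul, phi_simple, ← mul_assoc]
    omega

lemma length_left (I : Finset B) (w : W) (hw : ∀ i ∈ I, cs.length w < cs.length (cs.simple i * w))
    {u : W} (hu : u ∈ par cs I) (hu1 : u ≠ 1) : cs.length w < cs.length (u * w) := by
  obtain ⟨x, hx⟩ := (par cs I).inv_mem hu
  have h := length_right cs I w⁻¹ (fun i hi => by
    have := hw i hi
    rw [cs.length_inv, ← cs.length_inv (w⁻¹ * cs.simple i), mul_inv_rev, inv_inv, cs.inv_simple]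
    exact this) _ x rfl
  have e1 : w⁻¹ * phi cs I x = (u * w)⁻¹ := by rw [hx]; simp
  rw [e1, cs.length_inv, cs.length_inv] at h
  have : (csR M I).length x ≠ 0 := by
    rw [Ne, (csR M I).length_eq_zero_iff]
    rintro rfl
    simp at hx
    exact hu1 hx
  omega

section dist
variable {k : Type} [Field k] [Fintype W]

/-- functions on W left invariant under the generators in `I` -/
def inv (k : Type) [Field k] (I : Finset B) : Submodule k (W → k) where
  carrier := {f | ∀ i ∈ I, ∀ w, f (cs.simple i * w) = f w}
  add_mem' {f g} hf hg i hi w := by simp [hf i hi w, hg i hi w]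
  zero_mem' := by simp
  smul_mem' c f hf i hi w := by simp [hf i hi w]

lemma mem_inv (I : Finset B) (f : W → k) : f ∈ inv cs k I ↔ ∀ i ∈ I, ∀ w, f (cs.simple i * w) = f w := Iff.rfl

lemma inv_anti {I J : Finset B} (h : I ⊆ J) : inv cs k J ≤ inv cs k I := fun _ hf i hi w => hf i (h hi) w

lemma inv_par {I : Finset B} {f : W → k} (hf : f ∈ inv cs k I) {u : W} (hu : u ∈ par cs I) (w : W) :
    f (u * w) = f w := by
  let H : Subgroup W :=
    { carrier := {u | ∀ w, f (u * w) = f w}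
      mul_mem' := fun {a b} ha hb w => by rw [mul_assoc, ha, hb]
      one_mem' := by simp
      inv_mem' := fun {a} ha w => by rw [← ha]; simp }
  exact par_le cs (H := H) (fun i hi w => hf i hi w) hu w

open Classical in
noncomputable def asc (w : W) : Finset B := Finset.univ.filter fun i => cs.length w < cs.length (cs.simple i * w)

open Classical in
noncomputable def ee (k : Type) [Field k] (w : W) : W → k := fun x => if x * w⁻¹ ∈ par cs (asc cs w) then 1 else 0

lemma ee_mem (w : W) : ee cs k w ∈ inv cs k (asc cs w) := by
  intro i hi x
  have h : cs.simple i * x * w⁻¹ = cs.simple i * (x * w⁻¹) := mul_assoc _ _ _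
  have h2 : cs.simple i * x * w⁻¹ ∈ par cs (asc cs w) ↔ x * w⁻¹ ∈ par cs (asc cs w) := by
    rw [h]; exact Subgroup.mul_mem_cancel_left _ (simple_mem_par cs hi)
  unfold ee
  by_cases hc : x * w⁻¹ ∈ par cs (asc cs w)
  · rw [if_pos hc, if_pos (h2.2 hc)]
  · rw [if_neg hc, if_neg (fun h3 => hc (h2.1 h3))]

lemma ee_self (w : W) : ee cs k w w = 1 := by simp [ee, Subgroup.one_mem]

lemma ee_ne (w x : W) (h : ee cs k w x ≠ 0) (hx : x ≠ w) : cs.length w < cs.length x := by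
  have h1 : x * w⁻¹ ∈ par cs (asc cs w) := by
    by_contra hc; exact h (by simp [ee, hc])
  have := length_left cs (asc cs w) w (fun i hi => by simpa [asc] using hi) h1 (by
    intro h; exact hx (mul_inv_eq_one.1 h))
  simpa using this

open Classical in
lemma inv_le_span (I : Finset B) : inv cs k I ≤ Submodule.span k (ee cs k '' {w | I ⊆ asc cs w}) := by
  obtain ⟨N, hN⟩ : ∃ N, ∀ w, cs.length w < N := by
    obtain ⟨N, hN⟩ := (Set.finite_range cs.length).bddAbove
    exact ⟨N + 1, fun w => Nat.lt_succ_of_le (hN ⟨w, rfl⟩)⟩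
  have key : ∀ d n, n + d = N → ∀ f ∈ inv cs k I, (∀ w, cs.length w < n → f w = 0) →
      f ∈ Submodule.span k (ee cs k '' {w | I ⊆ asc cs w}) := by
    intro d
    induction d with
    | zero =>
      intro n hn f hf h
      have : f = 0 := by ext w; exact h w (by rw [show n = N by omega]; exact hN w)
      rw [this]; exact Submodule.zero_mem _
    | succ d ih =>
      intro n hn f hf h
      set T : Finset W := Finset.univ.filter fun w => cs.length w = n ∧ f w ≠ 0 with hT
      have hsub : ∀ w ∈ T, I ⊆ asc cs w := by
        intro w hw i hi
        simp only [hT, Finset.mem_filter, Finset.mem_univ, true_and] at hw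
        simp only [asc, Finset.mem_filter, Finset.mem_univ, true_and]
        by_contra hc
        have h1 := cs.length_simple_mul_ne w i
        have h2 := h (cs.simple i * w) (by omega)
        rw [hf i hi] at h2
        exact hw.2 h2
      set g := ∑ w ∈ T, f w • ee cs k w with hg
      have hgs : g ∈ Submodule.span k (ee cs k '' {w | I ⊆ asc cs w}) :=
        Submodule.sum_mem _ fun w hw => Submodule.smul_mem _ _
          (Submodule.subset_span ⟨w, hsub w hw, rfl⟩)
      have hgi : g ∈ inv cs k I :=
        Submodule.sum_mem _ fun w hw => Submodule.smul_mem _ _ (inv_anti cs (hsub w hw) (ee_mem cs w))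
      have := ih (n+1) (by omega) (f - g) (Submodule.sub_mem _ hf hgi) ?_
      · have h2 := Submodule.add_mem _ this hgs
        simpa using h2
      · intro x hx
        have hgx : g x = if x ∈ T then f x else 0 := by
          rw [hg, Finset.sum_apply]
          rw [← Finset.sum_ite_eq' T x (fun x => f x)]
          refine Finset.sum_congr rfl fun w hw => ?_
          by_cases hwx : w = x
          · subst hwx; simp [ee_self]
          · simp only [hwx, if_false, Pi.smul_apply, smul_eq_mul]
            simp only [hT, Finset.mem_filter, Finset.mem_univ, true_and] at hw
            by_contra hc
            have := ee_ne cs (k := k) w x (fun h0 => hc (by rw [h0, mul_zero])) (Ne.symm hwx)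
            omega
        rw [Pi.sub_apply, hgx]
        split_ifs with hxT
        · simp
        · simp only [hT, Finset.mem_filter, Finset.mem_univ, true_and, not_and, not_not] at hxT
          by_cases hxn : cs.length x = n
          · simp [hxT hxn]
          · simp [h x (by omega)]
  intro f hf
  exact key N 0 (by omega) f hf (by simp)

lemma inv_eq_span (I : Finset B) : inv cs k I = Submodule.span k (ee cs k '' {w | I ⊆ asc cs w}) := by
  apply le_antisymm (inv_le_span cs I)
  rw [Submodule.span_le]
  rintro _ ⟨w, hw, rfl⟩
  exact inv_anti cs hw (ee_mem cs w)

lemma ee_li : LinearIndependent k (ee cs k) := by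
  apply linearIndependent_of_top_le_span_of_card_eq_finrank
  · have := inv_le_span cs (k := k) ∅
    simp at this
    refine le_trans (fun f _ => ?_) this
    simp [mem_inv]
  · simp

lemma dist (I J : Finset B) (t : B) :
    inv cs k (insert t I) ⊓ (⨆ j ∈ J, inv cs k (insert j I)) ≤
      ⨆ j ∈ J, inv cs k (insert j (insert t I)) := by
  have h1 : (⨆ j ∈ J, inv cs k (insert j I)) =
      Submodule.span k (ee cs k '' (⋃ j ∈ J, {w | insert j I ⊆ asc cs w})) := by
    simp only [inv_eq_span, Set.image_iUnion, Submodule.span_iUnion]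
  have h2 : (⨆ j ∈ J, inv cs k (insert j (insert t I))) =
      Submodule.span k (ee cs k '' (⋃ j ∈ J, {w | insert j (insert t I) ⊆ asc cs w})) := by
    simp only [inv_eq_span, Set.image_iUnion, Submodule.span_iUnion]
  rw [h1, h2, inv_eq_span]
  rintro f ⟨hf1, hf2⟩
  rw [SetLike.mem_coe, Finsupp.mem_span_image_iff_linearCombination] at hf1 hf2
  obtain ⟨x, hx, rfl⟩ := hf1
  obtain ⟨y, hy, hxy⟩ := hf2
  have := (ee_li cs (k := k)) hxy
  subst this
  rw [Finsupp.mem_span_image_iff_linearCombination]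
  refine ⟨y, ?_, rfl⟩
  rw [Finsupp.mem_supported] at *
  intro w hw
  have a1 := hx hw
  have a2 := hy hw
  simp only [Set.mem_iUnion, Set.mem_ofPred_eq, Finset.insert_subset_iff] at a1 a2 ⊢
  obtain ⟨j, hj, a3, a4⟩ := a2
  exact ⟨j, hj, a3, a1⟩

end dist
end CoxGeom

namespace CoxGeom
open Module Polynomial

/-- irreducibility of the `p`-th cyclotomic polynomial over `ℚ(ζ_n)`, `p ∤ n` -/
lemma irr_cyc (n p : ℕ) [NeZero n] (hp : p.Prime) (hnp : n.Coprime p) (z : ℂ) (hz : IsPrimitiveRoot z n) :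
    Irreducible (cyclotomic p (IntermediateField.adjoin ℚ {z})) := by
  set K := IntermediateField.adjoin ℚ {z} with hK
  have hzK : IsIntegral ℚ z := (hz.isIntegral (NeZero.pos n)).tower_top
  have : FiniteDimensional ℚ K := IntermediateField.adjoin.finiteDimensional hzK
  have hKd : finrank ℚ K = n.totient := by
    rw [hK, IntermediateField.adjoin.finrank hzK, ← cyclotomic_eq_minpoly_rat hz (NeZero.pos n),
      natDegree_cyclotomic]
  set w : ℂ := Complex.exp (2 * Real.pi * Complex.I / p) with hw
  have hwp : IsPrimitiveRoot w p := Complex.isPrimitiveRoot_exp p hp.ne_zero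
  have hwK : IsIntegral K w := (hwp.isIntegral hp.pos).tower_top
  have hprod : IsPrimitiveRoot (z * w) (n * p) := by
    have h := (Commute.all z w).orderOf_mul_eq_mul_orderOf_of_coprime (by
      rw [← hz.eq_orderOf, ← hwp.eq_orderOf]; exact hnp)
    rw [← hz.eq_orderOf, ← hwp.eq_orderOf] at h
    rw [← h]; exact IsPrimitiveRoot.orderOf _
  have : FiniteDimensional K (IntermediateField.adjoin K {w}) :=
    IntermediateField.adjoin.finiteDimensional hwK
  have hLd : finrank K (IntermediateField.adjoin K {w}) = (minpoly K w).natDegree :=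
    IntermediateField.adjoin.finrank hwK
  have htow := Module.finrank_mul_finrank ℚ K (IntermediateField.adjoin K {w})
  have : FiniteDimensional ℚ (IntermediateField.adjoin K {w}) := FiniteDimensional.trans ℚ K _
  let L := (IntermediateField.adjoin K {w}).restrictScalars ℚ
  have hle : (n * p).totient ≤ finrank ℚ (IntermediateField.adjoin K {w}) := by
    have hi : IsIntegral ℚ (z * w) := (hprod.isIntegral (Nat.mul_pos (NeZero.pos n) hp.pos)).tower_top
    have : finrank ℚ (IntermediateField.adjoin ℚ {z * w}) = (n * p).totient := by
      rw [IntermediateField.adjoin.finrank hi, ← cyclotomic_eq_minpoly_rat hprod (Nat.mul_pos (NeZero.pos n) hp.pos),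
        natDegree_cyclotomic]
    rw [← this]
    have hsub : IntermediateField.adjoin ℚ {z * w} ≤ L := by
      rw [IntermediateField.adjoin_le_iff, Set.singleton_subset_iff]
      have h1 : (z : ℂ) ∈ IntermediateField.adjoin K {w} :=
        (IntermediateField.adjoin K {w}).algebraMap_mem ⟨z, IntermediateField.mem_adjoin_simple_self ℚ z⟩
      have h2 : w ∈ IntermediateField.adjoin K {w} := IntermediateField.mem_adjoin_simple_self K w
      exact (IntermediateField.adjoin K {w}).mul_mem h1 h2
    have : FiniteDimensional ℚ L := ‹FiniteDimensional ℚ (IntermediateField.adjoin K {w})›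
    exact LinearMap.finrank_le_finrank_of_injective
      (f := (IntermediateField.inclusion hsub).toLinearMap) (IntermediateField.inclusion hsub).injective
  rw [← htow, hKd, hLd, Nat.totient_mul hnp, Nat.totient_prime hp] at hle
  have hle2 : p - 1 ≤ (minpoly K w).natDegree :=
    Nat.le_of_mul_le_mul_left hle (Nat.totient_pos.2 (NeZero.pos n))
  have hroot : aeval w (cyclotomic p K) = 0 := by
    rw [aeval_def, eval₂_eq_eval_map, map_cyclotomic]
    exact hwp.isRoot_cyclotomic hp.pos
  have : cyclotomic p K = minpoly K w := by
    refine eq_of_monic_of_dvd_of_natDegree_le (minpoly.monic hwK) (cyclotomic.monic p K)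
      (minpoly.dvd K w hroot) ?_
    rw [natDegree_cyclotomic, Nat.totient_prime hp]; exact hle2
  rw [this]; exact minpoly.irreducible hwK

lemma card_ge_of_matrix {B : Type} [Fintype B] [DecidableEq B] {K : Type} [Field K] {p : ℕ} (hp : p.Prime)
    (hirr : Irreducible (cyclotomic p K)) (A : Matrix B B K) (h1 : A ^ p = 1) (h2 : A ≠ 1) :
    p - 1 ≤ Fintype.card B := by
  have := Fact.mk hp
  by_contra hc
  have hdvd : minpoly K A ∣ cyclotomic p K * (X - 1) := by
    apply minpoly.dvd
    rw [cyclotomic_prime_mul_X_sub_one]; simp [h1]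
  have hmo := minpoly.monic (Matrix.isIntegral A)
  have hdeg : (minpoly K A).natDegree ≤ Fintype.card B := by
    rw [← A.charpoly_natDegree_eq_dim]
    exact natDegree_le_of_dvd (Matrix.minpoly_dvd_charpoly A) A.charpoly_monic.ne_zero
  have hndvd : ¬ cyclotomic p K ∣ minpoly K A := by
    intro h
    have := natDegree_le_of_dvd h hmo.ne_zero
    rw [natDegree_cyclotomic, Nat.totient_prime hp] at this
    omega
  have hcop : IsCoprime (cyclotomic p K) (minpoly K A) :=
    (hirr.coprime_iff_not_dvd).2 hndvd
  have h3 : minpoly K A ∣ X - 1 := hcop.symm.dvd_of_dvd_mul_left hdvd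
  obtain ⟨q, hq⟩ := h3
  have := congrArg (aeval A) hq
  simp at this
  exact h2 (sub_eq_zero.1 this)

variable {B : Type} [Fintype B] [DecidableEq B]
variable {W : Type} [Group W] {M : CoxeterMatrix B} (cs : CoxeterSystem M W)

noncomputable def mat : W →* Matrix B B ℂ where
  toFun w := (LinearMap.toMatrix' (rho cs w : (B → ℝ) ≃ₗ[ℝ] (B → ℝ)).toLinearMap).map (algebraMap ℝ ℂ)
  map_one' := by
    have : ((rho cs 1 : (B → ℝ) ≃ₗ[ℝ] (B → ℝ))).toLinearMap = LinearMap.id := by rw [map_one]; rfl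
    rw [this, LinearMap.toMatrix'_id]; simp
  map_mul' x y := by
    have : ((rho cs (x * y) : (B → ℝ) ≃ₗ[ℝ] (B → ℝ))).toLinearMap = (rho cs x).toLinearMap ∘ₗ (rho cs y).toLinearMap := by
      rw [map_mul]; rfl
    rw [this, LinearMap.toMatrix'_comp, Matrix.map_mul]

lemma mat_faithful {w : W} (h : mat cs w = 1) : w = 1 := by
  apply faithful cs
  apply LinearEquiv.toLinearMap_injective
  apply LinearMap.toMatrix'.injective
  apply Matrix.map_injective (algebraMap ℝ ℂ).injective
  have h1 : mat cs w = mat cs 1 := by rw [h, map_one]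
  change mat cs w = _
  rw [h1]
  change Matrix.map _ _ = Matrix.map _ _
  rw [map_one]

lemma mat_mem (K : Subfield ℂ) (hK : ∀ i j, ((a M i j : ℝ) : ℂ) ∈ K) (w : W) :
    mat cs w ∈ (K.subtype.mapMatrix (m := B)).range := by
  induction w using cs.simple_induction_left with
  | one => rw [map_one]; exact one_mem _
  | mul_simple_left w i ih =>
    rw [map_mul]
    refine mul_mem ?_ ih
    refine ⟨Matrix.of fun j l => (if j = l then 1 else 0) - ⟨_, hK i l⟩ * (if j = i then 1 else 0), ?_⟩
    ext j l
    change _ = algebraMap ℝ ℂ (LinearMap.toMatrix' _ j l)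
    rw [LinearMap.toMatrix'_apply, rho_simple]
    have := sg_e M i l
    unfold e at this
    have h3 : (fun j' => if j' = l then (1:ℝ) else 0) = Pi.single l 1 := by
      ext j'; simp [Pi.single_apply]
    simp only [h3, LinearEquiv.coe_coe, this]
    simp [Pi.single_apply]
    split_ifs <;> simp

theorem card_ge {M : CoxeterMatrix B} (cs : CoxeterSystem M W) [Finite W] {p : ℕ} (hp : p.Prime) (hodd : Odd p) (hfree : ∀ i j, p ∣ M i j → M i j = 0)
    (hdvd : p ∣ Nat.card W) : p - 1 ≤ Fintype.card B := by
  classical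
  have := Fact.mk hp
  obtain ⟨w, hw⟩ := exists_prime_orderOf_dvd_card' p hdvd
  let m : B → B → ℕ := fun i j => if M i j = 0 then 1 else M i j
  let n := 2 * ∏ i, ∏ j, m i j
  have hm0 : ∀ i j, m i j ≠ 0 := by intro i j; simp only [m]; split_ifs <;> simp_all
  have hn0 : n ≠ 0 := by
    simp only [n, mul_ne_zero_iff, Finset.prod_ne_zero_iff]
    exact ⟨two_ne_zero, fun i _ j _ => hm0 i j⟩
  have : NeZero n := ⟨hn0⟩
  have hcop : n.Coprime p := by
    apply Nat.Coprime.mul_left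
    · exact (Nat.coprime_two_left).2 hodd
    · refine Nat.Coprime.prod_left fun i _ => Nat.Coprime.prod_left fun j _ => ?_
      rw [Nat.coprime_comm, hp.coprime_iff_not_dvd]
      simp only [m]
      split_ifs with h
      · exact hp.one_lt.ne' ∘ Nat.dvd_one.1
      · exact fun h' => h (hfree i j h')
  have hmn : ∀ i j, 2 * m i j ∣ n := fun i j => Nat.mul_dvd_mul_left 2
    ((Finset.dvd_prod_of_mem (fun j => m i j) (Finset.mem_univ j)).trans
      (Finset.dvd_prod_of_mem (fun i => ∏ j, m i j) (Finset.mem_univ i)))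
  set z : ℂ := Complex.exp (2 * Real.pi * Complex.I / n) with hzdef
  have hz : IsPrimitiveRoot z n := Complex.isPrimitiveRoot_exp n hn0
  have hirr := irr_cyc n p hp hcop z hz
  set K := IntermediateField.adjoin ℚ {z} with hK
  have hzK : z ∈ K := IntermediateField.mem_adjoin_simple_self ℚ z
  have hroot : ∀ x : ℂ, x ^ n = 1 → x ∈ K := by
    intro x hx
    obtain ⟨i, _, rfl⟩ := hz.eq_pow_of_pow_eq_one hx
    exact pow_mem hzK i
  have haK : ∀ i j, ((a M i j : ℝ) : ℂ) ∈ K.toSubfield := by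
    intro i j
    have hx : ∀ s : ℂ, s ^ 2 = 1 → (Complex.exp (s * ((Real.pi / M i j : ℝ) : ℂ) * Complex.I)) ^ n = 1 := by
      intro s hs
      have hs' : s = 1 ∨ s = -1 := by simpa using hs
      obtain ⟨d, hd⟩ := hmn i j
      by_cases h0 : M i j = 0
      · simp [h0]
      · have hm : m i j = M i j := by simp [m, h0]
        rw [hm] at hd
        rw [hd, ← Complex.exp_nat_mul]
        have h0' : (M i j : ℂ) ≠ 0 := by exact_mod_cast h0
        rw [Complex.exp_eq_one_iff]
        rcases hs' with rfl | rfl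
        · refine ⟨d, ?_⟩; push_cast; field_simp
        · refine ⟨-d, ?_⟩; push_cast; field_simp
    have h1 := hroot _ (hx 1 (by ring))
    have h2 := hroot _ (hx (-1) (by ring))
    have : ((a M i j : ℝ) : ℂ) = - (Complex.exp (1 * ((Real.pi / M i j : ℝ) : ℂ) * Complex.I) +
       Complex.exp (-1 * ((Real.pi / M i j : ℝ) : ℂ) * Complex.I)) := by
      unfold a
      rw [Complex.ofReal_mul, Complex.ofReal_cos, one_mul, neg_one_mul, ← Complex.two_cos]
      push_cast; ring
    rw [this]
    exact neg_mem (add_mem h1 h2)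
  obtain ⟨A, hA⟩ := mat_mem cs K.toSubfield haK w
  have hinj : Function.Injective (K.toSubfield.subtype.mapMatrix (m := B)) :=
    Matrix.map_injective (K.toSubfield.subtype).injective
  refine card_ge_of_matrix (K := K) hp hirr A ?_ ?_
  · apply hinj
    rw [map_pow]
    erw [hA]
    rw [← map_pow, ← hw, pow_orderOf_eq_one, map_one, map_one]
  · intro h
    have : mat cs w = 1 := by rw [← hA, h]; exact map_one _
    rw [mat_faithful cs this, orderOf_one] at hw
    exact hp.one_lt.ne hw

end CoxGeom

namespace CoxCoh
open CategoryTheory CategoryTheory.Limits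

variable {k G : Type} [CommRing k] [Group G]

/-- vanishing of `H^n` of a representation -/
def Hz {V : Type} [AddCommGroup V] [Module k V] (ρ : Representation k G V) (n : ℕ) : Prop :=
  IsZero (groupCohomology (Rep.of ρ) n)

section iso
lemma Hz_of_equiv {H : Type} [Group H] {V U : Type} [AddCommGroup V] [Module k V] [AddCommGroup U] [Module k U]
    {ρ : Representation k G V} {σ : Representation k H U} (e : G ≃* H) (e' : V ≃ₗ[k] U)
    (he : ∀ g v, e' (ρ g v) = σ (e g) (e' v)) {n : ℕ} (h : Hz σ n) : Hz ρ n :=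
  h.of_iso (groupCohomology.mapIso (A := Rep.of σ) (B := Rep.of ρ) e e' (fun g => LinearMap.ext fun v => he g v) n)

lemma Hz_of_retract {V U : Type} [AddCommGroup V] [Module k V] [AddCommGroup U] [Module k U]
    {ρ : Representation k G V} {σ : Representation k G U} (f : V →ₗ[k] U) (g : U →ₗ[k] V)
    (hf : ∀ x v, f (ρ x v) = σ x (f v)) (hg : ∀ x v, g (σ x v) = ρ x (g v)) (hfg : ∀ v, g (f v) = v)
    {n : ℕ} (h : Hz σ n) : Hz ρ n := by
  let F : Rep.of ρ ⟶ Rep.of σ := Rep.ofHom ⟨f, fun x => LinearMap.ext (hf x)⟩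
  let F' : Rep.of σ ⟶ Rep.of ρ := Rep.ofHom ⟨g, fun x => LinearMap.ext (hg x)⟩
  have hFF : F ≫ F' = 𝟙 _ := by
    ext v; exact hfg v
  have h2 : (groupCohomology.functor k G n).map F ≫ (groupCohomology.functor k G n).map F' = 𝟙 _ := by
    rw [← CategoryTheory.Functor.map_comp, hFF, CategoryTheory.Functor.map_id]
  rw [Hz, IsZero.iff_id_eq_zero]
  have h3 : (groupCohomology.functor k G n).map F = 0 := h.eq_zero_of_tgt _
  rw [h3, zero_comp] at h2
  exact h2.symm
end iso

section ses
lemma gen_mono {A B : Rep k G} (f : A ⟶ B) [Mono f] (h : IsZero (groupCohomology B 0)) :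
    IsZero (groupCohomology A 0) := by
  have : Mono (groupCohomology.map (MonoidHom.id G) f 0) := groupCohomology.mono_map_0_of_mono f
  exact IsZero.of_mono (groupCohomology.map (MonoidHom.id G) f 0) h

lemma gen_zero {A B : Rep k G} (f : A ⟶ B) (hf : ∀ v : A.V, (∀ x, A.ρ x v = v) → f.hom v = 0) :
    (groupCohomology.functor k G 0).map f = 0 := by
  change groupCohomology.map (MonoidHom.id G) f 0 = 0
  have h : (Rep.invariantsFunctor k G).map f = 0 := by
    ext ⟨v, hv⟩
    apply Subtype.ext
    exact hf v hv
  have h2 := groupCohomology.map_id_comp_H0Iso_hom f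
  rw [h, comp_zero] at h2
  rw [← cancel_mono (groupCohomology.H0Iso B).hom, h2, zero_comp]

variable {V₁ V₂ V₃ : Type} [AddCommGroup V₁] [Module k V₁] [AddCommGroup V₂] [Module k V₂]
  [AddCommGroup V₃] [Module k V₃]
  {ρ₁ : Representation k G V₁} {ρ₂ : Representation k G V₂} {ρ₃ : Representation k G V₃}

/-- short exact sequences of representations -/
structure SES (ρ₁ : Representation k G V₁) (ρ₂ : Representation k G V₂) (ρ₃ : Representation k G V₃) where
  f : V₁ →ₗ[k] V₂
  g : V₂ →ₗ[k] V₃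
  hf : ∀ x v, f (ρ₁ x v) = ρ₂ x (f v)
  hg : ∀ x v, g (ρ₂ x v) = ρ₃ x (g v)
  inj : Function.Injective f
  surj : Function.Surjective g
  ex : LinearMap.range f = LinearMap.ker g

variable (s : SES ρ₁ ρ₂ ρ₃)

def SES.ff : Rep.of ρ₁ ⟶ Rep.of ρ₂ := Rep.ofHom ⟨s.f, fun x => LinearMap.ext (s.hf x)⟩
def SES.gg : Rep.of ρ₂ ⟶ Rep.of ρ₃ := Rep.ofHom ⟨s.g, fun x => LinearMap.ext (s.hg x)⟩

noncomputable def SES.X : ShortComplex (Rep k G) := ShortComplex.mk s.ff s.gg (by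
  ext v
  have : s.f v ∈ LinearMap.ker s.g := by rw [← s.ex]; exact ⟨v, rfl⟩
  exact this)

lemma SES.exact : s.X.ShortExact := by
  apply CategoryTheory.ShortExact.reflects_shortExact_of_faithful (forget₂ (Rep k G) (ModuleCat k))
  refine { exact := ?_, mono_f := ?_, epi_g := ?_ }
  · rw [ShortComplex.moduleCat_exact_iff_range_eq_ker]
    exact s.ex
  · exact (ModuleCat.mono_iff_injective _).2 s.inj
  · exact (ModuleCat.epi_iff_surjective _).2 s.surj

include s

lemma SES.three {n : ℕ} (h2 : Hz ρ₂ n) (h1 : Hz ρ₁ (n+1)) : Hz ρ₃ n :=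
  (groupCohomology.mapShortComplex₃_exact s.exact (i := n) rfl).isZero_of_both_zeros
    (h2.eq_zero_of_src _) (h1.eq_zero_of_tgt _)

lemma SES.one {n : ℕ} (h3 : Hz ρ₃ n) (h2 : Hz ρ₂ (n+1)) : Hz ρ₁ (n+1) :=
  (groupCohomology.mapShortComplex₁_exact s.exact (i := n) rfl).isZero_of_both_zeros
    (h3.eq_zero_of_src _) (h2.eq_zero_of_tgt _)

lemma SES.one_zero (h2 : Hz ρ₂ 0) : Hz ρ₁ 0 := by
  have : Mono s.ff := s.exact.mono_f
  exact gen_mono s.ff h2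

lemma SES.three_zero (h1 : Hz ρ₁ 1) (hinv : ∀ v : V₂, (∀ x, ρ₂ x v = v) → v ∈ LinearMap.range s.f) : Hz ρ₃ 0 := by
  refine (groupCohomology.mapShortComplex₃_exact s.exact (i := 0) rfl).isZero_of_both_zeros
    ?_ (h1.eq_zero_of_tgt _)
  refine gen_zero s.gg fun v hv => ?_
  have h3 := hinv v hv
  rw [s.ex] at h3
  exact h3
end ses

section sq
variable {V : Type} [AddCommGroup V] [Module k V] (ρ : Representation k G V)

/-- subrepresentation on an invariant submodule -/
def sub (A : Submodule k V) (hA : ∀ g, A ≤ A.comap (ρ g)) : Representation k G A where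
  toFun g := (ρ g).restrict (hA g)
  map_one' := by ext; simp
  map_mul' _ _ := by ext; simp

/-- the subquotient `A / (A ∩ B)` -/
def sq (A B : Submodule k V) (hA : ∀ g, A ≤ A.comap (ρ g)) (hB : ∀ g, B ≤ B.comap (ρ g)) :
    Representation k G (A ⧸ B.submoduleOf A) :=
  (sub ρ A hA).quotient (B.submoduleOf A) (fun g _ hx => hB g hx)

lemma sq_le1 {A A' B B' : Submodule k V} (h1 : A' ≤ A) (h4 : B' ≤ B) :
    B'.submoduleOf A' ≤ (B.submoduleOf A).comap (Submodule.inclusion h1) := fun _ hx => h4 hx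

lemma sq_le2 {A A' B C : Submodule k V} (h5 : C = A' ⊔ B) :
    B.submoduleOf A ≤ (C.submoduleOf A).comap LinearMap.id := fun x hx => by
  have : (x : V) ∈ C := by rw [h5]; exact Submodule.mem_sup_right hx
  exact this

noncomputable def sqSES {A A' B B' C : Submodule k V} (hA : ∀ g, A ≤ A.comap (ρ g)) (hA' : ∀ g, A' ≤ A'.comap (ρ g))
    (hB : ∀ g, B ≤ B.comap (ρ g)) (hB' : ∀ g, B' ≤ B'.comap (ρ g)) (hC : ∀ g, C ≤ C.comap (ρ g))
    (h1 : A' ≤ A) (_h2 : B ≤ A) (h3 : A' ⊓ B ≤ B') (h4 : B' ≤ B) (h5 : C = A' ⊔ B) :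
    SES (sq ρ A' B' hA' hB') (sq ρ A B hA hB) (sq ρ A C hA hC) where
  f := Submodule.mapQ _ _ (Submodule.inclusion h1) (sq_le1 h1 h4)
  g := Submodule.mapQ _ _ LinearMap.id (sq_le2 h5)
  hf x v := by
    obtain ⟨v, rfl⟩ := Submodule.Quotient.mk_surjective _ v
    rfl
  hg x v := by
    obtain ⟨v, rfl⟩ := Submodule.Quotient.mk_surjective _ v
    rfl
  inj := by
    rw [← LinearMap.ker_eq_bot, LinearMap.ker_eq_bot']
    intro v hv
    obtain ⟨v, rfl⟩ := Submodule.Quotient.mk_surjective _ v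
    rw [Submodule.mapQ_apply, Submodule.Quotient.mk_eq_zero] at hv
    rw [Submodule.Quotient.mk_eq_zero]
    exact h3 ⟨v.2, hv⟩
  surj := by
    intro v
    obtain ⟨v, rfl⟩ := Submodule.Quotient.mk_surjective _ v
    exact ⟨Submodule.Quotient.mk v, rfl⟩
  ex := by
    apply le_antisymm
    · rintro _ ⟨v, rfl⟩
      obtain ⟨v, rfl⟩ := Submodule.Quotient.mk_surjective _ v
      rw [LinearMap.mem_ker, Submodule.mapQ_apply, Submodule.mapQ_apply, Submodule.Quotient.mk_eq_zero]
      have : (v : V) ∈ C := by rw [h5]; exact Submodule.mem_sup_left v.2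
      exact this
    · intro v hv
      obtain ⟨v, rfl⟩ := Submodule.Quotient.mk_surjective _ v
      rw [LinearMap.mem_ker, Submodule.mapQ_apply, Submodule.Quotient.mk_eq_zero] at hv
      have hv' : (v : V) ∈ C := hv
      rw [h5] at hv'
      obtain ⟨a, ha, b, hb, hab⟩ := Submodule.mem_sup.1 hv'
      refine ⟨Submodule.Quotient.mk ⟨a, ha⟩, ?_⟩
      rw [Submodule.mapQ_apply, Submodule.Quotient.eq]
      have : a - (v : V) ∈ B := by
        rw [← hab, sub_add_cancel_left]; exact neg_mem hb
      exact this

noncomputable def sqBot (A B : Submodule k V) (hB : B = ⊥) : (A ⧸ B.submoduleOf A) ≃ₗ[k] A :=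
  Submodule.quotEquivOfEqBot _ (by
    rw [hB]; ext x; simp [Submodule.submoduleOf])

lemma sqBot_mk (A B : Submodule k V) (hB : B = ⊥) (x : A) : sqBot A B hB (Submodule.Quotient.mk x) = x := rfl

lemma Hz_sqBot {A B : Submodule k V} (hA : ∀ g, A ≤ A.comap (ρ g)) (hB : ∀ g, B ≤ B.comap (ρ g)) (h : B = ⊥)
    {n : ℕ} : Hz (sq ρ A B hA hB) n ↔ Hz (sub ρ A hA) n := by
  constructor
  · apply Hz_of_equiv (MulEquiv.refl G) (sqBot A B h).symm
    intro g v
    rw [LinearEquiv.symm_apply_eq]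
    rfl
  · apply Hz_of_equiv (MulEquiv.refl G) (sqBot A B h)
    intro g v
    obtain ⟨v, rfl⟩ := Submodule.Quotient.mk_surjective _ v
    rfl
end sq

/-- Shapiro -/
lemma Hz_coind (S : Subgroup G) {n : ℕ} (h : Hz (Representation.trivial k S k) n) :
    Hz (Representation.coind S.subtype (Representation.trivial k S k)) n :=
  IsZero.of_iso h (groupCohomology.coindIso (Rep.trivial k S k) n)

lemma Hz_of_invertible [Finite G] (h : IsUnit (Nat.card G : k)) {n : ℕ} (hn : 0 < n) :
    Hz (Representation.trivial k G k) n := by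
  have h1 : Hz (Representation.coind (⊥ : Subgroup G).subtype (Representation.trivial k (⊥ : Subgroup G) k)) n := by
    apply Hz_coind
    obtain ⟨m, rfl⟩ := Nat.exists_eq_succ_of_ne_zero hn.ne'
    exact isZero_groupCohomology_succ_of_subsingleton _ _
  have := Fintype.ofFinite G
  obtain ⟨u, hu⟩ := h
  refine Hz_of_retract (σ := Representation.coind (⊥ : Subgroup G).subtype (Representation.trivial k (⊥ : Subgroup G) k))
    { toFun := fun c => ⟨fun _ => c, fun _ _ => rfl⟩
      map_add' := fun _ _ => rfl
      map_smul' := fun _ _ => rfl }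
    { toFun := fun f => (↑u⁻¹ : k) * ∑ x, f.1 x
      map_add' := fun f g => by simp [Finset.sum_add_distrib, mul_add]
      map_smul' := fun c f => by simp [← Finset.mul_sum, mul_left_comm] } ?_ ?_ ?_ h1
  · intro x v; rfl
  · intro x v
    change (↑u⁻¹ : k) * ∑ y, v.1 (y * x) = (↑u⁻¹ : k) * ∑ y, v.1 y
    congr 1
    exact Fintype.sum_equiv (Equiv.mulRight x) _ _ (fun y => rfl)
  · intro v
    change (↑u⁻¹ : k) * ∑ y : G, v = v
    rw [Finset.sum_const, Finset.card_univ, ← Nat.card_eq_fintype_card, nsmul_eq_mul, ← hu, ← mul_assoc,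
      Units.inv_mul, one_mul]

end CoxCoh

namespace CoxCoh
open CoxGeom

variable {B : Type} [Fintype B] [DecidableEq B] {W : Type} [Group W] [Fintype W] {M : CoxeterMatrix B}
  (cs : CoxeterSystem M W) (k : Type) [Field k]

lemma sign_simple {B W : Type} [Group W] {M : CoxeterMatrix B} (cs : CoxeterSystem M W) (i : B) : cs.signHom (cs.simple i) = -1 := cs.lift_apply_simple _ i

lemma mem_or (i : B) (w : W) : w ∈ cs.signHom.ker ∨ cs.simple i * w ∈ cs.signHom.ker := by
  simp only [MonoidHom.mem_ker, map_mul, sign_simple]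
  rcases Int.units_eq_one_or (cs.signHom w) with h | h <;> simp [h]

lemma mem_iff (i : B) (w : W) : cs.simple i * w ∈ cs.signHom.ker ↔ w ∉ cs.signHom.ker := by
  simp only [MonoidHom.mem_ker, map_mul, sign_simple]
  rcases Int.units_eq_one_or (cs.signHom w) with h | h <;> simp [h]

/-- right translation action -/
def act : Representation k cs.signHom.ker (W → k) where
  toFun g := LinearMap.funLeft k k (fun x => x * (g : W))
  map_one' := by ext; simp [LinearMap.funLeft_apply]
  map_mul' x y := by
    apply LinearMap.ext; intro f; funext w
    simp [LinearMap.funLeft_apply, mul_assoc]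

lemma act_apply (g : cs.signHom.ker) (f : W → k) (w : W) : act cs k g f w = f (w * g) := rfl

lemma inv_stable (I : Finset B) (g : cs.signHom.ker) : inv cs k I ≤ (inv cs k I).comap (act cs k g) := by
  intro f hf i hi w
  rw [act_apply, act_apply, mul_assoc]
  exact hf i hi _

def bsup (I J : Finset B) : Submodule k (W → k) := ⨆ j ∈ J, inv cs k (insert j I)

lemma bsup_stable (I J : Finset B) (g : cs.signHom.ker) : bsup cs k I J ≤ (bsup cs k I J).comap (act cs k g) := by
  refine iSup₂_le fun j hj => (inv_stable cs k (insert j I) g).trans (Submodule.comap_mono ?_)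
  exact le_iSup₂ (f := fun j (_ : j ∈ J) => inv cs k (insert j I)) j hj

noncomputable abbrev Q (I J : Finset B) := sq (act cs k) (inv cs k I) (bsup cs k I J) (inv_stable cs k I) (bsup_stable cs k I J)

noncomputable def ses (I J : Finset B) (t : B) : SES (Q cs k (insert t I) J) (Q cs k I J) (Q cs k I (insert t J)) :=
  sqSES (act cs k) _ _ _ _ _ (inv_anti cs (Finset.subset_insert t I))
    (iSup₂_le fun j _ => inv_anti cs (Finset.subset_insert j I))
    (dist cs I J t)
    (iSup₂_mono fun j _ => inv_anti cs (Finset.insert_subset_insert j (Finset.subset_insert t I)))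
    (Finset.iSup_insert t J _)

lemma bsup_empty (I : Finset B) : bsup cs k I ∅ = ⊥ := by simp [bsup]

/-- `M_I` is coinduced -/
noncomputable def toCoind (I : Finset B) : inv cs k I →ₗ[k]
    Representation.coindV ((par cs I).subgroupOf cs.signHom.ker).subtype
      (Representation.trivial k ((par cs I).subgroupOf cs.signHom.ker) k) where
  toFun f := ⟨fun g => f.1 g, fun s g => inv_par cs f.2 s.2 g⟩
  map_add' _ _ := rfl
  map_smul' _ _ := rfl

lemma toCoind_bij (I : Finset B) (hI : I.Nonempty) : Function.Bijective (toCoind cs k I) := by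
  classical
  obtain ⟨i, hi⟩ := hI
  constructor
  · intro f f' h
    apply Subtype.ext
    funext w
    have h1 : ∀ g (hg : g ∈ cs.signHom.ker), f.1 g = f'.1 g := fun g hg => congrFun (congrArg Subtype.val h) ⟨g, hg⟩
    rcases mem_or cs i w with hw | hw
    · exact h1 w hw
    · rw [← f.2 i hi w, ← f'.2 i hi w]; exact h1 _ hw
  · intro φ
    have hφ : ∀ (a b : cs.signHom.ker), (a : W) * (b : W)⁻¹ ∈ par cs I → φ.1 a = φ.1 b := by
      intro a b h
      have := φ.2 ⟨a * b⁻¹, h⟩ b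
      simpa using this
    let f : W → k := fun w => if h : w ∈ cs.signHom.ker then φ.1 ⟨w, h⟩ else
      φ.1 ⟨cs.simple i * w, (mem_iff cs i w).2 h⟩
    have hf : f ∈ inv cs k I := by
      intro j hj w
      by_cases hw : w ∈ cs.signHom.ker
      · have h2 : cs.simple j * w ∉ cs.signHom.ker := fun h => (mem_iff cs j w).1 h hw
        simp only [f, dif_pos hw, dif_neg h2]
        apply hφ
        simpa [mul_assoc] using (par cs I).mul_mem (simple_mem_par cs hi) (simple_mem_par cs hj)
      · have h2 : cs.simple j * w ∈ cs.signHom.ker := (mem_iff cs j w).2 hw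
        simp only [f, dif_neg hw, dif_pos h2]
        apply hφ
        simpa [mul_assoc] using (par cs I).mul_mem (simple_mem_par cs hj) (simple_mem_par cs hi)
    refine ⟨⟨f, hf⟩, ?_⟩
    apply Subtype.ext
    funext g
    change f g = φ.1 g
    simp only [f, dif_pos g.2]

lemma sign_phi (I : Finset B) (u : (rst M I).Group) : cs.signHom (phi cs I u) = (csR M I).signHom u := by
  induction u using (csR M I).simple_induction_left with
  | one => simp
  | mul_simple_left u i ih => rw [map_mul, map_mul, map_mul, phi_simple, sign_simple, sign_simple, ih]

noncomputable def kerHom (I : Finset B) : (csR M I).signHom.ker →* (par cs I).subgroupOf cs.signHom.ker where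
  toFun u := ⟨⟨phi cs I u, by
    have := u.2; rw [MonoidHom.mem_ker] at this ⊢; rw [sign_phi, this]⟩, ⟨u, rfl⟩⟩
  map_one' := by apply Subtype.ext; apply Subtype.ext; exact map_one _
  map_mul' _ _ := by apply Subtype.ext; apply Subtype.ext; exact map_mul _ _ _

lemma kerHom_bij (I : Finset B) : Function.Bijective (kerHom cs I) := by
  constructor
  · intro u v h
    apply Subtype.ext
    apply phi_inj cs I
    exact congrArg (fun x : (par cs I).subgroupOf cs.signHom.ker => ((x : cs.signHom.ker) : W)) h
  · rintro ⟨⟨w, hw⟩, u, hu⟩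
    have hu' : phi cs I u = w := hu
    refine ⟨⟨u, ?_⟩, ?_⟩
    · rw [MonoidHom.mem_ker] at hw ⊢; rw [← sign_phi cs, hu', hw]
    · apply Subtype.ext; apply Subtype.ext; exact hu'

lemma base (I : Finset B) (hI : I.Nonempty) {n : ℕ}
    (h : Hz (Representation.trivial k (csR M I).signHom.ker k) n) : Hz (Q cs k I ∅) n := by
  rw [Hz_sqBot _ _ _ (bsup_empty cs k I)]
  have h2 : Hz (Representation.trivial k ((par cs I).subgroupOf cs.signHom.ker) k) n :=
    Hz_of_equiv (MulEquiv.ofBijective _ (kerHom_bij cs I)).symm (LinearEquiv.refl k k) (fun _ _ => rfl) h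
  exact Hz_of_equiv (MulEquiv.refl _) (LinearEquiv.ofBijective _ (toCoind_bij cs k I hI)) (fun _ _ => rfl)
    (Hz_coind _ h2)

lemma const_mem (I : Finset B) (hI : I.Nonempty) (t : B) (v : _)
    (hv : ∀ x, Q cs k I ∅ x v = v) : v ∈ LinearMap.range (ses cs k I ∅ t).f := by
  obtain ⟨v, rfl⟩ := Submodule.Quotient.mk_surjective _ v
  obtain ⟨i, hi⟩ := hI
  have h1 : ∀ (x : cs.signHom.ker) (w : W), v.1 (w * x) = v.1 w := by
    intro x w
    have h2 := hv x
    have h3 := congrArg (sqBot _ _ (bsup_empty cs k I)) h2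
    exact congrFun (congrArg Subtype.val h3) w
  have h4 : ∀ w, v.1 w = v.1 1 := by
    intro w
    rcases mem_or cs i w with hw | hw
    · have := h1 ⟨w, hw⟩ 1
      simpa using this
    · rw [← v.2 i hi w]
      have := h1 ⟨_, hw⟩ 1
      simpa using this
  refine ⟨Submodule.Quotient.mk ⟨v.1, ?_⟩, rfl⟩
  intro j _ w
  rw [h4, h4 w]

lemma claimA {N : ℕ} (IH : ∀ I : Finset B, I ≠ Finset.univ → ∀ n, 0 < n → n < N →
    Hz (Representation.trivial k (csR M I).signHom.ker k) n)
    (J : Finset B) : ∀ (I : Finset B) (n : ℕ), I.Nonempty → I ∪ J ≠ Finset.univ → n + J.card < N →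
    (n ≠ 0 ∨ J.Nonempty) → Hz (Q cs k I J) n := by
  induction J using Finset.induction_on with
  | empty =>
    intro I n hI hu hn h0
    rw [Finset.union_empty] at hu
    exact base cs k I hI (IH I hu n (by simpa [Nat.pos_iff_ne_zero] using h0) (by simpa using hn))
  | insert t J ht ih =>
    intro I n hI hu hn _
    rw [Finset.card_insert_of_notMem ht] at hn
    have hu2 : insert t I ∪ J ≠ Finset.univ := by
      rwa [Finset.insert_union, ← Finset.union_insert]
    have hu3 : I ∪ J ≠ Finset.univ := by
      intro h; apply hu; rw [Finset.union_insert, h]; simp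
    by_cases h : n ≠ 0 ∨ J.Nonempty
    · exact (ses cs k I J t).three (ih I n hI hu3 (by omega) h)
        (ih (insert t I) (n+1) (Finset.insert_nonempty t I) hu2 (by omega) (Or.inl (by omega)))
    · push Not at h
      obtain ⟨rfl, rfl⟩ := h
      refine (ses cs k I ∅ t).three_zero ?_ (const_mem cs k I hI t)
      exact ih (insert t I) 1 (Finset.insert_nonempty t I) hu2 (by omega) (Or.inl (by omega))

lemma claimB {N : ℕ} (IH : ∀ I : Finset B, I ≠ Finset.univ → ∀ n, 0 < n → n < N →
    Hz (Representation.trivial k (csR M I).signHom.ker k) n)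
    (n : ℕ) : ∀ (I J : Finset B), I ∪ J = Finset.univ → Disjoint I J → n + 2 ≤ I.card → n + J.card < N →
    (n ≠ 0 ∨ J.Nonempty) → Hz (Q cs k I J) n := by
  induction n with
  | zero =>
    intro I J hu hd hc hn h0
    obtain ⟨t, ht⟩ : I.Nonempty := by rw [← Finset.card_pos]; omega
    have hne : (I.erase t).Nonempty := by
      rw [← Finset.card_pos, Finset.card_erase_of_mem ht]; omega
    have hu2 : I.erase t ∪ J ≠ Finset.univ := by
      intro h
      have h3 : t ∈ I.erase t ∪ J := by rw [h]; simp
      have := Finset.disjoint_left.1 hd ht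
      simp [this] at h3
    have s := ses cs k (I.erase t) J t
    rw [Finset.insert_erase ht] at s
    exact s.one_zero (claimA cs k IH J _ 0 hne hu2 hn h0)
  | succ n ih =>
    intro I J hu hd hc hn h0
    obtain ⟨t, ht⟩ : I.Nonempty := by rw [← Finset.card_pos]; omega
    have hne : (I.erase t).Nonempty := by
      rw [← Finset.card_pos, Finset.card_erase_of_mem ht]; omega
    have htJ := Finset.disjoint_left.1 hd ht
    have hu2 : I.erase t ∪ J ≠ Finset.univ := by
      intro h
      have h3 : t ∈ I.erase t ∪ J := by rw [h]; simp
      simp [htJ] at h3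
    have s := ses cs k (I.erase t) J t
    rw [Finset.insert_erase ht] at s
    refine s.one (ih (I.erase t) (insert t J) ?_ ?_ ?_ ?_ (Or.inr (Finset.insert_nonempty t J)))
      (claimA cs k IH J _ (n+1) hne hu2 hn h0)
    · rw [Finset.union_insert, ← Finset.insert_union, Finset.insert_erase ht, hu]
    · rw [Finset.disjoint_insert_right]
      exact ⟨Finset.notMem_erase t I, hd.mono_left (Finset.erase_subset t I)⟩
    · rw [Finset.card_erase_of_mem ht]; omega
    · rw [Finset.card_insert_of_notMem htJ]; omega

lemma final {N : ℕ} (IH : ∀ I : Finset B, I ≠ Finset.univ → ∀ n, 0 < n → n < N →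
    Hz (Representation.trivial k (csR M I).signHom.ker k) n)
    (n : ℕ) (hn0 : 0 < n) (hn : n < N) (hc : n + 2 ≤ Fintype.card B) :
    Hz (Representation.trivial k cs.signHom.ker k) n := by
  have h := claimB cs k IH n Finset.univ ∅ (by simp) (by simp) (by simpa using hc) (by simpa using hn)
    (Or.inl hn0.ne')
  rw [Hz_sqBot _ _ _ (bsup_empty cs k _)] at h
  let f : k →ₗ[k] inv cs k Finset.univ :=
    { toFun := fun c => ⟨fun _ => c, fun _ _ _ => rfl⟩
      map_add' := fun _ _ => rfl
      map_smul' := fun _ _ => rfl }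
  have hf : Function.Bijective f := by
    constructor
    · intro c d hcd
      exact congrFun (congrArg Subtype.val hcd) 1
    · intro g
      refine ⟨g.1 1, ?_⟩
      apply Subtype.ext
      funext w
      change g.1 1 = g.1 w
      induction w using cs.simple_induction_left with
      | one => rfl
      | mul_simple_left w i ih => rw [g.2 i (Finset.mem_univ i) w]; exact ih
  exact Hz_of_equiv (MulEquiv.refl _) (LinearEquiv.ofBijective f hf) (fun _ _ => rfl) h

theorem main (p : ℕ) (hp : p.Prime) (hodd : Odd p) : ∀ (m : ℕ) (B : Type) [Fintype B] [DecidableEq B] (W : Type)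
    [Group W] [Finite W] (M : CoxeterMatrix B) (cs : CoxeterSystem M W), M.IsPFree p → Fintype.card B = m →
    ∀ n, 0 < n → n < p - 2 → Hz (Representation.trivial (ZMod p) cs.signHom.ker (ZMod p)) n := by
  have := Fact.mk hp
  intro m
  induction m using Nat.strong_induction_on with
  | _ m ih =>
    intro B _ _ W _ _ M cs hfree hm n hn0 hn
    have := Fintype.ofFinite W
    by_cases hdvd : p ∣ Nat.card W
    · have hge := card_ge cs hp hodd hfree hdvd
      refine final cs (ZMod p) (N := p - 2) ?_ n hn0 hn (by omega)
      intro I hI n hn0 hn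
      have : Finite (rst M I).Group := Finite.of_injective _ (phi_inj cs I)
      refine ih (Fintype.card I) ?_ I (rst M I).Group (rst M I) (csR M I) (fun i j h => hfree i j h) rfl n hn0 hn
      rw [← hm, Fintype.card_coe]
      exact lt_of_le_of_ne (Finset.card_le_univ I) (fun h => hI ((Finset.card_eq_iff_eq_univ I).1 h))
    · apply Hz_of_invertible _ hn0
      rw [isUnit_iff_ne_zero, Ne, ZMod.natCast_eq_zero_iff]
      exact fun h => hdvd (h.trans (Subgroup.card_subgroup_dvd_card _))

end CoxCoh

/-- Main theorem.  Let `p` be an odd prime and `W` a finite `p`-free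
Coxeter group.  Then the mod `p` cohomology `H^k(A_W, 𝔽_p)` of the alternating subgroup
`A_W` (the kernel of the sign homomorphism) vanishes for `0 < k < p - 2`. -/
theorem alternating_subgroup_cohomology_vanishes {B W : Type} [Finite B] [Group W]
    [Finite W] {M : CoxeterMatrix B} (cs : CoxeterSystem M W)
    (p : ℕ) (hp : p.Prime) (hodd : Odd p) (hfree : M.IsPFree p) :
    ∀ k : ℕ, 0 < k → k < p - 2 →
      Subsingleton (groupCohomology
        (Rep.trivial (ZMod p) ↥cs.signHom.ker (ZMod p)) k) := by
  classical
  intro k hk hkp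
  have := Fintype.ofFinite B
  have h := CoxCoh.main p hp hodd (Fintype.card B) B W M cs hfree rfl k hk hkp
  exact ModuleCat.subsingleton_of_isZero h
end

section
/- Let p be an odd prime. The mod p cohomology H^k(A_n, F_p) of the alternating group A_n on n letters vanishes for 0 < k < p - 2. -/
namespace AltCoh

/-- Alternating-sum differential on functions of tuples. -/
def dd {X k : Type*} [CommRing k] {n : ℕ} (f : (Fin n → X) → k) (x : Fin (n + 1) → X) : k :=
  ∑ i : Fin (n + 1), (-1) ^ (i : ℕ) * f (fun j => x (i.succAbove j))

section basic
variable {X k : Type*} [CommRing k]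

lemma dd_zero (n : ℕ) : dd (fun _ : Fin n → X => (0 : k)) = fun _ => 0 := by
  funext x; simp [dd]

lemma dd_sub {n : ℕ} (f g : (Fin n → X) → k) (x : Fin (n + 1) → X) :
    dd (fun z => f z - g z) x = dd f x - dd g x := by
  simp [dd, mul_sub, Finset.sum_sub_distrib]

lemma dd_cons {n : ℕ} (f : (Fin (n + 1) → X) → k) (a : X) (x : Fin (n + 1) → X) :
    dd f (Fin.cons a x : Fin (n + 2) → X)
      = f x - dd (fun z : Fin n → X => f (Fin.cons a z : Fin (n + 1) → X)) x := by
  unfold dd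
  rw [Fin.sum_univ_succ, sub_eq_add_neg, ← Finset.sum_neg_distrib]
  congr 1
  · simp
  · refine Finset.sum_congr rfl fun i _ => ?_
    have : (fun j => (Fin.cons a x : Fin (n + 2) → X) (i.succ.succAbove j))
        = (Fin.cons a (fun j => x (i.succAbove j)) : Fin (n + 1) → X) := by
      funext j
      refine Fin.cases ?_ (fun j => ?_) j <;> simp
    rw [this]
    simp [pow_succ]

lemma dd_dd : ∀ {n : ℕ} (f : (Fin n → X) → k) (x : Fin (n + 2) → X), dd (dd f) x = 0
  | 0, f, x => by
    simp only [dd, Fin.sum_univ_succ]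
    simp
  | n + 1, f, x => by
    rw [← Fin.cons_self_tail x, dd_cons]
    have : (fun z : Fin (n + 1) → X => dd f (Fin.cons (x 0) z : Fin (n + 2) → X))
        = fun z => f z - dd (fun z : Fin n → X => f (Fin.cons (x 0) z : Fin (n + 1) → X)) z := by
      funext z; exact dd_cons f (x 0) z
    rw [this, dd_sub, dd_dd]
    ring

lemma dd_smul {H : Type*} [Group H] [MulAction H X] {n : ℕ} (f : (Fin n → X) → k) (h : H)
    (x : Fin (n + 1) → X) : dd f (h • x) = dd (fun z => f (h • z)) x := rfl

lemma dd_comm {Y : Type*} {a b : ℕ} (f : (Fin a → Y) → (Fin b → X) → k) (y : Fin (a + 1) → Y)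
    (x : Fin (b + 1) → X) :
    dd (fun y' => dd (f y') x) y = dd (fun x' => dd (fun y' => f y' x') y) x := by
  simp only [dd, Finset.mul_sum]
  rw [Finset.sum_comm]
  refine Finset.sum_congr rfl fun i _ => Finset.sum_congr rfl fun j _ => ?_
  ring

end basic

/-- vanishing of degree `q` cohomology computed from the `S`-invariant functions on `Y^(q+1)` -/
def Van (k : Type*) [CommRing k] {H : Type*} [Group H] (S : Set H) (Y : Type*) [MulAction H Y]
    (q : ℕ) : Prop :=
  ∀ f : (Fin (q + 1) → Y) → k, (∀ h ∈ S, ∀ y, f (h • y) = f y) → (∀ y, dd f y = 0) →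
    ∃ g : (Fin q → Y) → k, (∀ h ∈ S, ∀ y, g (h • y) = g y) ∧ ∀ y, dd g y = f y

section abstract_step
variable {k H Y X : Type*} [CommRing k] [Group H] [MulAction H Y] [MulAction H X]

lemma column {a b : ℕ}
    (hcol : ∀ w : Fin b → X, Van k {h : H | h • w = w} Y a)
    (F : (Fin (a + 1) → Y) → (Fin b → X) → k)
    (hF : ∀ (h : H) y x, F (h • y) (h • x) = F y x)
    (hd : ∀ y x, dd (fun y' => F y' x) y = 0) :
    ∃ F' : (Fin a → Y) → (Fin b → X) → k, (∀ (h : H) y x, F' (h • y) (h • x) = F' y x) ∧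
      ∀ y x, dd (fun y' => F' y' x) y = F y x := by
  have h1 : ∀ w : Fin b → X, ∃ g : (Fin a → Y) → k,
      (∀ h : H, h • w = w → ∀ y, g (h • y) = g y) ∧ ∀ y, dd g y = F y w := by
    intro w
    refine hcol w (fun y => F y w) ?_ (fun y => hd y w)
    intro h (hw : h • w = w) y
    have := hF h y w
    rwa [hw] at this
  choose P hP1 hP2 using h1
  let r : (Fin b → X) → (Fin b → X) := fun w =>
    (Quotient.out (Quotient.mk (MulAction.orbitRel H (Fin b → X)) w))
  have hr : ∀ w, ∃ g : H, g • r w = w := by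
    intro w
    have : (MulAction.orbitRel H (Fin b → X)) (r w) w := Quotient.exact (Quotient.out_eq _)
    have := (MulAction.orbitRel H (Fin b → X)).symm this
    exact this
  have hr2 : ∀ (h : H) w, r (h • w) = r w := by
    intro h w
    have : (Quotient.mk (MulAction.orbitRel H (Fin b → X)) (h • w)) = Quotient.mk _ w :=
      Quotient.sound ⟨h, rfl⟩
    simp only [r, this]
  choose γ hγ using hr
  refine ⟨fun y w => P (r w) ((γ w)⁻¹ • y), ?_, ?_⟩
  · intro h y w
    simp only [hr2]
    have key := hP1 (r w) ((γ (h • w))⁻¹ * h * γ w) (by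
      rw [mul_smul, mul_smul, hγ, inv_smul_eq_iff, ← hr2 h w, hγ]) ((γ w)⁻¹ • y)
    rw [← key]
    simp [mul_smul]
  · intro y w
    have := hP2 (r w) ((γ w)⁻¹ • y)
    rw [dd_smul] at this
    rw [this]
    have h2 := hF (γ w) ((γ w)⁻¹ • y) (r w)
    rw [hγ, smul_inv_smul] at h2
    exact h2.symm

lemma row {a b : ℕ} (φ : Y → X) (hφ : ∀ (h : H) y, φ (h • y) = h • φ y)
    (F : (Fin (a + 1) → Y) → (Fin (b + 1) → X) → k)
    (hF : ∀ (h : H) y x, F (h • y) (h • x) = F y x)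
    (hd : ∀ y x, dd (F y) x = 0) :
    ∃ F' : (Fin (a + 1) → Y) → (Fin b → X) → k,
      (∀ (h : H) y x, F' (h • y) (h • x) = F' y x) ∧ ∀ y x, dd (F' y) x = F y x := by
  refine ⟨fun y x => F y (Fin.cons (φ (y 0)) x : Fin (b + 1) → X), ?_, ?_⟩
  · intro h y x
    beta_reduce
    rw [← hF h y]
    congr 1
    funext j
    refine Fin.cases ?_ (fun j => ?_) j <;> simp [hφ]
  · intro y x
    have := hd y (Fin.cons (φ (y 0)) x)
    rw [dd_cons] at this
    exact (sub_eq_zero.1 this).symm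

lemma zigzag (q : ℕ) (φ : Y → X) (hφ : ∀ (h : H) y, φ (h • y) = h • φ y) (y₀ : Y)
    (hcol : ∀ a b, 1 ≤ a → a ≤ q → ∀ w : Fin (b + 1) → X, Van k {h : H | h • w = w} Y a)
    (hinv : Van k (Set.univ : Set H) X q) :
    ∀ a b, a + b = q → ∀ (F : (Fin (a + 1) → Y) → (Fin b → X) → k),
      (∀ (h : H) y x, F (h • y) (h • x) = F y x) →
      (∀ y x, dd (fun y' => dd (F y') x) y = 0) →
      ∃ v : (Fin a → Y) → (Fin b → X) → k, (∀ (h : H) y x, v (h • y) (h • x) = v y x) ∧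
        ∀ y x, dd (F y) x = dd (fun x' => dd (fun y' => v y' x') y) x := by
  intro a
  induction a with
  | zero =>
    intro b hb F hF hd
    obtain rfl : b = q := by omega
    have hconst : ∀ y y' x, dd (F y) x = dd (F y') x := by
      intro y y' x
      have := hd (Fin.cons (y 0) y') x
      rw [dd_cons] at this
      rw [sub_eq_zero.1 this]
      simp only [dd, Fin.sum_univ_succ]
      simp
      have e : ∀ z : Fin 1 → Y, (Fin.cons (y 0) z ∘ Fin.castSucc) = y := by
        intro z; funext j; fin_cases j; rfl
      have e2 : ∀ z : Fin 0 → Y, (Fin.cons (y 0) z : Fin 1 → Y) = y := by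
        intro z; funext j; fin_cases j; rfl
      simp [e2]
    obtain ⟨v, hv1, hv2⟩ := hinv (fun x => dd (F (fun _ => y₀)) x)
      (by
        intro h _ x
        rw [hconst _ (h • (fun _ => y₀)), dd_smul]
        simp only [hF])
      (fun x => dd_dd _ _)
    refine ⟨fun _ x => v x, fun h y x => hv1 h trivial x, fun y x => ?_⟩
    rw [hconst y (fun _ => y₀), ← hv2]
    congr 1
    funext x'
    simp [dd]
  | succ a ih =>
    intro b hb F hF hd
    obtain ⟨F', hF'1, hF'2⟩ := column (a := a + 1) (b := b + 1)
      (hcol (a + 1) b (by omega) (by omega)) (fun y x => dd (F y) x)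
      (by intro h y x; rw [dd_smul]; simp only [hF]) hd
    obtain ⟨v', hv1, hv2⟩ := ih (b + 1) (by omega) F' hF'1 (by
      intro y x
      rw [dd_comm]
      simp only [hF'2]
      exact dd_dd _ _)
    obtain ⟨w, hw1, hw2⟩ := row φ hφ (fun y x => F' y x - dd (fun y' => v' y' x) y)
      (by
        intro h y x
        rw [dd_smul, hF'1]
        simp only [hv1])
      (by
        intro y x
        rw [dd_sub (F' y), hv2, sub_self])
    refine ⟨w, hw1, ?_⟩
    intro y x
    rw [← dd_comm, ← hF'2]
    simp only [hw2]
    rw [dd_sub (fun y' => F' y' x), dd_dd, sub_zero]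

lemma van_step (q : ℕ) (φ : Y → X) (hφ : ∀ (h : H) y, φ (h • y) = h • φ y) (y₀ : Y)
    (hcol : ∀ a b, 1 ≤ a → a ≤ q → ∀ w : Fin (b + 1) → X, Van k {h : H | h • w = w} Y a)
    (hinv : Van k (Set.univ : Set H) X q) : Van k (Set.univ : Set H) Y q := by
  intro f hf hd
  obtain ⟨v, hv1, hv2⟩ := zigzag q φ hφ y₀ hcol hinv q 0 rfl (fun y _ => f y)
    (fun h y x => hf h trivial y) (by
      intro y x
      rw [dd_comm (fun y _ => f y)]
      simp only [hd]
      simp [dd])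
  refine ⟨fun y => v y Fin.elim0, ?_, ?_⟩
  · intro h _ y
    beta_reduce
    rw [← hv1 h y]
    congr 1
    exact Subsingleton.elim _ _
  · intro y
    have := hv2 y (fun _ => φ y₀)
    simp only [dd, Fin.sum_univ_succ (n := 0)] at this
    simp at this
    rw [this]
    simp only [dd]
    refine Finset.sum_congr rfl fun i _ => ?_
    congr 2
    exact Subsingleton.elim _ _

lemma van_of_card [Finite H] (y₀ : Y) (c : k) (hc : c * (Nat.card H : k) = 1) (q : ℕ) :
    Van k (Set.univ : Set H) Y q := by
  have := Fintype.ofFinite H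
  intro f hf hd
  refine ⟨fun y => c * ∑ g : H, f (Fin.cons (g • y₀) y : Fin (q + 1) → Y), ?_, ?_⟩
  · intro h _ y
    beta_reduce
    congr 1
    rw [← Equiv.sum_comp (Equiv.mulLeft h)]
    refine Finset.sum_congr rfl fun g _ => ?_
    rw [← hf h trivial (Fin.cons (g • y₀) y)]
    congr 1
    funext j
    refine Fin.cases ?_ (fun j => ?_) j <;> simp [mul_smul]
  · intro y
    have h1 : ∀ g : H, dd (fun z : Fin q → Y => f (Fin.cons (g • y₀) z : Fin (q + 1) → Y)) y = f y := by
      intro g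
      have := hd (Fin.cons (g • y₀) y)
      rw [dd_cons] at this
      exact (sub_eq_zero.1 this).symm
    have h2 : dd (fun y => c * ∑ g : H, f (Fin.cons (g • y₀) y : Fin (q + 1) → Y)) y
        = c * ∑ g : H, dd (fun z : Fin q → Y => f (Fin.cons (g • y₀) z : Fin (q + 1) → Y)) y := by
      simp only [dd, Finset.mul_sum]
      rw [Finset.sum_comm]
      refine Finset.sum_congr rfl fun i _ => Finset.sum_congr rfl fun j _ => ?_
      ring
    rw [h2]
    simp only [h1, Finset.sum_const, Finset.card_univ, nsmul_eq_mul]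
    rw [← mul_assoc, ← Nat.card_eq_fintype_card, hc, one_mul]

end abstract_step

section alt
open Equiv

variable {n : ℕ}

/-- even permutations supported in `s` -/
def Gs (s : Finset (Fin n)) : Subgroup (alternatingGroup (Fin n)) where
  carrier := {g | ∀ x, x ∉ s → (g : Perm (Fin n)) x = x}
  mul_mem' := by
    intro a b ha hb x hx
    simp [hb x hx, ha x hx]
  one_mem' := by intro x _; simp
  inv_mem' := by
    intro a ha x hx
    have := ha x hx
    simp only [InvMemClass.coe_inv]
    rw [Perm.inv_eq_iff_eq]
    exact this.symm

lemma mem_Gs {s : Finset (Fin n)} {g : alternatingGroup (Fin n)} :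
    g ∈ Gs s ↔ ∀ x, x ∉ s → (g : Perm (Fin n)) x = x := Iff.rfl

lemma Gs_map {s : Finset (Fin n)} {g : alternatingGroup (Fin n)} (hg : g ∈ Gs s) (x : Fin n) :
    (g : Perm (Fin n)) x ∈ s ↔ x ∈ s := by
  constructor
  · intro h
    by_contra hx
    rw [hg x hx] at h
    exact hx h
  · intro hx
    by_contra h
    have := hg _ h
    rw [(g : Perm (Fin n)).injective this] at h
    exact h hx

instance actS (s : Finset (Fin n)) : MulAction (Gs s) s where
  smul g x := ⟨((g : alternatingGroup (Fin n)) : Perm (Fin n)) x, (Gs_map g.2 x).2 x.2⟩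
  one_smul x := rfl
  mul_smul a b x := rfl

lemma actS_coe (s : Finset (Fin n)) (g : Gs s) (x : s) :
    ((g • x : s) : Fin n) = ((g : alternatingGroup (Fin n)) : Perm (Fin n)) x := rfl

lemma van_invariants {k : Type*} [CommRing k] (s : Finset (Fin n)) (q : ℕ) (hq : q + 3 ≤ s.card) :
    Van k (Set.univ : Set (Gs s)) s q := by
  classical
  intro f hf hd
  have hex : ∀ b, b + 1 ≤ s.card → ∀ x : Fin b → s, ∃ a : s, ∀ i, x i ≠ a := by
    intro b hb x
    by_contra! hcon
    have hs : Function.Surjective x := fun a => hcon a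
    have := Fintype.card_le_of_surjective x hs
    simp at this
    omega
  have hind : ∀ (x : Fin q → s) (a b : s), (∀ i, x i ≠ a) → (∀ i, x i ≠ b) →
      f (Fin.cons a x : Fin (q + 1) → s) = f (Fin.cons b x : Fin (q + 1) → s) := by
    intro x a b ha hb
    by_cases hab : a = b
    · rw [hab]
    obtain ⟨c, hc⟩ := hex (q + 2) (by omega) (Fin.cons a (Fin.cons b x))
    have hca : a ≠ c := hc 0
    have hcb : b ≠ c := hc 1
    have hcx : ∀ i, x i ≠ c := fun i => hc i.succ.succ
    have hab' : (a : Fin n) ≠ b := fun h => hab (Subtype.ext h)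
    have hca' : (a : Fin n) ≠ c := fun h => hca (Subtype.ext h)
    have hcb' : (b : Fin n) ≠ c := fun h => hcb (Subtype.ext h)
    let τ : Perm (Fin n) := swap (b : Fin n) c * swap (a : Fin n) c
    have hτ : τ ∈ alternatingGroup (Fin n) := by
      rw [Perm.mem_alternatingGroup]
      simp [τ, Perm.sign_swap hca', Perm.sign_swap hcb']
    have hτs : (⟨τ, hτ⟩ : alternatingGroup (Fin n)) ∈ Gs s := by
      intro y hy
      have h1 : y ≠ a := fun h => hy (h ▸ a.2)
      have h2 : y ≠ b := fun h => hy (h ▸ b.2)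
      have h3 : y ≠ c := fun h => hy (h ▸ c.2)
      simp [τ, swap_apply_of_ne_of_ne, h1, h2, h3]
    rw [← hf ⟨_, hτs⟩ trivial (Fin.cons a x)]
    congr 1
    funext j
    refine Fin.cases ?_ (fun j => ?_) j
    · apply Subtype.ext
      simp [actS_coe, τ]
    · apply Subtype.ext
      have h1 : (x j : Fin n) ≠ a := fun h => ha j (Subtype.ext h)
      have h2 : (x j : Fin n) ≠ b := fun h => hb j (Subtype.ext h)
      have h3 : (x j : Fin n) ≠ c := fun h => hcx j (Subtype.ext h)
      simp [actS_coe, τ, swap_apply_of_ne_of_ne, h1, h2, h3]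
  choose A hA using hex q (by omega)
  refine ⟨fun x => f (Fin.cons (A x) x : Fin (q + 1) → s), ?_, ?_⟩
  · intro h _ x
    beta_reduce
    rw [← hf h trivial (Fin.cons (A x) x)]
    have : (h • (Fin.cons (A x) x : Fin (q + 1) → s)) = Fin.cons (h • A x) (h • x) := by
      funext j
      refine Fin.cases ?_ (fun j => ?_) j <;> simp
    rw [this]
    apply hind _ _ _ (hA _)
    intro i hi
    exact hA x i (smul_left_cancel h hi)
  · intro x
    obtain ⟨a, ha⟩ := hex (q + 1) (by omega) x
    have h1 := hd (Fin.cons a x)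
    rw [dd_cons] at h1
    rw [sub_eq_zero.1 h1]
    simp only [dd]
    refine Finset.sum_congr rfl fun i _ => ?_
    congr 1
    exact hind _ _ _ (hA _) (fun j => ha _)

lemma van_bridge {k : Type*} [CommRing k] (s : Finset (Fin n)) (q : ℕ)
    (h : Van k (Set.univ : Set (Gs s)) (alternatingGroup (Fin n)) q) :
    Van k (Gs s : Set (alternatingGroup (Fin n))) (alternatingGroup (Fin n)) q := by
  intro f hf hd
  obtain ⟨g, hg1, hg2⟩ := h f (fun h _ y => hf h h.2 y) hd
  exact ⟨g, fun h hh y => hg1 ⟨h, hh⟩ trivial y, hg2⟩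

lemma van_stab {k : Type*} [CommRing k] (s : Finset (Fin n)) (q b : ℕ) (w : Fin b → s)
    (h : Van k (Gs (s \ Finset.univ.image (fun i => (w i : Fin n))) :
      Set (alternatingGroup (Fin n))) (alternatingGroup (Fin n)) q) :
    Van k {h : Gs s | h • w = w} (alternatingGroup (Fin n)) q := by
  intro f hf hd
  obtain ⟨g, hg1, hg2⟩ := h f (fun h hh y => by
    have hs : h ∈ Gs s := fun x hx => hh x (by simp [hx])
    refine hf ⟨h, hs⟩ ?_ y
    show _ = _
    funext i
    apply Subtype.ext
    exact hh (w i) (by simp)) hd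
  refine ⟨g, fun h (hh : h • w = w) y => hg1 h ?_ y, hg2⟩
  intro x hx
  by_cases hxs : x ∈ s
  · simp [hxs] at hx
    obtain ⟨i, rfl⟩ := hx
    exact congrArg Subtype.val (congrFun hh i)
  · exact h.2 x hxs

theorem van_main (p : ℕ) (hp : p.Prime) : ∀ (m : ℕ) (s : Finset (Fin n)), s.card = m →
    ∀ q, 1 ≤ q → q < p - 2 →
      Van (ZMod p) (Gs s : Set (alternatingGroup (Fin n))) (alternatingGroup (Fin n)) q := by
  have : Fact p.Prime := ⟨hp⟩
  intro m
  induction m using Nat.strong_induction_on with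
  | _ m ih =>
  intro s hs q hq1 hq2
  apply van_bridge
  by_cases hm : m < p
  · have hdvd : Nat.card (Gs s) ∣ Nat.card (Perm s) := by
      apply Subgroup.card_dvd_of_injective (MulAction.toPermHom (Gs s) s)
      intro a b hab
      apply Subtype.ext
      apply Subtype.ext
      ext1 x
      by_cases hx : x ∈ s
      · exact congrArg Subtype.val (congrArg (fun e : Perm s => e ⟨x, hx⟩) hab)
      · rw [a.2 x hx, b.2 x hx]
    have hne : (Nat.card (Gs s) : ZMod p) ≠ 0 := by
      intro h0
      rw [ZMod.natCast_eq_zero_iff] at h0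
      have h1 := h0.trans hdvd
      rw [Nat.card_perm, hp.dvd_factorial] at h1
      simp at h1
      omega
    exact van_of_card 1 _ (inv_mul_cancel₀ hne) q
  · have hne : s.Nonempty := by
      rw [← Finset.card_pos]; have := hp.pos; omega
    obtain ⟨x₀, hx₀⟩ := hne
    let c : alternatingGroup (Fin n) → Fin n := fun y =>
      @Classical.epsilon _ ⟨x₀⟩ (fun i => (y : Perm (Fin n)) i ∈ s)
    have hc : ∀ y : alternatingGroup (Fin n), (y : Perm (Fin n)) (c y) ∈ s := fun y =>
      @Classical.epsilon_spec _ (fun i => (y : Perm (Fin n)) i ∈ s)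
        ⟨(y : Perm (Fin n))⁻¹ x₀, by simpa using hx₀⟩
    have hc2 : ∀ (h : Gs s) y, c (h • y) = c y := by
      intro h y
      have : (fun i => ((h • y : alternatingGroup (Fin n)) : Perm (Fin n)) i ∈ s)
          = (fun i => (y : Perm (Fin n)) i ∈ s) := by
        funext i
        exact propext (Gs_map h.2 _)
      simp only [c, this]
    refine van_step (X := s) q (fun y => ⟨(y : Perm (Fin n)) (c y), hc y⟩) ?_ 1 ?_ ?_
    · intro h y
      apply Subtype.ext
      simp only [hc2]
      rfl
    · intro a b ha1 ha2 w
      apply van_stab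
      refine ih _ ?_ _ rfl a ha1 (by omega)
      rw [← hs]
      apply Finset.card_lt_card
      rw [Finset.ssubset_iff_subset_ne]
      refine ⟨Finset.sdiff_subset, fun h => ?_⟩
      have := (Finset.ext_iff.1 h (w 0)).2 (w 0).2
      simp at this
    · exact van_invariants s q (by omega)

end alt

section bridge
variable {k G : Type} [CommRing k] [Group G]

lemma inhom_d {q : ℕ} (F : (Fin (q + 1) → G) → k) (hF : ∀ (h : G) y, F (h • y) = F y)
    (g : Fin (q + 1) → G) :
    (inhomogeneousCochains.d (Rep.trivial k G k) q (fun g => F (Fin.partialProd g)) :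
      (Fin (q + 1) → G) → k) g = dd F (Fin.partialProd g) := by
  rw [inhomogeneousCochains.d_hom_apply]
  rw [show dd F (Fin.partialProd g) = _ from Fin.sum_univ_succ _]
  congr 1
  · simp only [Fin.val_zero, pow_zero, one_mul]
    change F (Fin.partialProd fun i => g i.succ) = _
    rw [← hF (g 0)]
    congr 1
    funext j
    simp only [Pi.smul_apply, smul_eq_mul, Fin.succAbove_zero]
    rw [Fin.partialProd_succ']
    rfl
  · refine Finset.sum_congr rfl fun j _ => ?_
    rw [Fin.partialProd_contractNth]
    rfl

theorem subsingleton_of_van (q : ℕ)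
    (h : Van k (Set.univ : Set G) G (q + 1)) :
    Subsingleton (groupCohomology (Rep.trivial k G k) (q + 1)) := by
  rw [← ModuleCat.isZero_iff_subsingleton]
  unfold groupCohomology
  rw [← HomologicalComplex.exactAt_iff_isZero_homology,
    HomologicalComplex.exactAt_iff' _ q (q + 1) (q + 2) (by simp) (by simp),
    CategoryTheory.ShortComplex.moduleCat_exact_iff]
  intro f hf
  change (Fin (q + 1) → G) → k at f
  have hf' : inhomogeneousCochains.d (Rep.trivial k G k) (q + 1) f = 0 := by
    rw [← groupCohomology.inhomogeneousCochains.d_def]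
    exact hf
  let F : (Fin (q + 2) → G) → k := fun y => f (fun i => (y i.castSucc)⁻¹ * y i.succ)
  have hF : ∀ (h : G) y, F (h • y) = F y := by
    intro h y
    simp only [F]
    congr 1
    funext i
    simp [mul_assoc]
  have hFf : (fun g => F (Fin.partialProd g)) = f := by
    funext g
    simp only [F]
    congr 1
    funext i
    exact Fin.partialProd_right_inv g i
  obtain ⟨u, hu1, hu2⟩ := h F (fun h _ y => hF h y) (by
    intro y
    rw [← Fin.partialProd_left_inv y, dd_smul]
    simp only [hF]
    rw [← inhom_d F hF, hFf, hf']
    rfl)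
  refine ⟨fun g => u (Fin.partialProd g), ?_⟩
  change (groupCohomology.inhomogeneousCochains (Rep.trivial k G k)).d q (q + 1) _ = f
  rw [groupCohomology.inhomogeneousCochains.d_def]
  funext g
  refine (inhom_d u (fun h y => hu1 h trivial y) g).trans ?_
  rw [hu2]
  exact congrFun hFf g

end bridge

end AltCoh

/-- Kleshchev–Nakano, Burichenko.  Let `p` be an odd prime.  The mod `p`
cohomology `H^k(Aₙ, 𝔽_p)` of the alternating group on `n` letters vanishes for
`0 < k < p - 2`. -/
theorem alternatingGroup_cohomology_vanishes (p n : ℕ) (hp : p.Prime) (hodd : Odd p) :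
    ∀ k : ℕ, 0 < k → k < p - 2 →
      Subsingleton (groupCohomology
        (Rep.trivial (ZMod p) (alternatingGroup (Fin n)) (ZMod p)) k) := by
  intro k hk hk2
  obtain ⟨q, rfl⟩ : ∃ q, k = q + 1 := ⟨k - 1, by omega⟩
  apply AltCoh.subsingleton_of_van
  have h := AltCoh.van_main (n := n) p hp _ Finset.univ rfl (q + 1) (by omega) hk2
  have e : ((AltCoh.Gs (Finset.univ : Finset (Fin n))) : Set (alternatingGroup (Fin n)))
      = Set.univ := by
    ext g
    simp [AltCoh.mem_Gs]
  rwa [e] at h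
end

section
/- Let W be an infinite Coxeter group with |S| = n such that every proper standard parabolic subgroup W_T (T ⊊ S) is finite. Then H^*(A_W, Q) ≅ H^*(S^{n-1}, Q); in particular H^{n-1}(A_W, F_p) ≠ 0 for every prime p. -/
/-- The standard parabolic subgroup `W_T` generated by the simple reflections in `T ⊆ S`. -/
def CoxeterSystem.parabolic {B W : Type*} [Group W] {M : CoxeterMatrix B}
    (cs : CoxeterSystem M W) (T : Set B) : Subgroup W :=
  Subgroup.closure (cs.simple '' T)

section CoxPart

open List

variable {B W : Type*} [Group W] {M : CoxeterMatrix B} (cs : CoxeterSystem M W)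

lemma exEnd_one_apply {X : Type*} (x : X) : (1 : Function.End X) x = x := rfl

lemma exEnd_mul_apply {X : Type*} (f g : Function.End X) (x : X) : (f * g) x = f (g x) := rfl

open Classical in
/-- generator action for the exchange condition -/
noncomputable def CoxeterSystem.exEnd (i : B) : Function.End (W × ZMod 2) :=
  fun p => (cs.simple i * p.1 * cs.simple i, p.2 + if p.1 = cs.simple i then 1 else 0)

open Classical in
lemma CoxeterSystem.exEnd_pow (i j : B) (m : ℕ) (t : W) (e : ZMod 2) :
    ((cs.exEnd i * cs.exEnd j) ^ m) (t, e) =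
      ((cs.simple i * cs.simple j) ^ m * t * ((cs.simple i * cs.simple j) ^ m)⁻¹,
        e + ∑ l ∈ Finset.range (2 * m),
          if t = ((cs.simple i * cs.simple j) ^ l)⁻¹ * cs.simple j then 1 else 0) := by
  have hs : ∀ m : ℕ, cs.simple j * (cs.simple i * cs.simple j) ^ m =
      ((cs.simple i * cs.simple j) ^ m)⁻¹ * cs.simple j := by
    intro m
    have h1 := conj_pow (a := cs.simple j) (b := cs.simple i * cs.simple j) (i := m)
    have h2 : cs.simple j * (cs.simple i * cs.simple j) * (cs.simple j)⁻¹ =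
        (cs.simple i * cs.simple j)⁻¹ := by simp [mul_assoc]
    rw [h2, inv_pow] at h1
    rw [h1]
    simp [mul_assoc]
  induction m with
  | zero => simp [exEnd_one_apply]
  | succ m ih =>
    rw [pow_succ', exEnd_mul_apply, ih]
    set a := cs.simple i * cs.simple j with ha
    show cs.exEnd i (cs.exEnd j _) = _
    simp only [CoxeterSystem.exEnd]
    have e1 : (a ^ m * t * (a ^ m)⁻¹ = cs.simple j) ↔ t = (a ^ (2 * m))⁻¹ * cs.simple j := by
      rw [two_mul, pow_add, mul_inv_rev, mul_assoc _ _ (cs.simple j), ← hs]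
      constructor
      · intro h; rw [← h]; group
      · intro h; rw [h]; group
    have e2 : (cs.simple j * (a ^ m * t * (a ^ m)⁻¹) * cs.simple j = cs.simple i) ↔
        t = (a ^ (2 * m + 1))⁻¹ * cs.simple j := by
      have : (a ^ (2 * m + 1))⁻¹ * cs.simple j =
          (a ^ m)⁻¹ * (cs.simple j * cs.simple i * cs.simple j) * a ^ m := by
        have h1 : cs.simple j * cs.simple i * cs.simple j * a ^ m = cs.simple j * a ^ (m + 1) := by
          rw [pow_succ', ha]; simp only [mul_assoc]
        rw [mul_assoc _ _ (a ^ m), h1, hs, ← mul_assoc, ← mul_inv_rev, ← pow_add]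
        congr 3; ring
      rw [this]
      constructor
      · intro h; rw [← h]; simp [mul_assoc]
      · intro h; rw [h]; simp [mul_assoc]
    rw [show 2 * (m + 1) = 2 * m + 1 + 1 by ring, Finset.sum_range_succ, Finset.sum_range_succ]
    simp only [e1, e2]
    refine Prod.ext ?_ ?_
    · simp [ha, pow_succ', mul_assoc]
    · simp [add_assoc]

open Classical in
lemma ex_sum_zero (a b t : W) (m : ℕ) (h : a ^ m = 1) :
    (∑ l ∈ Finset.range (2 * m), if t = (a ^ l)⁻¹ * b then (1 : ZMod 2) else 0) = 0 := by
  rw [two_mul, Finset.sum_range_add]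
  simp only [pow_add, h, one_mul]
  rw [CharTwo.add_self_eq_zero]

lemma CoxeterSystem.exEnd_liftable : M.IsLiftable cs.exEnd := by
  intro i j
  funext ⟨t, e⟩
  rw [cs.exEnd_pow, ex_sum_zero _ _ _ _ (cs.simple_mul_simple_pow i j),
    cs.simple_mul_simple_pow, exEnd_one_apply]
  simp

open Classical in
lemma CoxeterSystem.exLift_word (ω : List B) (t : W) (e : ZMod 2) :
    cs.lift ⟨cs.exEnd, cs.exEnd_liftable⟩ (cs.wordProd ω) (t, e) =
      (cs.wordProd ω * t * (cs.wordProd ω)⁻¹, e + ((cs.rightInvSeq ω).count t : ZMod 2)) := by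
  induction ω with
  | nil => simp [exEnd_one_apply]
  | cons i ω ih =>
    rw [cs.wordProd_cons, map_mul, cs.lift_apply_simple, exEnd_mul_apply, ih]
    simp only [CoxeterSystem.exEnd, CoxeterSystem.rightInvSeq, List.count_cons]
    have : (cs.wordProd ω * t * (cs.wordProd ω)⁻¹ = cs.simple i) ↔
       (((cs.wordProd ω)⁻¹ * cs.simple i * cs.wordProd ω) = t) := by
      constructor
      · intro h; rw [← h]; group
      · intro h; rw [← h]; group
    simp only [this, beq_iff_eq]
    refine Prod.ext ?_ ?_
    · simp [mul_assoc]
    · simp [add_assoc]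

/-- Exchange condition. -/
lemma CoxeterSystem.exchange (ω : List B) (i : B)
    (h : cs.length (cs.wordProd ω * cs.simple i) < cs.length (cs.wordProd ω)) :
    ∃ j < ω.length, cs.wordProd ω * cs.simple i = cs.wordProd (ω.eraseIdx j) := by
  classical
  obtain ⟨ω', hr, hω'⟩ := cs.exists_isReduced (cs.wordProd ω * cs.simple i)
  have hw : cs.wordProd ω = cs.wordProd (ω' ++ [i]) := by
    rw [cs.wordProd_append, ← hω']; simp
  have h1 : cs.simple i ∉ cs.rightInvSeq ω' := by
    intro hm
    have := (cs.isRightInversion_of_mem_rightInvSeq hr hm).2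
    rw [← hω'] at this
    simp at this
    omega
  have e1 := cs.exLift_word ω (cs.simple i) 0
  have e2 := cs.exLift_word (ω' ++ [i]) (cs.simple i) 0
  rw [← hw, e1] at e2
  have e3 := (Prod.ext_iff.1 e2).2
  have e4 : (cs.rightInvSeq (ω' ++ [i])).count (cs.simple i) = 1 := by
    have := cs.rightInvSeq_concat ω' i
    rw [List.concat_eq_append] at this
    rw [this, List.concat_eq_append, List.count_append]
    have : (List.map (MulAut.conj (cs.simple i)) (cs.rightInvSeq ω')).count (cs.simple i) = 0 := by
      rw [List.count_eq_zero]
      intro hm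
      obtain ⟨x, hx, hx'⟩ := List.mem_map.1 hm
      apply h1
      have : x = cs.simple i := by
        apply (MulAut.conj (cs.simple i)).injective
        rw [hx']; simp
      rwa [← this]
    simp [this]
  rw [e4] at e3
  have hmem : cs.simple i ∈ cs.rightInvSeq ω := by
    by_contra hn
    rw [List.count_eq_zero.2 hn] at e3
    simp at e3
  obtain ⟨j, hj, hj'⟩ := List.mem_iff_getElem.mp hmem
  refine ⟨j, by simpa using hj, ?_⟩
  rw [← cs.wordProd_mul_getD_rightInvSeq, List.getD_eq_getElem _ 1 hj, hj']

lemma CoxeterSystem.mem_parabolic_iff (T : Set B) (u : W) :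
    u ∈ cs.parabolic T ↔ ∃ ω : List B, (∀ i ∈ ω, i ∈ T) ∧ u = cs.wordProd ω := by
  constructor
  · intro h
    unfold CoxeterSystem.parabolic at h
    induction h using Subgroup.closure_induction with
    | mem x hx =>
      obtain ⟨i, hi, rfl⟩ := hx
      exact ⟨[i], by simpa using hi, by simp⟩
    | one => exact ⟨[], by simp, by simp⟩
    | mul x y _ _ hx hy =>
      obtain ⟨a, ha, rfl⟩ := hx
      obtain ⟨b, hb, rfl⟩ := hy
      refine ⟨a ++ b, ?_, by rw [cs.wordProd_append]⟩
      intro i hi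
      rcases List.mem_append.1 hi with h | h
      · exact ha i h
      · exact hb i h
    | inv x _ hx =>
      obtain ⟨a, ha, rfl⟩ := hx
      exact ⟨a.reverse, by simpa using ha, by simp⟩
  · rintro ⟨ω, hω, rfl⟩
    induction ω with
    | nil => simp
    | cons i ω ih =>
      rw [cs.wordProd_cons]
      refine mul_mem (Subgroup.subset_closure ⟨i, hω i (by simp), rfl⟩) (ih ?_)
      intro k hk
      exact hω k (by simp [hk])

/-- words in T of minimal length among T-words -/
def CoxeterSystem.TRed (T : Set B) (ω : List B) : Prop :=
  (∀ i ∈ ω, i ∈ T) ∧ ∀ ω' : List B, (∀ i ∈ ω', i ∈ T) → cs.wordProd ω = cs.wordProd ω' →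
    ω.length ≤ ω'.length

lemma CoxeterSystem.exists_TRed (T : Set B) (u : W) (hu : u ∈ cs.parabolic T) :
    ∃ ω, cs.TRed T ω ∧ u = cs.wordProd ω := by
  classical
  have hex : ∃ n, ∃ ω : List B, (∀ i ∈ ω, i ∈ T) ∧ u = cs.wordProd ω ∧ ω.length = n := by
    obtain ⟨ω, h1, h2⟩ := (cs.mem_parabolic_iff T u).1 hu
    exact ⟨_, ω, h1, h2, rfl⟩
  obtain ⟨ω, h1, h2, h3⟩ := Nat.find_spec hex
  refine ⟨ω, ⟨h1, ?_⟩, h2⟩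
  intro ω' h1' h2'
  rw [h3]
  exact Nat.find_min' hex ⟨ω', h1', h2.trans h2', rfl⟩

lemma CoxeterSystem.TRed.append_left {T : Set B} {a b : List B} (h : cs.TRed T (a ++ b)) :
    cs.TRed T a := by
  refine ⟨fun i hi => h.1 i (by simp [hi]), fun c hc hac => ?_⟩
  have := h.2 (c ++ b) (by
    intro i hi
    rcases List.mem_append.1 hi with h' | h'
    · exact hc i h'
    · exact h.1 i (by simp [h'])) (by rw [cs.wordProd_append, cs.wordProd_append, hac])
  simpa using this

lemma CoxeterSystem.length_min_mul (T : Set B) (w : W)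
    (hw : ∀ u ∈ cs.parabolic T, cs.length w ≤ cs.length (w * u)) (ω : List B) :
    cs.TRed T ω → cs.length (w * cs.wordProd ω) = cs.length w + ω.length := by
  induction ω using List.reverseRecOn with
  | nil => simp
  | append_singleton ω i ih =>
    intro hT
    have ih' := ih hT.append_left
    rw [cs.wordProd_append, cs.wordProd_singleton, ← mul_assoc]
    rcases cs.length_mul_simple (w * cs.wordProd ω) i with h | h
    · rw [h, ih']; simp [add_assoc]
    · exfalso
      obtain ⟨α, hα, rfl⟩ := cs.exists_isReduced w
      rw [← cs.wordProd_append] at h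
      obtain ⟨j, hj, hj'⟩ := cs.exchange (α ++ ω) i (by omega)
      rcases lt_or_ge j α.length with hlt | hge
      · rw [List.eraseIdx_append_of_lt_length hlt, cs.wordProd_append, cs.wordProd_append] at hj'
        have := hw (cs.wordProd ω * cs.simple i * (cs.wordProd ω)⁻¹) (by
          have h1 := (cs.mem_parabolic_iff T _).2 ⟨ω, hT.append_left.1, rfl⟩
          have h2 := (cs.mem_parabolic_iff T _).2 ⟨ω ++ [i], hT.1, rfl⟩
          rw [cs.wordProd_append, cs.wordProd_singleton] at h2
          exact mul_mem h2 (inv_mem h1))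
        rw [← mul_assoc, ← mul_assoc, hj', mul_inv_cancel_right] at this
        have h3 := cs.length_wordProd_le (α.eraseIdx j)
        rw [List.length_eraseIdx_of_lt hlt] at h3
        have h4 : cs.length (cs.wordProd α) = α.length := hα
        omega
      · rw [List.eraseIdx_append_of_length_le hge, cs.wordProd_append, cs.wordProd_append,
          mul_assoc, mul_right_inj] at hj'
        have := hT.2 (ω.eraseIdx (j - α.length)) (by
          intro k hk
          exact hT.1 k (by simp [List.mem_of_mem_eraseIdx hk])) (by
            rw [cs.wordProd_append, cs.wordProd_singleton, hj'])
        have h5 := List.length_eraseIdx_le ω (j - α.length)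
        simp at this
        omega

lemma CoxeterSystem.lt_of_no_descent (T : Set B) (w : W)
    (hw : ∀ i ∈ T, ¬ cs.IsRightDescent w i) (u : W) (hu : u ∈ cs.parabolic T) (hu1 : u ≠ 1) :
    cs.length w < cs.length (w * u) := by
  classical
  -- choose a minimal element of the coset
  have hex : ∃ n, ∃ v ∈ cs.parabolic T, cs.length (w * v) = n := ⟨_, 1, one_mem _, rfl⟩
  obtain ⟨v, hv, hvn⟩ := Nat.find_spec hex
  have hmin : ∀ u ∈ cs.parabolic T, cs.length (w * v) ≤ cs.length (w * v * u) := by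
    intro u hu
    rw [hvn]
    exact Nat.find_min' hex ⟨v * u, mul_mem hv hu, by rw [mul_assoc]⟩
  obtain ⟨ω, hω, hvω⟩ := cs.exists_TRed T v⁻¹ (inv_mem hv)
  have hv1 : v = 1 := by
    rcases List.eq_nil_or_concat ω with rfl | ⟨ω', i, rfl⟩
    · simpa using hvω
    · exfalso
      rw [List.concat_eq_append] at hω hvω
      have h1 := cs.length_min_mul T _ hmin _ hω
      have h2 := cs.length_min_mul T _ hmin _ (CoxeterSystem.TRed.append_left cs hω)
      rw [← hvω, mul_inv_cancel_right] at h1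
      rw [cs.wordProd_append, cs.wordProd_singleton] at hvω
      have h3 : w * v * cs.wordProd ω' = w * cs.simple i := by
        have : cs.wordProd ω' = v⁻¹ * cs.simple i := by rw [hvω]; simp
        rw [this]; simp [mul_assoc]
      rw [h3] at h2
      apply hw i (hω.1 i (by simp))
      unfold CoxeterSystem.IsRightDescent
      simp at h1
      omega
  subst hv1
  simp only [mul_one] at hmin
  obtain ⟨ω, hω, rfl⟩ := cs.exists_TRed T u hu
  rw [cs.length_min_mul T w hmin ω hω]
  have : ω ≠ [] := by rintro rfl; simp at hu1
  have := List.length_pos_iff.2 this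
  omega

lemma CoxeterSystem.exists_not_descent [Finite B] [Infinite W] (w : W) :
    ∃ i, ¬ cs.IsRightDescent w i := by
  by_contra! hall
  have key : ∀ ω : List B, cs.IsReduced ω →
      ∃ α : List B, w = cs.wordProd (α ++ ω) ∧ α.length + ω.length = cs.length w := by
    intro ω
    induction ω using List.reverseRecOn with
    | nil =>
      intro _
      obtain ⟨α, hα, h⟩ := cs.exists_isReduced w
      refine ⟨α, by simpa using h, ?_⟩
      rw [h]
      simpa using hα.symm
    | append_singleton ω i ih =>
      intro hr
      have hr' : cs.IsReduced ω := by
        have := hr.take ω.length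
        simpa using this
      obtain ⟨α, hα, hl⟩ := ih hr'
      have hd : cs.length (w * cs.simple i) < cs.length w := hall i
      rw [hα] at hd
      obtain ⟨j, hj, hj'⟩ := cs.exchange (α ++ ω) i hd
      rcases lt_or_ge j α.length with hlt | hge
      · rw [List.eraseIdx_append_of_lt_length hlt] at hj'
        refine ⟨α.eraseIdx j, ?_, ?_⟩
        · rw [← List.append_assoc, cs.wordProd_append _ [i], ← hj', ← hα]
          simp
        · rw [List.length_eraseIdx_of_lt hlt]
          simp
          omega
      · exfalso
        rw [List.eraseIdx_append_of_length_le hge, cs.wordProd_append, cs.wordProd_append,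
          mul_assoc, mul_right_inj] at hj'
        have h1 : cs.length (cs.wordProd (ω ++ [i])) = (ω ++ [i]).length := hr
        rw [cs.wordProd_append, cs.wordProd_singleton, hj'] at h1
        have h2 := cs.length_wordProd_le (ω.eraseIdx (j - α.length))
        have h5 := List.length_eraseIdx_le ω (j - α.length)
        simp at h1
        omega
  have hfin : (Set.univ : Set W).Finite := by
    refine ((List.finite_length_le B (cs.length w)).image cs.wordProd).subset ?_
    intro v _
    obtain ⟨ω, hω, rfl⟩ := cs.exists_isReduced v
    obtain ⟨α, _, h⟩ := key ω hω
    exact ⟨ω, by simp; omega, rfl⟩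
  exact Set.infinite_univ hfin

end CoxPart
set_option linter.unusedSectionVars false
set_option linter.unusedVariables false

section ShellPart

/-- Abstract shelling data. -/
structure ShellSys (X B : Type*) where
  proj : X → Finset B → X
  len : X → ℕ
  D : X → Finset B
  t : X → B
  t_notMem : ∀ x, t x ∉ D x
  proj_eq : ∀ x T, (∀ i ∈ T, i ∉ D x) → proj x T = x
  disj : ∀ x T, ∀ i ∈ T, i ∉ D (proj x T)
  proj_lt : ∀ x T, ∀ i ∈ T, i ∈ D x → len (proj x T) < len x
  proj_proj : ∀ x T T', T ⊆ T' → proj (proj x T) T' = proj x T'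

variable {X B k : Type*} [Fintype B] [LinearOrder B] [CommRing k]

/-- incidence sign -/
def kEps (k : Type*) [CommRing k] (s : B) (T : Finset B) : k := (-1) ^ (T.filter (· < s)).card

lemma kEps_sq (s : B) (T : Finset B) : kEps k s T * kEps k s T = 1 := by
  unfold kEps
  rw [← mul_pow]; simp

lemma kEps_insert (s s' : B) (T : Finset B) (hs : s ∉ T) :
    kEps k s' (insert s T) = kEps k s' T * (if s < s' then -1 else 1) := by
  unfold kEps
  rw [Finset.filter_insert]
  split_ifs with h
  · rw [Finset.card_insert_of_notMem (by simp [hs]), pow_succ]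
  · simp

lemma kEps_anti (s s' : B) (T : Finset B) (hs : s ∉ T) (hs' : s' ∉ T) (hne : s ≠ s') :
    kEps k s T * kEps k s' (insert s T) + kEps k s' T * kEps k s (insert s' T) = 0 := by
  rw [kEps_insert s s' T hs, kEps_insert s' s T hs']
  rcases lt_or_gt_of_ne hne with h | h
  · rw [if_pos h, if_neg h.asymm]; ring
  · rw [if_neg h.asymm, if_pos h]; ring

/-- The coboundary. -/
def kDelta : (X → Finset B → k) →ₗ[k] (X → Finset B → k) where
  toFun f x T := ∑ s ∈ Tᶜ, kEps k s T * f x (insert s T)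
  map_add' f g := by
    funext x T
    simp [mul_add, Finset.sum_add_distrib]
  map_smul' a f := by
    funext x T
    simp only [Pi.smul_apply, smul_eq_mul, RingHom.id_apply, Finset.mul_sum]
    exact Finset.sum_congr rfl fun s _ => by ring

lemma kDelta_apply (f : X → Finset B → k) (x : X) (T : Finset B) :
    kDelta f x T = ∑ s ∈ Tᶜ, kEps k s T * f x (insert s T) := rfl

lemma kDelta_kDelta (f : X → Finset B → k) : kDelta (kDelta f) = 0 := by
  funext x T
  simp only [kDelta_apply, Pi.zero_apply, Finset.mul_sum]
  rw [Finset.sum_sigma']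
  refine Finset.sum_involution (fun p _ => ⟨p.2, p.1⟩) ?_ ?_ ?_ ?_
  · rintro ⟨s, s'⟩ h
    simp only [Finset.mem_sigma, Finset.mem_compl, Finset.mem_insert, not_or] at h
    have := kEps_anti (k := k) s s' T h.1 h.2.2 (Ne.symm h.2.1)
    simp only
    rw [Finset.insert_comm s' s T, ← mul_assoc, ← mul_assoc, ← add_mul, this, zero_mul]
  · rintro ⟨s, s'⟩ h _ heq
    simp only [Finset.mem_sigma, Finset.mem_compl, Finset.mem_insert, not_or] at h
    simp only [Sigma.mk.injEq, heq_eq_eq] at heq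
    exact h.2.1 heq.1
  · rintro ⟨s, s'⟩ h
    simp only [Finset.mem_sigma, Finset.mem_compl, Finset.mem_insert, not_or] at h ⊢
    exact ⟨h.2.2, Ne.symm h.2.1, h.1⟩
  · rintro ⟨s, s'⟩ h
    rfl

/-- truncation to a single cardinality -/
def kTrunc (c : ℕ) (f : X → Finset B → k) : X → Finset B → k :=
  fun x T => if T.card = c then f x T else 0

lemma kDelta_trunc (c : ℕ) (f : X → Finset B → k) :
    kDelta (kTrunc (c + 1) f) = kTrunc c (kDelta f) := by
  funext x T
  unfold kTrunc
  rw [kDelta_apply]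
  split_ifs with h
  · rw [kDelta_apply]
    refine Finset.sum_congr rfl fun s hs => ?_
    rw [Finset.card_insert_of_notMem (by simpa using hs), if_pos (by omega)]
  · refine Finset.sum_eq_zero fun s hs => ?_
    rw [Finset.card_insert_of_notMem (by simpa using hs), if_neg (by omega), mul_zero]

variable (S : ShellSys X B)

/-- invariance -/
def ShellSys.Inv (f : X → Finset B → k) : Prop := ∀ x T, f (S.proj x T) T = f x T

lemma ShellSys.Inv.delta {f : X → Finset B → k} (hf : S.Inv f) : S.Inv (kDelta f) := by
  intro x T
  rw [kDelta_apply, kDelta_apply]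
  refine Finset.sum_congr rfl fun s _ => ?_
  rw [← hf (S.proj x T), S.proj_proj _ _ _ (Finset.subset_insert s T), hf]

/-- recursive primitive -/
noncomputable def ShellSys.prim (g : X → Finset B → k) (x : X) (U : Finset B) : k :=
  if h : ∃ i ∈ U, i ∈ S.D x then
    prim g (S.proj x U) U
  else if S.t x ∈ U then
    kEps k (S.t x) (U.erase (S.t x)) * (g x (U.erase (S.t x)) -
      ∑ s ∈ (S.D x).attach, kEps k s.1 (U.erase (S.t x)) *
        prim g (S.proj x (insert s.1 (U.erase (S.t x)))) (insert s.1 (U.erase (S.t x))))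
  else 0
termination_by S.len x
decreasing_by
  · obtain ⟨i, h1, h2⟩ := h
    exact S.proj_lt x U i h1 h2
  · exact S.proj_lt x _ s.1 (by simp) s.2

lemma ShellSys.prim_inv (g : X → Finset B → k) : S.Inv (S.prim g) := by
  intro x U
  by_cases h : ∃ i ∈ U, i ∈ S.D x
  · conv_rhs => rw [ShellSys.prim]
    rw [dif_pos h]
  · rw [S.proj_eq x U (by push Not at h; exact h)]

lemma ShellSys.delta_prim_aux (g : X → Finset B → k) (x : X) (T : Finset B)
    (hT : ∀ i ∈ T, i ∉ S.D x) (ht : S.t x ∉ T) :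
    kDelta (S.prim g) x T = g x T := by
  rw [kDelta_apply]
  have hDT : S.D x ⊆ (Tᶜ).erase (S.t x) := by
    intro i hi
    rw [Finset.mem_erase]
    refine ⟨?_, ?_⟩
    · rintro rfl; exact S.t_notMem x hi
    · rw [Finset.mem_compl]; intro h; exact hT i h hi
  rw [← Finset.add_sum_erase _ _ (Finset.mem_compl.2 ht)]
  have h1 : ∑ s ∈ (Tᶜ).erase (S.t x), kEps k s T * S.prim g x (insert s T) =
      ∑ s ∈ S.D x, kEps k s T * S.prim g x (insert s T) := by
    symm
    refine Finset.sum_subset hDT ?_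
    intro s hs hsD
    rw [Finset.mem_erase] at hs
    rw [ShellSys.prim, dif_neg, if_neg, mul_zero]
    · rw [Finset.mem_insert, not_or]; exact ⟨Ne.symm hs.1, ht⟩
    · rintro ⟨i, hi, hi'⟩
      rcases Finset.mem_insert.1 hi with rfl | hi
      · exact hsD hi'
      · exact hT i hi hi'
  rw [h1, ShellSys.prim, dif_neg, if_pos (Finset.mem_insert_self _ _),
    Finset.erase_insert ht, ← mul_assoc, kEps_sq, one_mul,
    Finset.sum_attach (S.D x) (fun s => kEps k s T *
        S.prim g (S.proj x (insert s T)) (insert s T))]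
  · rw [sub_add_eq_add_sub, add_sub_assoc, ← Finset.sum_sub_distrib]
    rw [Finset.sum_eq_zero, add_zero]
    intro s _
    rw [S.prim_inv, sub_self]
  · rintro ⟨i, hi, hi'⟩
    rcases Finset.mem_insert.1 hi with rfl | hi
    · exact S.t_notMem x hi'
    · exact hT i hi hi'

lemma ShellSys.delta_prim (g : X → Finset B → k) (hg : S.Inv g) (hg0 : kDelta g = 0) :
    kDelta (S.prim g) = g := by
  suffices H : ∀ n x T, S.len x = n → kDelta (S.prim g) x T = g x T by
    funext x T; exact H _ x T rfl
  intro n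
  induction n using Nat.strong_induction_on with
  | _ n ih =>
    intro x T hn
    have hI := (S.prim_inv g).delta
    by_cases hT : ∃ i ∈ T, i ∈ S.D x
    · obtain ⟨i, h1, h2⟩ := hT
      rw [← hI, ← hg]
      exact ih _ (hn ▸ S.proj_lt x T i h1 h2) _ _ rfl
    · push Not at hT
      by_cases ht : S.t x ∈ T
      · set h := g - kDelta (S.prim g) with hh
        have hd : kDelta h = 0 := by rw [hh, map_sub, hg0, kDelta_kDelta, sub_zero]
        have h2 := congrFun (congrFun hd x) (T.erase (S.t x))
        rw [kDelta_apply, ← Finset.add_sum_erase _ _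
          (show S.t x ∈ (T.erase (S.t x))ᶜ by simp), Finset.insert_erase ht,
          Finset.sum_eq_zero, add_zero] at h2
        · have h3 : kEps k (S.t x) (T.erase (S.t x)) * (kEps k (S.t x) (T.erase (S.t x)) * h x T)
            = 0 := by rw [h2]; simp
          rw [← mul_assoc, kEps_sq, one_mul] at h3
          simp only [hh, Pi.sub_apply, sub_eq_zero] at h3
          exact h3.symm
        · intro s hs
          rw [Finset.mem_erase] at hs
          have : h x (insert s (T.erase (S.t x))) = 0 := by
            simp only [hh, Pi.sub_apply, sub_eq_zero]
            symm
            by_cases hsD : s ∈ S.D x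
            · rw [← hI, ← hg]
              exact ih _ (hn ▸ S.proj_lt x _ s (by simp) hsD) _ _ rfl
            · apply S.delta_prim_aux
              · intro i hi
                rcases Finset.mem_insert.1 hi with rfl | hi
                · exact hsD
                · exact hT i (Finset.mem_of_mem_erase hi)
              · simp [hs.1.symm]
          rw [this, mul_zero]
      · exact S.delta_prim_aux g x T hT ht

lemma ShellSys.exact (c : ℕ) (g : X → Finset B → k) (hg : S.Inv g) (hg0 : kDelta g = 0)
    (hgc : ∀ x T, T.card ≠ c → g x T = 0) :
    ∃ f : X → Finset B → k, S.Inv f ∧ (∀ x T, T.card ≠ c + 1 → f x T = 0) ∧ kDelta f = g := by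
  refine ⟨kTrunc (c + 1) (S.prim g), ?_, ?_, ?_⟩
  · intro x T
    simp only [kTrunc, S.prim_inv g x T]
  · intro x T h
    simp [kTrunc, h]
  · rw [kDelta_trunc, S.delta_prim g hg hg0]
    funext x T
    simp only [kTrunc]
    split_ifs with h
    · rfl
    · exact (hgc x T h).symm

/-- the one-chamber system -/
def ShellSys.point (b : B) : ShellSys Unit B where
  proj x _ := x
  len _ := 0
  D _ := ∅
  t _ := b
  t_notMem _ := by simp
  proj_eq _ _ _ := rfl
  disj _ _ _ _ := by simp
  proj_lt _ _ _ _ h := by simp at h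
  proj_proj _ _ _ _ := rfl

end ShellPart

section CoxShell

variable {B W : Type*} [Group W] {M : CoxeterMatrix B} (cs : CoxeterSystem M W)

lemma CoxeterSystem.exists_minRep (T : Finset B) (q : W ⧸ cs.parabolic (T : Set B)) :
    ∃ w : W, (QuotientGroup.mk w = q) ∧ ∀ v : W, QuotientGroup.mk v = q →
      cs.length w ≤ cs.length v := by
  classical
  have hex : ∃ n, ∃ w : W, (QuotientGroup.mk w = q) ∧ cs.length w = n := by
    obtain ⟨w, hw⟩ := QuotientGroup.mk_surjective q
    exact ⟨_, w, hw, rfl⟩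
  obtain ⟨w, h1, h2⟩ := Nat.find_spec hex
  exact ⟨w, h1, fun v hv => h2 ▸ Nat.find_min' hex ⟨v, hv, rfl⟩⟩

/-- minimal representative of the coset -/
noncomputable def CoxeterSystem.minRep (w : W) (T : Finset B) : W :=
  (cs.exists_minRep T (QuotientGroup.mk w)).choose

lemma CoxeterSystem.minRep_mk (w : W) (T : Finset B) :
    (QuotientGroup.mk (cs.minRep w T) : W ⧸ cs.parabolic (T : Set B)) = QuotientGroup.mk w :=
  (cs.exists_minRep T (QuotientGroup.mk w)).choose_spec.1

lemma CoxeterSystem.minRep_le (w : W) (T : Finset B) (v : W)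
    (hv : (QuotientGroup.mk v : W ⧸ cs.parabolic (T : Set B)) = QuotientGroup.mk w) :
    cs.length (cs.minRep w T) ≤ cs.length v :=
  (cs.exists_minRep T (QuotientGroup.mk w)).choose_spec.2 v hv

lemma CoxeterSystem.minRep_congr (w v : W) (T : Finset B)
    (hv : (QuotientGroup.mk v : W ⧸ cs.parabolic (T : Set B)) = QuotientGroup.mk w) :
    cs.minRep v T = cs.minRep w T := by
  unfold CoxeterSystem.minRep
  simp only [hv]

lemma CoxeterSystem.parabolic_mono {T T' : Set B} (h : T ⊆ T') :
    cs.parabolic T ≤ cs.parabolic T' :=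
  Subgroup.closure_mono (Set.image_mono h)

lemma CoxeterSystem.simple_mem_parabolic {T : Set B} {i : B} (h : i ∈ T) :
    cs.simple i ∈ cs.parabolic T :=
  Subgroup.subset_closure ⟨i, h, rfl⟩

open Classical in
/-- the shelling of the Coxeter complex -/
noncomputable def CoxeterSystem.shell [Fintype B] [Infinite W] : ShellSys W B where
  proj := cs.minRep
  len := cs.length
  D w := Finset.univ.filter (fun i => cs.IsRightDescent w i)
  t w := (cs.exists_not_descent w).choose
  t_notMem w := by
    have := (cs.exists_not_descent w).choose_spec
    simpa using this
  proj_eq w T h := by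
    by_contra hne
    have hmk := cs.minRep_mk w T
    rw [eq_comm, QuotientGroup.eq] at hmk
    have := cs.lt_of_no_descent (T : Set B) w (by
      intro i hi
      simpa using h i (by simpa using hi)) _ hmk (by
        intro h1
        rw [inv_mul_eq_one] at h1
        exact hne h1.symm)
    rw [mul_inv_cancel_left] at this
    exact absurd (cs.minRep_le w T w rfl) (not_le.2 this)
  disj w T i hi := by
    simp only [Finset.mem_filter, Finset.mem_univ, true_and]
    intro hd
    have := cs.minRep_le w T (cs.minRep w T * cs.simple i) (by
      rw [← cs.minRep_mk w T, eq_comm, QuotientGroup.eq]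
      simpa using cs.simple_mem_parabolic (T := (T : Set B)) (by simpa using hi))
    exact absurd this (not_le.2 hd)
  proj_lt w T i hi hd := by
    simp only [Finset.mem_filter, Finset.mem_univ, true_and] at hd
    refine lt_of_le_of_lt (cs.minRep_le w T (w * cs.simple i) ?_) hd
    rw [eq_comm, QuotientGroup.eq]
    simpa using cs.simple_mem_parabolic (T := (T : Set B)) (by simpa using hi)
  proj_proj w T T' h := by
    apply cs.minRep_congr
    have := cs.minRep_mk w T
    rw [QuotientGroup.eq] at this ⊢
    exact cs.parabolic_mono (by exact_mod_cast h) this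

lemma CoxeterSystem.shell_inv_iff [Fintype B] [Infinite W] {k : Type*} [CommRing k]
    (f : W → Finset B → k) :
    cs.shell.Inv f ↔ ∀ (w : W) (T : Finset B), ∀ u ∈ cs.parabolic (T : Set B), f (w * u) T = f w T := by
  constructor
  · intro h w T u hu
    rw [← h w T, ← h (w * u) T]
    congr 1
    apply cs.minRep_congr
    rw [eq_comm, QuotientGroup.eq]
    simpa using hu
  · intro h w T
    have := cs.minRep_mk w T
    rw [eq_comm, QuotientGroup.eq] at this
    have h2 := h w T _ this
    rw [mul_inv_cancel_left] at h2
    exact h2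

lemma CoxeterSystem.two_le_card {B W : Type*} [Group W] {M : CoxeterMatrix B}
    (cs : CoxeterSystem M W) [Fintype B] [Infinite W] : 2 ≤ Fintype.card B := by
  obtain ⟨i, hi⟩ := cs.exists_not_descent 1
  obtain ⟨j, hj⟩ := cs.exists_not_descent (cs.simple i)
  have : i ≠ j := by
    rintro rfl
    apply hj
    simp [CoxeterSystem.IsRightDescent]
  have : Nontrivial B := ⟨i, j, this⟩
  exact Fintype.one_lt_card

end CoxShell
section GCohom

open CategoryTheory groupCohomology

variable {k G : Type} [CommRing k] [Group G]

/-- The map on cohomology. -/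
noncomputable abbrev gMap {A B : Rep k G} (f : A ⟶ B) (i : ℕ) :
    groupCohomology A i →ₗ[k] groupCohomology B i :=
  (groupCohomology.map (MonoidHom.id G) f i).hom

lemma gMap_comp {A B C : Rep k G} (f : A ⟶ B) (g : B ⟶ C) (i : ℕ) (x : groupCohomology A i) :
    gMap g i (gMap f i x) = gMap (f ≫ g) i x := by
  simp [gMap, map_id_comp]

lemma gMap_id {A : Rep k G} (i : ℕ) (x : groupCohomology A i) : gMap (𝟙 A) i x = x := by
  simp [gMap, groupCohomology.map_id]

lemma gc_exists {A : Rep k G} {i : ℕ} (x : groupCohomology A i) :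
    ∃ (z : (Fin i → G) → A) (hz : inhomogeneousCochains.d A i z = 0),
      x = π A i (cocyclesMk z hz) := by
  induction x using groupCohomology_induction_on with
  | h x =>
    have h0 : inhomogeneousCochains.d A i (iCocycles A i x) = 0 := by
      have := (inhomogeneousCochains A).iCycles_d i (i+1)
      rw [inhomogeneousCochains.d_def] at this
      have := congr($this x)
      simpa using this
    refine ⟨iCocycles A i x, h0, ?_⟩
    congr 1
    apply (ModuleCat.mono_iff_injective (iCocycles A i)).1 inferInstance
    exact (iCocycles_mk _ h0).symm

lemma gc_eq_zero_of {A : Rep k G} {i : ℕ} (z : (Fin (i+1) → G) → A)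
    (hz : inhomogeneousCochains.d A (i+1) z = 0) (b : (Fin i → G) → A)
    (hb : inhomogeneousCochains.d A i b = z) : π A (i+1) (cocyclesMk z hz) = 0 := by
  have h1 : toCocycles A i (i+1) b = cocyclesMk z hz := by
    apply (ModuleCat.mono_iff_injective (iCocycles A (i+1))).1 inferInstance
    rw [iCocycles_mk]
    have := (inhomogeneousCochains A).toCycles_i i (i+1)
    rw [inhomogeneousCochains.d_def] at this
    have := congr($this b)
    exact this.trans hb
  rw [← h1]
  have := (inhomogeneousCochains A).toCycles_comp_homologyπ i (i+1)
  exact congr($this b)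

lemma gMap_smul_of {A : Rep k G} (f : A ⟶ A) (c : k) (hf : ∀ v, f.hom v = c • v) (i : ℕ)
    (x : groupCohomology A i) : gMap f i x = c • x := by
  induction x using groupCohomology_induction_on with
  | h x =>
    have h1 := congr($(groupCohomology.π_map (MonoidHom.id G) f i) x)
    have h2 : cocyclesMap (MonoidHom.id G) f i x = c • x := by
      apply (ModuleCat.mono_iff_injective (iCocycles A i)).1 inferInstance
      have := congr($(HomologicalComplex.cyclesMap_i (cochainsMap (MonoidHom.id G) f) i) x)
      refine this.trans ?_
      ext g
      simp [cochainsMap_id_f_hom_eq_compLeft, hf]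
    refine h1.trans ?_
    change π A i (cocyclesMap (MonoidHom.id G) f i x) = _
    rw [h2]; simp

/-- The long exact sequence, in elementwise form. -/
lemma gc_les {A B C : Rep k G} (f : A ⟶ B) (g : B ⟶ C) (hf : Function.Injective f.hom)
    (hg : Function.Surjective g.hom) (hfg : ∀ b, g.hom b = 0 ↔ ∃ a, f.hom a = b) (i : ℕ) :
    ∃ D : groupCohomology C i →ₗ[k] groupCohomology A (i+1),
      (∀ x, D x = 0 ↔ ∃ y, gMap g i y = x) ∧
      (∀ y, gMap f (i+1) y = 0 ↔ ∃ x, D x = y) := by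
  have w : f ≫ g = 0 := by
    ext a
    exact (hfg _).2 ⟨a, rfl⟩
  let X : ShortComplex (Rep k G) := ShortComplex.mk f g w
  have hX : X.ShortExact := by
    have e : X.Exact := by
      have : (X.map (forget₂ (Rep k G) (ModuleCat k))).Exact := by
        rw [ShortComplex.moduleCat_exact_iff]
        intro b hb
        exact (hfg b).1 hb
      exact (ShortComplex.exact_map_iff_of_faithful X (forget₂ (Rep k G) (ModuleCat k))).1 this
    exact { exact := e, mono_f := (Rep.mono_iff_injective f).2 hf, epi_g := (Rep.epi_iff_surjective g).2 hg }
  refine ⟨(groupCohomology.δ hX i (i+1) rfl).hom, fun x => ⟨fun h => ?_, ?_⟩, fun y => ⟨fun h => ?_, ?_⟩⟩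
  · exact (ShortComplex.moduleCat_exact_iff _).1 (mapShortComplex₃_exact hX (i := i) rfl) x h
  · rintro ⟨y, rfl⟩
    exact congr($((mapShortComplex₃ hX (i := i) rfl).zero) y)
  · exact (ShortComplex.moduleCat_exact_iff _).1 (mapShortComplex₁_exact hX (i := i) rfl) y h
  · rintro ⟨y, rfl⟩
    exact congr($((mapShortComplex₁ hX (i := i) rfl).zero) y)

end GCohom
section FRepPart

open CategoryTheory groupCohomology

variable (k : Type) {W : Type} [CommRing k] [Group W] (H : Subgroup W) (V : Type) [AddCommGroup V]
  [Module k V]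

/-- Functions on `W`, with left translation by `H`. -/
def fRepr : Representation k H (W → V) where
  toFun h :=
    { toFun := fun f x => f ((h : W)⁻¹ * x)
      map_add' := fun _ _ => rfl
      map_smul' := fun _ _ => rfl }
  map_one' := by
    ext f x
    simp
  map_mul' a b := by
    ext f x
    simp [mul_assoc]

lemma fRepr_apply (h : H) (f : W → V) (x : W) : fRepr k H V h f x = f ((h : W)⁻¹ * x) := rfl

lemma contractNth_zero_cons {G : Type} [Group G] {i : ℕ} (h : G) (g : Fin (i+1) → G) :
    Fin.contractNth 0 (· * ·) (Fin.cons h g : Fin (i+2) → G) =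
      Fin.cons (h * g 0) (fun j => g j.succ) := by
  funext j
  refine Fin.cases ?_ (fun j => ?_) j
  · simp [Fin.contractNth]
  · simp [Fin.contractNth]

lemma contractNth_succ_cons {G : Type} [Group G] {i : ℕ} (j : Fin (i+1)) (h : G)
    (g : Fin (i+1) → G) :
    Fin.contractNth j.succ (· * ·) (Fin.cons h g : Fin (i+2) → G) =
      Fin.cons h (Fin.contractNth j (· * ·) g) := by
  funext l
  refine Fin.cases ?_ (fun l => ?_) l
  · simp [Fin.contractNth]
  · simp [Fin.contractNth]

lemma fRepr_acyclic (r : W → H) (hr : ∀ (h : H) (x : W), r ((h : W) * x) = h * r x) (i : ℕ)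
    (x : groupCohomology (Rep.of (fRepr k H V)) (i+1)) : x = 0 := by
  obtain ⟨z, hz, rfl⟩ := gc_exists x
  refine gc_eq_zero_of z hz
    (fun g x => z (Fin.cons (r x)⁻¹ g) (((r x)⁻¹ : H) * x)) ?_
  funext g
  funext x
  have h1 := congrFun (congrFun hz (Fin.cons (r x)⁻¹ g)) (((r x)⁻¹ : H) * x)
  rw [inhomogeneousCochains.d_hom_apply] at h1
  rw [inhomogeneousCochains.d_hom_apply]
  rw [Fin.sum_univ_succ] at h1
  simp only [contractNth_succ_cons, contractNth_zero_cons, Pi.add_apply, Finset.sum_apply,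
    Pi.smul_apply, fRepr_apply, Fin.cons_zero, Fin.cons_succ] at h1 ⊢
  have e : r ((g 0 : W)⁻¹ * x) = (g 0)⁻¹ * r x := by
    have := hr (g 0)⁻¹ x
    simpa using this
  rw [e]
  simp only [mul_inv_rev, inv_inv, Subgroup.coe_mul, Subgroup.coe_inv] at h1 ⊢
  simp only [mul_assoc, mul_inv_cancel_left] at h1 ⊢
  simp only [Fin.val_zero, Fin.val_succ, zero_add, pow_one, pow_succ (-1 : k) (_ + 1), mul_neg,
    mul_one, neg_smul, one_smul, Finset.sum_neg_distrib] at h1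
  have h2 : z g x = z (Fin.cons ((r x)⁻¹ * g 0) fun j => g j.succ) ((r x : W)⁻¹ * x) +
      ∑ j : Fin (i+1), (-1 : k) ^ ((j : ℕ) + 1) •
        z (Fin.cons (r x)⁻¹ (Fin.contractNth j (· * ·) g)) ((r x : W)⁻¹ * x) := by
    rw [← sub_eq_zero]
    refine Eq.trans ?_ h1
    abel
  exact h2.symm

end FRepPart
section SubRepPart

open CategoryTheory groupCohomology

lemma exists_equivariant {W : Type} [Group W] (H : Subgroup W) :
    ∃ r : W → H, ∀ (h : H) (x : W), r ((h : W) * x) = h * r x := by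
  let q : W → Quotient (QuotientGroup.rightRel H) := fun x => Quotient.mk _ x
  have hq : ∀ x, x * (q x).out⁻¹ ∈ H := by
    intro x
    have : (QuotientGroup.rightRel H) (q x).out x := Quotient.exact (Quotient.out_eq (q x))
    rwa [QuotientGroup.rightRel_apply] at this
  refine ⟨fun x => ⟨x * (q x).out⁻¹, hq x⟩, fun h x => ?_⟩
  have : q (h * x) = q x := by
    apply Quotient.sound
    change (QuotientGroup.rightRel H) _ _
    rw [QuotientGroup.rightRel_apply]
    have : x * (h * x)⁻¹ = ((h⁻¹ : H) : W) := by simp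
    rw [this]
    exact (h⁻¹).2
  ext
  simp [this, mul_assoc]

variable {k G V : Type} [CommRing k] [Group G] [AddCommGroup V] [Module k V]

/-- A stable submodule, as a representation. -/
def subRepr (ρ : Representation k G V) (P : Submodule k V) (hP : ∀ g, ∀ v ∈ P, ρ g v ∈ P) :
    Representation k G P where
  toFun g := (ρ g).restrict (hP g)
  map_one' := by ext; simp
  map_mul' x y := by ext; simp

lemma subRepr_coe (ρ : Representation k G V) (P : Submodule k V) (hP : ∀ g, ∀ v ∈ P, ρ g v ∈ P)
    (g : G) (v : P) : ((subRepr ρ P hP g v : P) : V) = ρ g v := rfl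

/-- An intertwining endomorphism restricted to stable submodules. -/
def subHom (ρ : Representation k G V) (P Q : Submodule k V) (hP : ∀ g, ∀ v ∈ P, ρ g v ∈ P)
    (hQ : ∀ g, ∀ v ∈ Q, ρ g v ∈ Q) (φ : V →ₗ[k] V) (hφ : ∀ g v, φ (ρ g v) = ρ g (φ v))
    (hPQ : ∀ v ∈ P, φ v ∈ Q) : Rep.of (subRepr ρ P hP) ⟶ Rep.of (subRepr ρ Q hQ) :=
  Rep.ofHom (LinearMap.intertwiningMap_of_isIntertwiningMap _ _ (φ.restrict hPQ)
    (fun g v => Subtype.ext (hφ g v)))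

lemma subHom_coe (ρ : Representation k G V) (P Q : Submodule k V) (hP : ∀ g, ∀ v ∈ P, ρ g v ∈ P)
    (hQ : ∀ g, ∀ v ∈ Q, ρ g v ∈ Q) (φ : V →ₗ[k] V) (hφ : ∀ g v, φ (ρ g v) = ρ g (φ v))
    (hPQ : ∀ v ∈ P, φ v ∈ Q) (v : P) :
    (((subHom ρ P Q hP hQ φ hφ hPQ).hom v : Q) : V) = φ v := rfl

end SubRepPart

section EZ

open CategoryTheory groupCohomology

variable {B W : Type} [Fintype B] [LinearOrder B] [Group W] [Infinite W] {M : CoxeterMatrix B}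
  (cs : CoxeterSystem M W) (k : Type) [CommRing k] (H : Subgroup W)

/-- Invariant cochains of degree `c`. -/
def CoxeterSystem.eSub (c : ℕ) : Submodule k (W → Finset B → k) where
  carrier := {f | (∀ (w : W) (T : Finset B), ∀ u ∈ cs.parabolic (T : Set B), f (w * u) T = f w T) ∧
    ∀ x T, T.card ≠ c → f x T = 0}
  zero_mem' := ⟨fun _ _ _ _ => rfl, fun _ _ _ => rfl⟩
  add_mem' := fun {a b} ha hb => ⟨fun w T u hu => by simp [ha.1 w T u hu, hb.1 w T u hu],
    fun x T h => by simp [ha.2 x T h, hb.2 x T h]⟩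
  smul_mem' := fun r {a} ha => ⟨fun w T u hu => by simp [ha.1 w T u hu],
    fun x T h => by simp [ha.2 x T h]⟩

lemma CoxeterSystem.mem_eSub (c : ℕ) (f : W → Finset B → k) : f ∈ cs.eSub k c ↔
    (∀ (w : W) (T : Finset B), ∀ u ∈ cs.parabolic (T : Set B), f (w * u) T = f w T) ∧
    ∀ x T, T.card ≠ c → f x T = 0 := Iff.rfl

/-- Invariant cocycles of degree `c`. -/
def CoxeterSystem.zSub (c : ℕ) : Submodule k (W → Finset B → k) :=
  cs.eSub k c ⊓ LinearMap.ker kDelta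

lemma CoxeterSystem.eSub_stable (c : ℕ) (h : H) (f) (hf : f ∈ cs.eSub k c) :
    fRepr k H (Finset B → k) h f ∈ cs.eSub k c := by
  refine ⟨fun w T u hu => ?_, fun x T hT => ?_⟩
  · rw [fRepr_apply, fRepr_apply, ← mul_assoc, hf.1 _ _ u hu]
  · rw [fRepr_apply, hf.2 _ _ hT]

lemma kDelta_fRepr (h : H) (f : W → Finset B → k) :
    kDelta (fRepr k H (Finset B → k) h f) = fRepr k H (Finset B → k) h (kDelta f) := by
  funext x T
  rw [fRepr_apply, kDelta_apply, kDelta_apply]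
  rfl

lemma CoxeterSystem.zSub_stable (c : ℕ) (h : H) (f) (hf : f ∈ cs.zSub k c) :
    fRepr k H (Finset B → k) h f ∈ cs.zSub k c := by
  refine ⟨cs.eSub_stable k H c h f hf.1, ?_⟩
  have : kDelta f = 0 := hf.2
  rw [SetLike.mem_coe, LinearMap.mem_ker, kDelta_fRepr, this, map_zero]

/-- The representation of invariant cochains. -/
abbrev CoxeterSystem.eRep (c : ℕ) : Rep k H :=
  Rep.of (subRepr (fRepr k H (Finset B → k)) (cs.eSub k c) (cs.eSub_stable k H c))

/-- The representation of invariant cocycles. -/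
abbrev CoxeterSystem.zRep (c : ℕ) : Rep k H :=
  Rep.of (subRepr (fRepr k H (Finset B → k)) (cs.zSub k c) (cs.zSub_stable k H c))

/-- Inclusion. -/
def CoxeterSystem.zIncl (c : ℕ) : cs.zRep k H c ⟶ cs.eRep k H c :=
  subHom _ _ _ _ _ LinearMap.id (fun _ _ => rfl) (fun _ h => h.1)

lemma CoxeterSystem.delta_mem (c : ℕ) (f) (hf : f ∈ cs.eSub k (c+1)) : kDelta f ∈ cs.zSub k c := by
  refine ⟨⟨?_, fun x T hT => ?_⟩, ?_⟩
  · have h1 : cs.shell.Inv f := (cs.shell_inv_iff f).2 hf.1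
    exact (cs.shell_inv_iff _).1 h1.delta
  · rw [kDelta_apply]
    refine Finset.sum_eq_zero fun s hs => ?_
    rw [hf.2, mul_zero]
    rw [Finset.card_insert_of_notMem (by simpa using hs)]
    omega
  · rw [SetLike.mem_coe, LinearMap.mem_ker, kDelta_kDelta]

/-- The differential. -/
def CoxeterSystem.dHom (c : ℕ) : cs.eRep k H (c+1) ⟶ cs.zRep k H c :=
  subHom _ _ _ _ _ kDelta (kDelta_fRepr k H) (cs.delta_mem k c)

lemma CoxeterSystem.exact_mem (c : ℕ) (f) (hf : f ∈ cs.zSub k c) :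
    ∃ e ∈ cs.eSub k (c+1), kDelta e = f := by
  obtain ⟨e, h1, h2, h3⟩ := cs.shell.exact c f ((cs.shell_inv_iff f).2 hf.1.1) hf.2 hf.1.2
  exact ⟨e, ⟨(cs.shell_inv_iff e).1 h1, h2⟩, h3⟩

lemma CoxeterSystem.ez_les (c i : ℕ) :
    ∃ D : groupCohomology (cs.zRep k H c) i →ₗ[k] groupCohomology (cs.zRep k H (c+1)) (i+1),
      (∀ x, D x = 0 ↔ ∃ y, gMap (cs.dHom k H c) i y = x) ∧
      (∀ y, gMap (cs.zIncl k H (c+1)) (i+1) y = 0 ↔ ∃ x, D x = y) := by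
  refine gc_les _ _ ?_ ?_ ?_ i
  · intro a b h
    exact Subtype.ext (congrArg (fun e : cs.eSub k (c+1) => e.1) h)
  · rintro ⟨f, hf⟩
    obtain ⟨e, he, h⟩ := cs.exact_mem k c f hf
    exact ⟨⟨e, he⟩, Subtype.ext h⟩
  · rintro ⟨b, hb⟩
    constructor
    · intro h
      exact ⟨⟨b, hb, congrArg Subtype.val h⟩, rfl⟩
    · rintro ⟨⟨a, ha⟩, h⟩
      have : a = b := congrArg Subtype.val h
      subst this
      exact Subtype.ext ha.2

end EZ
section Transfer

open CategoryTheory groupCohomology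

variable {B W : Type} [Fintype B] [LinearOrder B] [Group W] [Infinite W] {M : CoxeterMatrix B}
  (cs : CoxeterSystem M W) (k : Type) [CommRing k] (H : Subgroup W)

/-- Weighted averaging. -/
def avg (s : Finset B → Finset W) (a : Finset B → k) :
    (W → Finset B → k) →ₗ[k] (W → Finset B → k) where
  toFun f x T := a T * ∑ u ∈ s T, f (x * u) T
  map_add' f g := by
    funext x T
    simp [Finset.sum_add_distrib, mul_add]
  map_smul' r f := by
    funext x T
    simp [← Finset.mul_sum, mul_left_comm]

lemma avg_apply (s : Finset B → Finset W) (a : Finset B → k) (f : W → Finset B → k) (x T) :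
    avg k s a f x T = a T * ∑ u ∈ s T, f (x * u) T := rfl

open Classical in
lemma CoxeterSystem.exists_transfer
    (hpar : ∀ T : Set B, T ≠ Set.univ → Finite (cs.parabolic T)) :
    ∃ N : ℕ, 0 < N ∧ ∀ c < Fintype.card B, ∃ φ : (W → Finset B → k) →ₗ[k] (W → Finset B → k),
      (∀ (h : H) f, φ (fRepr k H (Finset B → k) h f) = fRepr k H (Finset B → k) h (φ f)) ∧
      (∀ f, φ f ∈ cs.eSub k c) ∧ (∀ f ∈ cs.eSub k c, φ f = (N : k) • f) := by
  let s : Finset B → Finset W := fun T =>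
    if h : (cs.parabolic (T : Set B) : Set W).Finite then h.toFinset else ∅
  have hs : ∀ T : Finset B, T ≠ Finset.univ → ∀ u, u ∈ s T ↔ u ∈ cs.parabolic (T : Set B) := by
    intro T hT u
    have hfin : (cs.parabolic (T : Set B) : Set W).Finite := by
      have := hpar T (by simpa using hT)
      exact Set.toFinite _
    simp only [s, dif_pos hfin, Set.Finite.mem_toFinset, SetLike.mem_coe]
  have hpos : ∀ T ∈ Finset.univ.erase (Finset.univ : Finset B), 0 < (s T).card := by
    intro T hT
    refine Finset.card_pos.2 ⟨1, ?_⟩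
    rw [hs T (Finset.mem_erase.1 hT).1]
    exact one_mem _
  let N : ℕ := ∏ T ∈ Finset.univ.erase (Finset.univ : Finset B), (s T).card
  refine ⟨N, Finset.prod_pos hpos, fun c hc => ?_⟩
  have hne : ∀ T : Finset B, T.card = c → T ≠ Finset.univ := by
    rintro T hT rfl
    rw [Finset.card_univ] at hT
    omega
  let a : Finset B → k := fun T => if T.card = c then ((N / (s T).card : ℕ) : k) else 0
  refine ⟨avg k s a, fun h f => ?_, fun f => ⟨fun w T u hu => ?_, fun x T hT => ?_⟩,
    fun f hf => ?_⟩
  · funext x T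
    simp only [avg_apply, fRepr_apply, mul_assoc]
  · rw [avg_apply, avg_apply]
    by_cases hT : T.card = c
    · congr 1
      refine Finset.sum_equiv (Equiv.mulLeft u) (fun v => ?_) (fun v _ => ?_)
      · rw [hs T (hne T hT), hs T (hne T hT), Equiv.coe_mulLeft]
        exact (Subgroup.mul_mem_cancel_left _ hu).symm
      · simp [mul_assoc]
    · simp [a, hT]
  · simp [avg_apply, a, hT]
  · funext x T
    rw [avg_apply]
    by_cases hT : T.card = c
    · have : ∑ u ∈ s T, f (x * u) T = ∑ u ∈ s T, f x T :=
        Finset.sum_congr rfl fun u hu => hf.1 _ _ _ ((hs T (hne T hT) u).1 hu)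
      rw [this, Finset.sum_const, nsmul_eq_mul, ← mul_assoc]
      have hd : (s T).card ∣ N :=
        Finset.dvd_prod_of_mem (fun T => (s T).card)
          (Finset.mem_erase.2 ⟨hne T hT, Finset.mem_univ _⟩)
      simp only [a, if_pos hT, Pi.smul_apply, smul_eq_mul]
      rw [← Nat.cast_mul, Nat.div_mul_cancel hd]
    · simp [a, hT, hf.2 x T hT]

lemma CoxeterSystem.eRep_torsion
    (hpar : ∀ T : Set B, T ≠ Set.univ → Finite (cs.parabolic T)) :
    ∃ N : ℕ, 0 < N ∧ ∀ c < Fintype.card B, ∀ (i : ℕ) (x : groupCohomology (cs.eRep k H c) (i+1)),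
      (N : k) • x = 0 := by
  obtain ⟨N, hN, h⟩ := cs.exists_transfer k H hpar
  refine ⟨N, hN, fun c hc i x => ?_⟩
  obtain ⟨φ, h1, h2, h3⟩ := h c hc
  let j : cs.eRep k H c ⟶ Rep.of (fRepr k H (Finset B → k)) :=
    Rep.ofHom (LinearMap.intertwiningMap_of_isIntertwiningMap _ _ (cs.eSub k c).subtype
      (fun g v => rfl))
  let t : Rep.of (fRepr k H (Finset B → k)) ⟶ cs.eRep k H c :=
    Rep.ofHom (LinearMap.intertwiningMap_of_isIntertwiningMap _ _ (φ.codRestrict _ h2)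
      (fun g v => Subtype.ext (h1 g v)))
  have e := gMap_smul_of (j ≫ t) (N : k) (fun v => Subtype.ext (h3 v.1 v.2)) (i+1) x
  rw [← e, ← gMap_comp]
  obtain ⟨r, hr⟩ := exists_equivariant H
  rw [fRepr_acyclic k H _ r hr i (gMap j (i+1) x), map_zero]

/-- The comparison maps, with kernel and cokernel killed by `N`. -/
lemma CoxeterSystem.z_shift
    (hpar : ∀ T : Set B, T ≠ Set.univ → Finite (cs.parabolic T)) :
    ∃ N : ℕ, 0 < N ∧ ∀ c, c + 1 < Fintype.card B → ∀ i,
    ∃ D : groupCohomology (cs.zRep k H c) i →ₗ[k] groupCohomology (cs.zRep k H (c+1)) (i+1),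
      (∀ x, D x = 0 ↔ ∃ y, gMap (cs.dHom k H c) i y = x) ∧
      (∀ x, 0 < i → D x = 0 → (N : k) • x = 0) ∧ (∀ y, ∃ x, D x = (N : k) • y) := by
  obtain ⟨N, hN, h⟩ := cs.eRep_torsion k H hpar
  refine ⟨N, hN, fun c hc i => ?_⟩
  obtain ⟨D, h1, h2⟩ := cs.ez_les k H c i
  refine ⟨D, h1, fun x hi hx => ?_, fun y => ?_⟩
  · obtain ⟨y, rfl⟩ := (h1 x).1 hx
    obtain ⟨i, rfl⟩ := Nat.exists_eq_succ_of_ne_zero hi.ne'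
    rw [← map_smul, h _ hc, map_zero]
  · rw [← h2, map_smul, h _ hc]

end Transfer
section GCohom2

open CategoryTheory groupCohomology

variable {k G : Type} [CommRing k] [Group G]

lemma gc_zero_exists {A : Rep k G} {i : ℕ} (z : (Fin (i+1) → G) → A)
    (hz : inhomogeneousCochains.d A (i+1) z = 0) (h : π A (i+1) (cocyclesMk z hz) = 0) :
    ∃ b : (Fin i → G) → A, inhomogeneousCochains.d A i b = z := by
  let K := inhomogeneousCochains A
  have hE : (ShortComplex.mk (K.toCycles i (i+1)) (K.homologyπ (i+1))
      (K.toCycles_comp_homologyπ i (i+1))).Exact :=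
    ShortComplex.exact_of_g_is_cokernel _ (K.homologyIsCokernel i (i+1) (by simp))
  obtain ⟨b, hb⟩ := (ShortComplex.moduleCat_exact_iff _).1 hE _ h
  refine ⟨b, ?_⟩
  have h1 := congrArg (iCocycles A (i+1)) hb
  rw [iCocycles_mk] at h1
  have h2 := K.toCycles_i i (i+1)
  rw [inhomogeneousCochains.d_def] at h2
  exact (congr($h2 b)).symm.trans h1

lemma gMap_bijective {A B : Rep k G} (f : A ⟶ B) (hf : Function.Bijective f.hom) (i : ℕ) :
    Function.Bijective (gMap f i) := by
  have : Mono f := (Rep.mono_iff_injective f).2 hf.1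
  have : Epi f := (Rep.epi_iff_surjective f).2 hf.2
  have : IsIso f := isIso_of_mono_of_epi f
  refine Function.bijective_iff_has_inverse.2 ⟨gMap (inv f) i, fun x => ?_, fun x => ?_⟩
  · rw [gMap_comp, IsIso.hom_inv_id, gMap_id]
  · rw [gMap_comp, IsIso.inv_hom_id, gMap_id]

lemma gMap_zero {A B : Rep k G} (f : A ⟶ B) (x : groupCohomology A 0) :
    (((H0Iso B).hom (gMap f 0 x) : B.ρ.invariants) : B) =
      f.hom (((H0Iso A).hom x : A.ρ.invariants) : A) := by
  have := congr($(map_id_comp_H0Iso_hom f) x)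
  exact congrArg (fun v : B.ρ.invariants => (v : B)) this

lemma gc_trivial_zero : Nonempty (groupCohomology (Rep.trivial k G k) 0 ≃ₗ[k] k) :=
  ⟨(H0IsoOfIsTrivial (Rep.trivial k G k)).toLinearEquiv⟩

lemma gc_div_of_subsingleton (p : ℕ) (hp : p.Prime) (i : ℕ)
    (hs : Subsingleton (groupCohomology (Rep.trivial (ZMod p) G (ZMod p)) (i+1)))
    (x : groupCohomology (Rep.trivial ℤ G ℤ) (i+1)) : ∃ y, x = p • y := by
  obtain ⟨z, hz, rfl⟩ := gc_exists x
  let z' : (Fin (i+1) → G) → ZMod p := fun g => ((z g : ℤ) : ZMod p)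
  have hz' : inhomogeneousCochains.d (Rep.trivial (ZMod p) G (ZMod p)) (i+1) z' = 0 := by
    funext g
    have := congrArg (fun v : ℤ => (v : ZMod p)) (congrFun hz g)
    rw [inhomogeneousCochains.d_hom_apply] at this ⊢
    have h0 : (((0 : (Fin (i+1+1) → G) → ℤ) g : ℤ) : ZMod p) = 0 := by simp
    refine Eq.trans ?_ (this.trans h0)
    simp [z']
  obtain ⟨b', hb'⟩ := gc_zero_exists (A := Rep.trivial (ZMod p) G (ZMod p)) z' hz' (Subsingleton.elim _ _)
  have hsurj : ∀ a : ZMod p, ∃ m : ℤ, (m : ZMod p) = a := ZMod.intCast_surjective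
  choose l hl using hsurj
  let b : (Fin i → G) → ℤ := fun g => l (b' g)
  have hw : ∀ g, ∃ w : ℤ, z g = inhomogeneousCochains.d (Rep.trivial ℤ G ℤ) i b g + p * w := by
    intro g
    have h1 : ((inhomogeneousCochains.d (Rep.trivial ℤ G ℤ) i b g : ℤ) : ZMod p) = (z g : ℤ) := by
      have := congrFun hb' g
      rw [inhomogeneousCochains.d_hom_apply] at this ⊢
      simpa [z', b, hl] using this
    obtain ⟨w, hw⟩ := (ZMod.intCast_eq_intCast_iff_dvd_sub _ _ _).1 h1
    exact ⟨w, by rw [← hw]; ring⟩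
  choose w hw using hw
  have hzw : z = (inhomogeneousCochains.d (Rep.trivial ℤ G ℤ) i b) + p • w := by
    funext g
    refine (hw g).trans ?_
    simp
  have hdd : inhomogeneousCochains.d (Rep.trivial ℤ G ℤ) (i+1)
      (inhomogeneousCochains.d (Rep.trivial ℤ G ℤ) i b) = 0 :=
    congr($(inhomogeneousCochains.d_comp_d i (Rep.trivial ℤ G ℤ)) b)
  have hdw : inhomogeneousCochains.d (Rep.trivial ℤ G ℤ) (i+1) w = 0 := by
    have h1 := hz
    rw [hzw, map_add, hdd, zero_add, map_nsmul] at h1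
    funext g
    have := congrFun h1 g
    have hp0 : (p : ℤ) ≠ 0 := by exact_mod_cast hp.ne_zero
    have h2 : (p : ℤ) * (inhomogeneousCochains.d (Rep.trivial ℤ G ℤ) (i+1) w g : ℤ) = 0 := by
      rw [← nsmul_eq_mul]
      exact this
    exact (mul_eq_zero.1 h2).resolve_left hp0
  refine ⟨π _ (i+1) (cocyclesMk w hdw), ?_⟩
  have e : cocyclesMk z hz = cocyclesMk _ hdd + p • cocyclesMk w hdw := by
    apply (ModuleCat.mono_iff_injective (iCocycles _ (i+1))).1 inferInstance
    rw [map_add, map_nsmul, iCocycles_mk, iCocycles_mk, iCocycles_mk]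
    exact hzw
  rw [e, map_add, map_nsmul, gc_eq_zero_of _ hdd b rfl, zero_add]

end GCohom2
section EndCases

open CategoryTheory groupCohomology

variable {B W : Type} [Fintype B] [LinearOrder B] [Group W] [Infinite W] {M : CoxeterMatrix B}
  (cs : CoxeterSystem M W) (k : Type) [CommRing k] (H : Subgroup W)

/-- Constant function supported at the top set. -/
def topF (W : Type) (B : Type) [Fintype B] [LinearOrder B] : k →ₗ[k] (W → Finset B → k) where
  toFun a _ T := if T = Finset.univ then a else 0
  map_add' a b := by
    funext x T
    by_cases h : T = Finset.univ <;> simp [h]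
  map_smul' a b := by
    funext x T
    by_cases h : T = Finset.univ <;> simp [h]

lemma topF_apply (a : k) (x : W) (T : Finset B) :
    topF k W B a x T = if T = Finset.univ then a else 0 := rfl

lemma CoxeterSystem.topF_mem (m : ℕ) (hm : m + 1 = Fintype.card B) (a : k) :
    topF k W B a ∈ cs.eSub k (m+1) := by
  refine ⟨fun _ _ _ _ => rfl, fun x T hT => ?_⟩
  rw [topF_apply, if_neg]
  rintro rfl
  exact hT (by rw [Finset.card_univ, hm])

/-- The identification of the last cocycle module with the trivial module. -/
def CoxeterSystem.topHom (m : ℕ) (hm : m + 1 = Fintype.card B) :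
    Rep.trivial k H k ⟶ cs.zRep k H m :=
  Rep.ofHom (LinearMap.intertwiningMap_of_isIntertwiningMap _ _
    ((kDelta ∘ₗ topF k W B).codRestrict (cs.zSub k m)
      (fun a => cs.delta_mem k m _ (cs.topF_mem k m hm a)))
    (fun g v => Subtype.ext (kDelta_fRepr k H g (topF k W B v))))

lemma CoxeterSystem.topHom_bij (m : ℕ) (hm : m + 1 = Fintype.card B) :
    Function.Bijective (cs.topHom k H m hm).hom := by
  constructor
  · rw [injective_iff_map_eq_zero]
    intro a ha
    have h1 : kDelta (topF k W B a) = 0 := congrArg (fun v : cs.zSub k m => v.1) ha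
    have : Nonempty B := Fintype.card_pos_iff.1 (by omega)
    obtain ⟨b⟩ := this
    have h2 := congrFun (congrFun h1 1) (Finset.univ.erase b)
    rw [kDelta_apply] at h2
    simp only [Finset.compl_erase, Finset.compl_univ, insert_empty_eq, Finset.sum_singleton,
      topF_apply, Finset.insert_erase (Finset.mem_univ b), if_true, Pi.zero_apply] at h2
    have h3 := congrArg (fun t => kEps k b (Finset.univ.erase b) * t) h2
    simpa [← mul_assoc, kEps_sq] using h3
  · rintro ⟨f, hf⟩
    obtain ⟨e, he, h⟩ := cs.exact_mem k m f hf
    refine ⟨e 1 Finset.univ, Subtype.ext ?_⟩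
    refine Eq.trans ?_ h
    change kDelta (topF k W B (e 1 Finset.univ)) = kDelta e
    congr 1
    funext x T
    rw [topF_apply]
    by_cases hT : T = Finset.univ
    · rw [if_pos hT, hT]
      have hx : x ∈ cs.parabolic ((Finset.univ : Finset B) : Set B) := by
        rw [Finset.coe_univ, CoxeterSystem.parabolic, Set.image_univ,
          cs.subgroup_closure_range_simple]
        trivial
      have := he.1 1 Finset.univ x hx
      rw [one_mul] at this
      exact this.symm
    · rw [if_neg hT, he.2 x T]
      intro h
      apply hT
      rw [← Finset.card_eq_iff_eq_univ, h, hm]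

lemma CoxeterSystem.eSub_zero (f : W → Finset B → k) (hf : f ∈ cs.eSub k 0) : kDelta f = 0 := by
  funext x T
  rw [kDelta_apply]
  refine Finset.sum_eq_zero fun s hs => ?_
  rw [hf.2, mul_zero]
  rw [Finset.card_insert_of_notMem (by simpa using hs)]
  omega

lemma CoxeterSystem.zIncl_bij : Function.Bijective (cs.zIncl k H 0).hom := by
  constructor
  · intro a b h
    exact Subtype.ext (congrArg (fun e : cs.eSub k 0 => e.1) h)
  · rintro ⟨f, hf⟩
    exact ⟨⟨f, hf, cs.eSub_zero k f hf⟩, rfl⟩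

lemma CoxeterSystem.signHom_simple (i : B) : cs.signHom (cs.simple i) = -1 := by
  exact cs.lift_apply_simple _ i

/-- Invariant elements of `zSub`. -/
def CoxeterSystem.zInv (c : ℕ) : Submodule k (W → Finset B → k) where
  carrier := {f | f ∈ cs.zSub k c ∧ ∀ h : H, fRepr k H (Finset B → k) h f = f}
  zero_mem' := ⟨zero_mem _, fun h => map_zero _⟩
  add_mem' := fun {a b} ha hb => ⟨add_mem ha.1 hb.1, fun h => by rw [map_add, ha.2, hb.2]⟩
  smul_mem' := fun r {a} ha => ⟨Submodule.smul_mem _ r ha.1, fun h => by rw [map_smul, ha.2]⟩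

lemma CoxeterSystem.z_shift_zero
    (hpar : ∀ T : Set B, T ≠ Set.univ → Finite (cs.parabolic T)) (c : ℕ)
    (hc : c + 1 < Fintype.card B) :
    ∃ N : ℕ, 0 < N ∧ ∃ D : cs.zInv k H c →ₗ[k] groupCohomology (cs.zRep k H (c+1)) 1,
      (∀ x, D x = 0 ↔ ∃ e ∈ cs.eSub k (c+1), (∀ h : H, fRepr k H (Finset B → k) h e = e) ∧
        kDelta e = x.1) ∧
      (∀ y, ∃ x, D x = (N : k) • y) := by
  obtain ⟨N, hN, h⟩ := cs.z_shift k H hpar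
  obtain ⟨D, h1, -, h2⟩ := h c hc 0
  let A := cs.zRep k H c
  let e0 := (H0Iso A).toLinearEquiv
  let φ : cs.zInv k H c →ₗ[k] A.ρ.invariants :=
    { toFun := fun f => ⟨⟨f.1, f.2.1⟩, fun g => Subtype.ext (f.2.2 g)⟩
      map_add' := fun _ _ => rfl
      map_smul' := fun _ _ => rfl }
  have hφ : Function.Surjective φ := by
    rintro ⟨⟨f, hf⟩, hinv⟩
    exact ⟨⟨f, hf, fun g => congrArg (fun v : cs.zSub k c => v.1) (hinv g)⟩, rfl⟩
  refine ⟨N, hN, D ∘ₗ e0.symm.toLinearMap ∘ₗ φ, fun x => ?_, fun y => ?_⟩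
  · change D (e0.symm (φ x)) = 0 ↔ _
    rw [h1]
    constructor
    · rintro ⟨y, hy⟩
      have h3 := gMap_zero (cs.dHom k H c) y
      rw [hy] at h3
      have h4 : (H0Iso A).hom (e0.symm (φ x)) = φ x := e0.apply_symm_apply (φ x)
      rw [h4] at h3
      let v : (cs.eRep k H (c+1)).ρ.invariants := (H0Iso (cs.eRep k H (c+1))).hom y
      refine ⟨v.1.1, v.1.2, fun g => ?_, ?_⟩
      · exact congrArg (fun v : cs.eSub k (c+1) => v.1) (v.2 g)
      · exact (congrArg (fun v : cs.zSub k c => v.1) h3).symm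
    · rintro ⟨e, he, hinv, hd⟩
      let v : (cs.eRep k H (c+1)).ρ.invariants := ⟨⟨e, he⟩, fun g => Subtype.ext (hinv g)⟩
      refine ⟨(H0Iso (cs.eRep k H (c+1))).inv v, ?_⟩
      apply e0.injective
      rw [LinearEquiv.apply_symm_apply]
      have h3 := gMap_zero (cs.dHom k H c) ((H0Iso (cs.eRep k H (c+1))).inv v)
      have h4 : (H0Iso (cs.eRep k H (c+1))).hom ((H0Iso (cs.eRep k H (c+1))).inv v) = v :=
        (H0Iso (cs.eRep k H (c+1))).toLinearEquiv.apply_symm_apply v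
      rw [h4] at h3
      apply Subtype.ext
      refine Eq.trans h3 ?_
      exact Subtype.ext hd
  · obtain ⟨x, hx⟩ := h2 y
    obtain ⟨w, hw⟩ := hφ (e0 x)
    refine ⟨w, ?_⟩
    change D (e0.symm (φ w)) = _
    rw [hw, LinearEquiv.symm_apply_apply, hx]

end EndCases
section Final

open CategoryTheory groupCohomology

variable {B W : Type} [Fintype B] [LinearOrder B] [Group W] [Infinite W] {M : CoxeterMatrix B}
  (cs : CoxeterSystem M W) (k : Type) [CommRing k]

lemma CoxeterSystem.inv_sign (f : W → Finset B → k)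
    (hf : ∀ h : cs.signHom.ker, fRepr k cs.signHom.ker (Finset B → k) h f = f) (x y : W)
    (hxy : cs.signHom x = cs.signHom y) (T : Finset B) : f x T = f y T := by
  have hm : x * y⁻¹ ∈ cs.signHom.ker := by
    rw [MonoidHom.mem_ker, map_mul, map_inv, hxy, mul_inv_cancel]
  have := congrFun (congrFun (hf ⟨x * y⁻¹, hm⟩) x) T
  rw [fRepr_apply] at this
  rw [← this]
  simp

lemma CoxeterSystem.inv_const (c : ℕ) (f : W → Finset B → k) (hfe : f ∈ cs.eSub k c)
    (hf : ∀ h : cs.signHom.ker, fRepr k cs.signHom.ker (Finset B → k) h f = f) (x : W)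
    (T : Finset B) (hT : T.Nonempty) : f x T = f 1 T := by
  obtain ⟨i, hi⟩ := hT
  rcases Int.units_eq_one_or (cs.signHom x) with h | h
  · exact cs.inv_sign k f hf x 1 (by rw [h, map_one]) T
  · rw [← hfe.1 x T (cs.simple i) (cs.simple_mem_parabolic (by exact_mod_cast hi))]
    exact cs.inv_sign k f hf _ 1 (by rw [map_mul, h, cs.signHom_simple, map_one]; simp) T

lemma CoxeterSystem.koszul (c : ℕ) (f : W → Finset B → k) (hfz : f ∈ cs.zSub k c)
    (hf : ∀ x T, f x T = f 1 T) (H : Subgroup W) :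
    ∃ e ∈ cs.eSub k (c+1), (∀ h : H, fRepr k H (Finset B → k) h e = e) ∧ kDelta e = f := by
  have : Nonempty B := Fintype.card_pos_iff.1 (by have := cs.two_le_card; omega)
  obtain ⟨b⟩ := this
  obtain ⟨e, h1, h2, h3⟩ := (ShellSys.point b).exact c (fun _ : Unit => f 1) (fun _ _ => rfl)
    (by
      funext x T
      have h : kDelta f = 0 := hfz.2
      have := congrFun (congrFun h 1) T
      rw [kDelta_apply] at this ⊢
      exact this)
    (fun _ T hT => hfz.1.2 1 T hT)
  refine ⟨fun _ T => e () T, ⟨fun _ _ _ _ => rfl, fun _ T hT => h2 () T hT⟩, fun _ => rfl, ?_⟩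
  funext x T
  rw [hf]
  have := congrFun (congrFun h3 ()) T
  rw [kDelta_apply] at this ⊢
  exact this

lemma CoxeterSystem.coker_zero (c : ℕ) (f : W → Finset B → k)
    (hf : f ∈ cs.zInv k cs.signHom.ker (c+1)) :
    ∃ e ∈ cs.eSub k (c+1+1), (∀ h : cs.signHom.ker,
      fRepr k cs.signHom.ker (Finset B → k) h e = e) ∧ kDelta e = f := by
  refine cs.koszul k (c+1) f hf.1 (fun x T => ?_) _
  rcases T.eq_empty_or_nonempty with rfl | hT
  · rw [hf.1.1.2 x _ (by simp), hf.1.1.2 1 _ (by simp)]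
  · exact cs.inv_const k (c+1) f hf.1.1 hf.2 x T hT

/-- The degree-zero functional. -/
def CoxeterSystem.psi (b : B) : cs.zInv k cs.signHom.ker 0 →ₗ[k] k where
  toFun f := f.1 1 ∅ - f.1 (cs.simple b) ∅
  map_add' f g := by simp; ring
  map_smul' r f := by simp; ring

lemma CoxeterSystem.psi_apply (b : B) (f : cs.zInv k cs.signHom.ker 0) :
    cs.psi k b f = f.1 1 ∅ - f.1 (cs.simple b) ∅ := rfl

lemma CoxeterSystem.psi_eq_zero (b : B) (f : cs.zInv k cs.signHom.ker 0) :
    cs.psi k b f = 0 ↔ ∃ e ∈ cs.eSub k (0+1), (∀ h : cs.signHom.ker,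
      fRepr k cs.signHom.ker (Finset B → k) h e = e) ∧ kDelta e = f.1 := by
  obtain ⟨f, hf⟩ := f
  rw [psi_apply]
  constructor
  · intro h
    refine cs.koszul k 0 f hf.1 (fun x T => ?_) _
    rcases T.eq_empty_or_nonempty with rfl | hT
    · rcases Int.units_eq_one_or (cs.signHom x) with hx | hx
      · exact cs.inv_sign k f hf.2 x 1 (by rw [hx, map_one]) ∅
      · rw [cs.inv_sign k f hf.2 x (cs.simple b) (by rw [hx, cs.signHom_simple]) ∅]
        exact (sub_eq_zero.1 h).symm
    · rw [hf.1.1.2 x T (by simpa using hT.ne_empty), hf.1.1.2 1 T (by simpa using hT.ne_empty)]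
  · rintro ⟨e, he, hinv, hd⟩
    change f 1 ∅ - f (cs.simple b) ∅ = 0
    rw [← show kDelta e = f from hd, kDelta_apply, kDelta_apply, sub_eq_zero]
    refine Finset.sum_congr rfl fun s _ => ?_
    rw [cs.inv_const k _ e he hinv (cs.simple b) _ (Finset.insert_nonempty _ _)]

lemma CoxeterSystem.psi_surj (b : B) : Function.Surjective (cs.psi k b) := by
  intro a
  let f : W → Finset B → k := fun x T => if T = ∅ ∧ cs.signHom x = 1 then a else 0
  have he : f ∈ cs.eSub k 0 := by
    refine ⟨fun w T u hu => ?_, fun x T hT => ?_⟩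
    · by_cases hT : T = ∅
      · subst hT
        have : u = 1 := by
          simpa [CoxeterSystem.parabolic] using hu
        rw [this, mul_one]
      · simp [f, hT]
    · have : T ≠ ∅ := by
        rintro rfl
        exact hT rfl
      simp [f, this]
  have hi : ∀ h : cs.signHom.ker, fRepr k cs.signHom.ker (Finset B → k) h f = f := by
    intro h
    funext x T
    have hh : cs.signHom h = 1 := h.2
    rw [fRepr_apply]
    simp [f, hh]
  refine ⟨⟨f, ⟨he, cs.eSub_zero k f he⟩, hi⟩, ?_⟩
  rw [psi_apply]
  simp [f, cs.signHom_simple]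

/-- Torsion-divisibility property. -/
def divProp (p : ℕ) (X : Type) [AddCommGroup X] : Prop :=
  ∃ c : ℕ, 0 < c ∧ ∀ (x : X) (r : ℕ), ∃ y : X, c • x = p ^ r • y

lemma divProp_of_surj (p : ℕ) (X : Type) [AddCommGroup X] (h : ∀ x : X, ∃ y, x = p • y) :
    divProp p X := by
  refine ⟨1, one_pos, fun x r => ?_⟩
  rw [one_smul]
  induction r with
  | zero => exact ⟨x, by simp⟩
  | succ r ih =>
    obtain ⟨y, rfl⟩ := ih
    obtain ⟨z, rfl⟩ := h y
    exact ⟨z, by rw [smul_smul, pow_succ]⟩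

lemma divProp_descend (p : ℕ) {X Y : Type} [AddCommGroup X] [AddCommGroup Y] (D : X →+ Y) (N : ℕ)
    (hN : 0 < N) (hk : ∀ x, D x = 0 → N • x = 0) (hc : ∀ y, ∃ x, D x = N • y)
    (h : divProp p Y) : divProp p X := by
  obtain ⟨c, hc0, h⟩ := h
  refine ⟨N * (N * c), by positivity, fun x r => ?_⟩
  obtain ⟨y, hy⟩ := h (D x) r
  obtain ⟨z, hz⟩ := hc y
  have h1 : D ((N * c) • x - p ^ r • z) = 0 := by
    rw [map_sub, map_nsmul, map_nsmul, hz, mul_smul, hy, smul_comm, sub_self]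
  have h2 := hk _ h1
  refine ⟨N • z, ?_⟩
  rw [smul_sub, sub_eq_zero] at h2
  rw [mul_smul, h2, smul_comm]

lemma CoxeterSystem.z_divProp (H : Subgroup W)
    (hpar : ∀ T : Set B, T ≠ Set.univ → Finite (cs.parabolic T)) (p c i d : ℕ)
    (hd : c + d < Fintype.card B) (h : divProp p (groupCohomology (cs.zRep k H (c+d)) (i+1+d))) :
    divProp p (groupCohomology (cs.zRep k H c) (i+1)) := by
  obtain ⟨N, hN, hz⟩ := cs.z_shift k H hpar
  induction d with
  | zero => exact h
  | succ d ih =>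
    refine ih (by omega) ?_
    obtain ⟨D, -, h1, h2⟩ := hz (c+d) (by omega) (i+1+d)
    refine divProp_descend p D.toAddMonoidHom N hN (fun x hx => ?_) (fun y => ?_) h
    · rw [← Nat.cast_smul_eq_nsmul k]
      exact h1 x (by omega) hx
    · rw [← Nat.cast_smul_eq_nsmul k]
      exact h2 y

lemma CoxeterSystem.not_divProp (hpar : ∀ T : Set B, T ≠ Set.univ → Finite (cs.parabolic T))
    (p : ℕ) (hp : 1 < p) : ¬ divProp p (groupCohomology (cs.zRep ℤ cs.signHom.ker 1) 1) := by
  rintro ⟨c, hc, h⟩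
  have hcard := cs.two_le_card
  have : Nonempty B := Fintype.card_pos_iff.1 (by omega)
  obtain ⟨b⟩ := this
  obtain ⟨N, hN, D, h1, h2⟩ := cs.z_shift_zero ℤ cs.signHom.ker hpar 0 (by omega)
  obtain ⟨x, hx⟩ := cs.psi_surj ℤ b 1
  obtain ⟨y, hy⟩ := h (D x) (N * c)
  obtain ⟨z, hz⟩ := h2 y
  have hz' : D z = N • y := hz.trans (Nat.cast_smul_eq_nsmul ℤ N y)
  have h3 : D ((N * c) • x - p ^ (N * c) • z) = 0 := by
    rw [map_sub, map_nsmul, map_nsmul, hz', mul_smul, hy, smul_comm, sub_self]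
  have h4 := (cs.psi_eq_zero ℤ b _).2 ((h1 _).1 h3)
  rw [map_sub, map_nsmul, map_nsmul, hx, sub_eq_zero] at h4
  simp only [nsmul_eq_mul, mul_one] at h4
  have h5 : ((p ^ (N * c) : ℕ) : ℤ) ∣ ((N * c : ℕ) : ℤ) := ⟨_, h4⟩
  rw [Int.natCast_dvd_natCast] at h5
  have h6 := Nat.le_of_dvd (by positivity) h5
  exact absurd h6 (not_le.2 (Nat.lt_pow_self hp))

lemma CoxeterSystem.fp_part (hpar : ∀ T : Set B, T ≠ Set.univ → Finite (cs.parabolic T))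
    (p : ℕ) (hp : p.Prime) : ¬ Subsingleton (groupCohomology
          (Rep.trivial (ZMod p) ↥cs.signHom.ker (ZMod p)) (Fintype.card B - 1)) := by
  intro hs
  have hcard := cs.two_le_card
  obtain ⟨d, hd⟩ : ∃ d, Fintype.card B = d + 2 := ⟨Fintype.card B - 2, by omega⟩
  rw [show Fintype.card B - 1 = d + 1 by omega] at hs
  refine cs.not_divProp hpar p hp.one_lt ?_
  refine cs.z_divProp ℤ _ hpar p 1 0 d (by omega) ?_
  rw [show 0 + 1 + d = d + 1 by omega]
  apply divProp_of_surj
  intro x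
  obtain ⟨x, rfl⟩ := (gMap_bijective _ (cs.topHom_bij ℤ cs.signHom.ker (d+1) hd.symm) (d+1)).2 x
  obtain ⟨y, rfl⟩ := gc_div_of_subsingleton p hp d hs x
  exact ⟨_, map_nsmul _ _ _⟩

lemma CoxeterSystem.q_chain (H : Subgroup W)
    (hpar : ∀ T : Set B, T ≠ Set.univ → Finite (cs.parabolic T)) (c i d : ℕ)
    (hd : c + d < Fintype.card B) :
    Nonempty (groupCohomology (cs.zRep ℚ H (c+d)) (i+1+d) ≃ₗ[ℚ]
      groupCohomology (cs.zRep ℚ H c) (i+1)) := by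
  obtain ⟨N, hN, hz⟩ := cs.z_shift ℚ H hpar
  have hN0 : (N : ℚ) ≠ 0 := by exact_mod_cast hN.ne'
  induction d with
  | zero => exact ⟨LinearEquiv.refl _ _⟩
  | succ d ih =>
    obtain ⟨e⟩ := ih (by omega)
    obtain ⟨D, -, h1, h2⟩ := hz (c+d) (by omega) (i+1+d)
    have hb : Function.Bijective D := by
      constructor
      · rw [injective_iff_map_eq_zero]
        intro x hx
        exact (smul_eq_zero.1 (h1 x (by omega) hx)).resolve_left hN0
      · intro y
        obtain ⟨x, hx⟩ := h2 y
        exact ⟨(N : ℚ)⁻¹ • x, by rw [map_smul, hx, inv_smul_smul₀ hN0]⟩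
    exact ⟨(LinearEquiv.ofBijective D hb).symm.trans e⟩

lemma CoxeterSystem.q_triv (H : Subgroup W)
    (hpar : ∀ T : Set B, T ≠ Set.univ → Finite (cs.parabolic T)) (c i d : ℕ)
    (hd : c + d + 1 = Fintype.card B) :
    Nonempty (groupCohomology (Rep.trivial ℚ H ℚ) (i+1+d) ≃ₗ[ℚ]
      groupCohomology (cs.zRep ℚ H c) (i+1)) := by
  obtain ⟨e⟩ := cs.q_chain H hpar c i d (by omega)
  exact ⟨(LinearEquiv.ofBijective _
    (gMap_bijective _ (cs.topHom_bij ℚ H (c+d) hd) (i+1+d))).trans e⟩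

lemma CoxeterSystem.q_top (hpar : ∀ T : Set B, T ≠ Set.univ → Finite (cs.parabolic T)) :
    Nonempty (groupCohomology (Rep.trivial ℚ cs.signHom.ker ℚ) (Fintype.card B - 1) ≃ₗ[ℚ] ℚ) := by
  have hcard := cs.two_le_card
  obtain ⟨d, hd⟩ : ∃ d, Fintype.card B = d + 2 := ⟨Fintype.card B - 2, by omega⟩
  have : Nonempty B := Fintype.card_pos_iff.1 (by omega)
  obtain ⟨b⟩ := this
  obtain ⟨e⟩ := cs.q_triv cs.signHom.ker hpar 1 0 d (by omega)
  rw [show Fintype.card B - 1 = 0 + 1 + d by omega]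
  obtain ⟨N, hN, D, h1, h2⟩ := cs.z_shift_zero ℚ cs.signHom.ker hpar 0 (by omega)
  have hN0 : (N : ℚ) ≠ 0 := by exact_mod_cast hN.ne'
  have hs : Function.Surjective D := by
    intro y
    obtain ⟨x, hx⟩ := h2 y
    exact ⟨(N : ℚ)⁻¹ • x, by rw [map_smul, hx, inv_smul_smul₀ hN0]⟩
  have hk : LinearMap.ker D = LinearMap.ker (cs.psi ℚ b) := by
    ext x
    rw [LinearMap.mem_ker, LinearMap.mem_ker, cs.psi_eq_zero ℚ b, h1]
  exact ⟨e.trans ((D.quotKerEquivOfSurjective hs).symm.trans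
    ((Submodule.quotEquivOfEq _ _ hk).trans
      ((cs.psi ℚ b).quotKerEquivOfSurjective (cs.psi_surj ℚ b))))⟩

lemma CoxeterSystem.q_vanish (hpar : ∀ T : Set B, T ≠ Set.univ → Finite (cs.parabolic T)) (j : ℕ)
    (hj : ¬ (j = 0 ∨ j = Fintype.card B - 1)) :
    Subsingleton (groupCohomology (Rep.trivial ℚ cs.signHom.ker ℚ) j) := by
  have hcard := cs.two_le_card
  push Not at hj
  rcases Nat.lt_or_ge j (Fintype.card B - 1) with h | h
  · obtain ⟨c, hc⟩ : ∃ c, Fintype.card B = c + 1 + j + 1 := ⟨Fintype.card B - 2 - j, by omega⟩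
    obtain ⟨d, rfl⟩ : ∃ d, j = 0 + 1 + d := ⟨j - 1, by omega⟩
    obtain ⟨e⟩ := cs.q_triv cs.signHom.ker hpar (c+1+1) 0 d (by omega)
    refine (e.toEquiv.subsingleton_congr).2 ?_
    obtain ⟨N, hN, D, h1, h2⟩ := cs.z_shift_zero ℚ cs.signHom.ker hpar (c+1) (by omega)
    have hN0 : (N : ℚ) ≠ 0 := by exact_mod_cast hN.ne'
    refine subsingleton_of_forall_eq 0 fun y => ?_
    obtain ⟨x, hx⟩ := h2 y
    have h0 : D x = 0 := (h1 x).2 (cs.coker_zero ℚ c x.1 x.2)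
    exact (smul_eq_zero.1 (hx.symm.trans h0)).resolve_left hN0
  · obtain ⟨i, rfl⟩ : ∃ i, j = i + 1 + (Fintype.card B - 1) := ⟨j - Fintype.card B, by omega⟩
    obtain ⟨e⟩ := cs.q_triv cs.signHom.ker hpar 0 i (Fintype.card B - 1) (by omega)
    refine (e.toEquiv.subsingleton_congr).2 ?_
    obtain ⟨N, hN, ht⟩ := cs.eRep_torsion ℚ cs.signHom.ker hpar
    have hN0 : (N : ℚ) ≠ 0 := by exact_mod_cast hN.ne'
    refine subsingleton_of_forall_eq 0 fun y => ?_
    apply (gMap_bijective _ (cs.zIncl_bij ℚ cs.signHom.ker) (i+1)).1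
    rw [map_zero]
    exact (smul_eq_zero.1 (ht 0 (by omega) i _)).resolve_left hN0

end Final
/-- Let `W` be an infinite Coxeter group of rank `n = |S|` all of whose
proper standard parabolic subgroups are finite, and `A_W` its alternating subgroup.  Then
`H^*(A_W, ℚ) ≅ H^*(S^{n-1}, ℚ)`, i.e. `H^k(A_W, ℚ) ≅ ℚ` for `k = 0` and `k = n - 1` and
`H^k(A_W, ℚ) = 0` otherwise; in particular `H^{n-1}(A_W, 𝔽_p) ≠ 0` for every prime `p`. -/
theorem rational_cohomology_of_alternating_subgroup_sphere {B W : Type} [Fintype B]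
    [Group W] [Infinite W] {M : CoxeterMatrix B} (cs : CoxeterSystem M W)
    (hpar : ∀ T : Set B, T ≠ Set.univ → Finite (cs.parabolic T)) :
    (∀ k : ℕ, (k = 0 ∨ k = Fintype.card B - 1) →
        Nonempty ((groupCohomology (Rep.trivial ℚ ↥cs.signHom.ker ℚ) k) ≃ₗ[ℚ] ℚ)) ∧
    (∀ k : ℕ, ¬ (k = 0 ∨ k = Fintype.card B - 1) →
        Subsingleton (groupCohomology (Rep.trivial ℚ ↥cs.signHom.ker ℚ) k)) ∧
    (∀ p : ℕ, p.Prime →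
        ¬ Subsingleton (groupCohomology
          (Rep.trivial (ZMod p) ↥cs.signHom.ker (ZMod p)) (Fintype.card B - 1))) := by
  letI : LinearOrder B := LinearOrder.lift' (Fintype.equivFin B) (Fintype.equivFin B).injective
  refine ⟨fun k hk => ?_, fun k hk => cs.q_vanish hpar k hk, fun p hp => cs.fp_part hpar p hp⟩
  rcases hk with rfl | rfl
  · exact gc_trivial_zero
  · exact cs.q_top hpar
end
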